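/- Let A be a commutative unital ℝ-algebra that is finitely generated by elements x₁,…,xₙ, let D ⊆ A\{0} be a multiplicatively closed set with 1 ∈ D, let S = {g₁,…,g_m} ⊆ A be finite, and let F = D⁻¹A with canonical map ι : A → F. Assume there exist p ∈ D and an integer k ≥ 1 such that p − 1 ∈ Pos(K_S^A) and k·p − (x₁²+⋯+xₙ²) ∈ Pos(K_S^A). Then: (1) the closure of T_S^F in the finest locally convex topology on F equals Pos^F(K_S^A \ ⋃_{d∈D} Z_A(d)); (2) the closure of T_S^F in the topology of finitely open sets on F equals Pos^F(K_S^A); (3) for every linear functional L : F → ℝ with L(T_S^F) ⊆ [0,∞) there exists a positive Borel measure μ on the closed set 𝒳 = closure(K_S^A \ ⋃_{d∈D} Z_A(d)) ⊆ V(A) such that μ(𝒳 ∩ Z_A(d)) = 0 for every d ∈ D and L(ι(f)/ι(d)) = ∫_𝒳 χ(f)/χ(d) dμ(χ) for all f ∈ A and d ∈ D (the integrand being defined μ-almost everywhere). -/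

import Mathlib

/-!
Write `K = K_S` and `F = D⁻¹A`.

*Real points.* If a preordering of `A` does not contain `-1`, a Zorn argument gives a homomorphism
from `A` to a real closed field that makes the preordering nonnegative (`exists_ringHom_polyIVT`;
real closedness is used through the intermediate value property `PolyIVT`). A root-matching argument
in the style of Cohen and Hörmander transfers finitely many signs from such a point to a character
`A → ℝ`, which may moreover avoid the zeros of countably many elements that do not vanish at the
given point (`exists_algHom_real_sign_eq`). Consequently an element `f` that is positive on `K` has
a certificate `f s = 1 + t` with `s`, `t` in the preordering (`exists_mul_eq_one_add_of_pos`).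

*Positivity of functionals.* Let `L` be nonnegative on the preordering of an algebra `E` over `A` in
which `p` is invertible. Applied to `c² P² - a²` with `P` a power of `p`, the certificates bound
the moments of the fraction `a / P`, and therefore `|L (a / P)| ≤ sup_K |a / P| · L 1`
(`abs_map_le_of_sq_le_on_KSA`). Every element of `A` is dominated on `K` by a power of `p`, because
the coordinates are; so `L (h² f) ≥ 0` whenever `f ≥ 0` on `K` (`map_sq_mul_map_nonneg`).

*Parts (1) and (3).* A functional on `F` that is nonnegative on fractions nonnegative on `K`
extends, by M. Riesz, to compactly supported functions, hence is given by a measure on `K` for which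
each denominator is nonzero almost everywhere (`exists_measure_map_mk_eq_integral`). Although `D`
may be uncountable, almost every character has no vanishing denominator at all: by the Besicovitch
differentiation theorem Lebesgue measure has finite density with respect to the representing measure
`μ` at `μ`-almost every point, while the `μ`-integrability of all powers of `1 / d` forces infinite
density at every zero of `d` (`ae_forall_charHom_ne_zero`). This is (3), and (1) follows by duality.

*Part (2).* A fraction lies in `Pos^F(K)` iff its sign is right off the zeros of one further
denominator. A countable intersection of such conditions reduces to a single one
(`exists_nonneg_of_prod_ne_zero`, again by transfer from real closed fields), which makes
`Pos^F(K)` closed in the finite topology (`isClosed_PosF_KSA`). Conversely, an element of `Pos^F(K)`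
lies in a finitely generated subalgebra of `F` that contains `1 / p`. There the dimension is
countable, so a finitely open set contains around each of its points a translate of a convex
absorbing set: a box whose side lengths are chosen one after another. By Hahn-Banach the
finite-topology closure of a convex cone then contains its bidual (`dualClosure_subset_closure`),
and positivity of functionals applies.
-/

open MvPolynomial MeasureTheory

noncomputable section

/-- The Euclidean (weak) topology on a real vector space; for finite-dimensional
spaces this is the usual Euclidean topology. -/
def weakTop (V : Type*) [AddCommGroup V] [Module ℝ V] : TopologicalSpace V :=
  ⨅ L : V →ₗ[ℝ] ℝ, TopologicalSpace.induced L inferInstance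

/-- The topology of finitely open sets: `O` is open iff its intersection with every
finite-dimensional subspace `U` is open in the Euclidean topology of `U`. -/
def finTop (E : Type*) [AddCommGroup E] [Module ℝ E] : TopologicalSpace E where
  IsOpen O := ∀ U : Submodule ℝ E, FiniteDimensional ℝ U →
    @IsOpen _ (weakTop U) ((Subtype.val : U → E) ⁻¹' O)
  isOpen_univ := by
    intro U _
    letI := weakTop U
    rw [Set.preimage_univ]
    exact isOpen_univ
  isOpen_inter := by
    intro s t hs ht U hU
    letI := weakTop U
    rw [Set.preimage_inter]
    exact (hs U hU).inter (ht U hU)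
  isOpen_sUnion := by
    intro s hs U hU
    letI := weakTop U
    rw [Set.preimage_sUnion]
    exact isOpen_biUnion fun t ht => hs t ht U hU

/-- The closure of a convex cone in the finest locally convex topology, via the dual
characterization: `x` lies in the closure iff `L x ≥ 0` for every linear functional `L`
nonnegative on the cone. -/
def dualClosure {E : Type*} [AddCommGroup E] [Module ℝ E] (C : Set E) : Set E :=
  {x | ∀ L : E →ₗ[ℝ] ℝ, (∀ c ∈ C, 0 ≤ L c) → 0 ≤ L x}

/-- The preordering generated by `g 1, …, g m` in a commutative ring: all finite sums
of elements `σ • g₁^ν₁ ⋯ g_m^ν_m` with `σ` a sum of squares and `ν ∈ {0,1}^m`. -/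
def genPreordering {E : Type*} [CommRing E] {m : ℕ} (g : Fin m → E) : Set E :=
  {x | ∃ σ : (Fin m → Bool) → E, (∀ ν, IsSumSq (σ ν)) ∧
    x = ∑ ν : Fin m → Bool, σ ν * ∏ j, (if ν j then g j else 1)}


/-- The set of characters (unital `ℝ`-algebra homomorphisms `A → ℝ`), as a subset of the
product `A → ℝ`; the subtype carries the subspace topology, i.e. the coarsest topology
making all evaluations `χ ↦ χ a` continuous. -/
def CharSet (A : Type*) [CommRing A] [Algebra ℝ A] : Set (A → ℝ) :=
  {χ | (∀ a b, χ (a + b) = χ a + χ b) ∧ (∀ a b, χ (a * b) = χ a * χ b) ∧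
    ∀ r : ℝ, χ (algebraMap ℝ A r) = r}

/-- `K_S^A ⊆ V(A)` for `S = {g 1, …, g m}`. -/
def KSA {A : Type*} [CommRing A] [Algebra ℝ A] {m : ℕ} (g : Fin m → A) :
    Set (CharSet A) :=
  {χ | ∀ i, 0 ≤ (χ : A → ℝ) (g i)}

/-- `Z_A(d) ⊆ V(A)`: the characters vanishing at `d`. -/
def ZA {A : Type*} [CommRing A] [Algebra ℝ A] (d : A) : Set (CharSet A) :=
  {χ | (χ : A → ℝ) d = 0}

/-- `Pos(𝒴) ⊆ A`: elements nonnegative at every character in `𝒴`. -/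
def PosA {A : Type*} [CommRing A] [Algebra ℝ A] (Y : Set (CharSet A)) : Set A :=
  {a | ∀ χ ∈ Y, 0 ≤ (χ : A → ℝ) a}

/-- `Pos^F(𝒴)`: elements of `F = D⁻¹A` with a representation `ι a/ι d`, `a·d ∈ Pos(𝒴)`. -/
def PosF {A : Type*} [CommRing A] [Algebra ℝ A] (D : Submonoid A)
    (Y : Set (CharSet A)) : Set (Localization D) :=
  {R | ∃ (a : A) (d : D), R = Localization.mk a d ∧
    ∀ χ ∈ Y, 0 ≤ (χ : A → ℝ) a * (χ : A → ℝ) (d : A)}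

/-! ### Real closed fields -/

section RealClosed

open scoped Polynomial

/-- The intermediate value property for polynomials, which characterises real closed fields among
ordered fields and is the only form in which real closedness is used here. -/
class PolyIVT (R : Type*) [Field R] [LinearOrder R] : Prop where
  exists_root : ∀ (f : R[X]) {a b : R}, a < b → f.eval a * f.eval b < 0 →
    ∃ c ∈ Set.Ioo a b, f.eval c = 0

instance : PolyIVT ℝ where
  exists_root f a b hab hf := by
    rcases mul_neg_iff.1 hf with ⟨ha, hb⟩ | ⟨ha, hb⟩
    · exact intermediate_value_Ioo' hab.le f.continuousOn ⟨hb, ha⟩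
    · exact intermediate_value_Ioo hab.le f.continuousOn ⟨ha, hb⟩

section Irreducible

variable {R : Type*} [Field R] [LinearOrder R] [IsStrictOrderedRing R]

theorem exists_root_of_natDegree_eq_one {f : R[X]} (hf : f.natDegree = 1) {a b : R} (hab : a < b)
    (hs : f.eval a * f.eval b < 0) : ∃ c ∈ Set.Ioo a b, f.eval c = 0 := by
  obtain ⟨m, hm, q, rfl⟩ := Polynomial.natDegree_eq_one.1 hf
  obtain ⟨c, rfl⟩ : ∃ c, q = -(m * c) := ⟨-q / m, by field_simp⟩
  have eval_eq (x : R) :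
      (Polynomial.C m * Polynomial.X + Polynomial.C (-(m * c))).eval x = m * (x - c) := by
    simp only [Polynomial.eval_add, Polynomial.eval_mul, Polynomial.eval_C, Polynomial.eval_X]
    ring
  simp only [eval_eq] at hs ⊢
  have hac : (a - c) * (b - c) < 0 := by
    have : m ^ 2 * ((a - c) * (b - c)) < 0 := by linear_combination hs
    exact (pos_iff_neg_of_mul_neg this).1 (by positivity)
  refine ⟨c, ?_, by simp⟩
  rcases mul_neg_iff.1 hac with ⟨h, h'⟩ | ⟨h, h'⟩
  · linarith
  · exact ⟨by linarith, by linarith⟩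

theorem mul_eval_neg_or_mul_eval_neg {g h : R[X]} {a b : R}
    (hs : (g * h).eval a * (g * h).eval b < 0) :
    g.eval a * g.eval b < 0 ∨ h.eval a * h.eval b < 0 := by
  by_contra! hcon
  have := mul_nonneg hcon.1 hcon.2
  simp only [Polynomial.eval_mul] at hs
  linarith

theorem exists_root_of_mul {g h : R[X]} (hg0 : g ≠ 0) (hh0 : h ≠ 0) (hg : ¬ IsUnit g)
    (hh : ¬ IsUnit h)
    (H : ∀ f : R[X], f.natDegree < (g * h).natDegree → ∀ {a b : R}, a < b →
      f.eval a * f.eval b < 0 → ∃ c ∈ Set.Ioo a b, f.eval c = 0)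
    {a b : R} (hab : a < b) (hs : (g * h).eval a * (g * h).eval b < 0) :
    ∃ c ∈ Set.Ioo a b, (g * h).eval c = 0 := by
  have hgpos := Polynomial.natDegree_pos_iff_degree_pos.2
    (Polynomial.degree_pos_of_ne_zero_of_nonunit hg0 hg)
  have hhpos := Polynomial.natDegree_pos_iff_degree_pos.2
    (Polynomial.degree_pos_of_ne_zero_of_nonunit hh0 hh)
  rw [Polynomial.natDegree_mul hg0 hh0] at H
  rcases mul_eval_neg_or_mul_eval_neg hs with hs | hs
  · obtain ⟨c, hc, h0⟩ := H g (by omega) hab hs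
    exact ⟨c, hc, by simp [h0]⟩
  · obtain ⟨c, hc, h0⟩ := H h (by omega) hab hs
    exact ⟨c, hc, by simp [h0]⟩

theorem mul_eval_neg_of_mul_pos {f h : R[X]} (hpos : ∀ c, 0 < (f * h).eval c) {a b : R}
    (hs : f.eval a * f.eval b < 0) : h.eval a * h.eval b < 0 := by
  have := mul_pos (hpos a) (hpos b)
  simp only [Polynomial.eval_mul] at this
  have hprod : f.eval a * f.eval b * (h.eval a * h.eval b) > 0 := by linear_combination this
  exact neg_of_mul_pos_right hprod hs.le

/-- The cofactor `h` has smaller degree than `f` and the opposite sign changes, so it would have to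
vanish somewhere, which `0 < f h` excludes; hence irreducible `f` of degree at least two never
change sign. -/
theorem PolyIVT.of_irreducible
    (H : ∀ f : R[X], Irreducible f → 2 ≤ f.natDegree → ∃ G h : R[X],
      G + 1 = f * h ∧ G.natDegree ≤ 2 * (f.natDegree - 1) ∧ ∀ c, 0 ≤ G.eval c) : PolyIVT R := by
  refine ⟨fun f => ?_⟩
  induction hN : f.natDegree using Nat.strong_induction_on generalizing f with
  | _ N ih =>
  subst hN
  intro a b hab hs
  have hf0 : f ≠ 0 := by rintro rfl; simp at hs
  have hunit : ¬ IsUnit f := by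
    rw [Polynomial.isUnit_iff]
    rintro ⟨r, -, rfl⟩
    simp only [Polynomial.eval_C] at hs
    exact (mul_self_nonneg r).not_gt hs
  by_cases hirr : Irreducible f
  · rcases (Nat.succ_le_of_lt hirr.natDegree_pos).eq_or_lt with h1 | h2
    · exact exists_root_of_natDegree_eq_one h1.symm hab hs
    obtain ⟨G, h, hG, hdeg, hnonneg⟩ := H f hirr h2
    have hpos (c : R) : 0 < (f * h).eval c := by
      rw [← hG, Polynomial.eval_add, Polynomial.eval_one]
      exact add_pos_of_nonneg_of_pos (hnonneg c) one_pos
    have hh0 : h ≠ 0 := by rintro rfl; simpa using hpos 0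
    have hlt : h.natDegree < f.natDegree := by
      have := Polynomial.natDegree_add_le G 1
      rw [hG, Polynomial.natDegree_mul hf0 hh0, Polynomial.natDegree_one] at this
      omega
    obtain ⟨c, -, hc⟩ := ih _ hlt h rfl hab (mul_eval_neg_of_mul_pos hpos hs)
    simpa [hc] using hpos c
  · obtain ⟨g, h, rfl, hg, hh⟩ : ∃ g h, f = g * h ∧ ¬ IsUnit g ∧ ¬ IsUnit h := by
      simpa [irreducible_iff, hunit, not_or] using hirr
    exact exists_root_of_mul (left_ne_zero_of_mul hf0) (right_ne_zero_of_mul hf0) hg hh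
      (fun f hlt => ih _ hlt f rfl) hab hs

end Irreducible

theorem exists_linearOrder_nonneg_iff_isSquare (R : Type*) [Field R]
    (hadd : ∀ a b : R, IsSquare a → IsSquare b → IsSquare (a + b)) (hneg : ¬ IsSquare (-1 : R))
    (htot : ∀ a : R, IsSquare a ∨ IsSquare (-a)) :
    ∃ (_ : LinearOrder R) (_ : IsStrictOrderedRing R), ∀ a : R, 0 ≤ a ↔ IsSquare a := by
  let C : RingCone R :=
    { carrier := {a | IsSquare a}
      mul_mem' := fun ha hb => ha.mul hb
      one_mem' := IsSquare.one
      add_mem' := fun ha hb => hadd _ _ ha hb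
      zero_mem' := IsSquare.zero
      eq_zero_of_mem_of_neg_mem' := by
        intro a ha hb
        by_contra h0
        have : (-1 : R) = (-a) * a * (a⁻¹ * a⁻¹) := by field_simp
        exact hneg (this ▸ (IsSquare.mul hb ha).mul ⟨_, rfl⟩) }
  have : HasMemOrNegMem C := ⟨htot⟩
  classical
  let o : LinearOrder R := LinearOrder.mkOfAddGroupCone C
  have : IsOrderedRing R := IsOrderedRing.mkOfCone C
  refine ⟨o, IsOrderedRing.toIsStrictOrderedRing R, fun a => ?_⟩
  change a - 0 ∈ C ↔ _
  rw [sub_zero]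
  rfl

section SquareCone

variable {Ω : Type*} [Field Ω] {T : Subsemiring Ω} {E E' : Subfield Ω}

/-- The semiring of all sums `∑ tᵢ xᵢ²` with `tᵢ ∈ T` and `xᵢ ∈ E`: when `T ⊆ E` it is the
preordering of `E` generated by `T`, except that it may contain `-1`. -/
def squareCone (T : Subsemiring Ω) (E : Subfield Ω) : Subsemiring Ω :=
  (T.toSubmonoid ⊔ E.toSubmonoid.map (powMonoidHom 2)).subsemiringClosure

theorem mul_sq_mem_squareCone {t x : Ω} (ht : t ∈ T) (hx : x ∈ E) : t * x ^ 2 ∈ squareCone T E :=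
  AddSubmonoid.subset_closure (Submonoid.mem_sup.2 ⟨t, ht, _, ⟨x, hx, rfl⟩, rfl⟩)

theorem sq_mem_squareCone {x : Ω} (hx : x ∈ E) : x ^ 2 ∈ squareCone T E := by
  simpa using mul_sq_mem_squareCone T.one_mem hx

theorem mem_squareCone_of_mem {t : Ω} (ht : t ∈ T) : t ∈ squareCone T E := by
  simpa using mul_sq_mem_squareCone ht E.one_mem

theorem squareCone_induction {motive : (z : Ω) → z ∈ squareCone T E → Prop}
    (zero : motive 0 (zero_mem _))
    (mul_sq : ∀ t (ht : t ∈ T) x (hx : x ∈ E), motive (t * x ^ 2) (mul_sq_mem_squareCone ht hx))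
    (add : ∀ y z hy hz, motive y hy → motive z hz → motive (y + z) (add_mem hy hz))
    {z : Ω} (hz : z ∈ squareCone T E) : motive z hz := by
  refine AddSubmonoid.closure_induction (fun y hy => ?_) zero add hz
  obtain ⟨t, ht, _, ⟨x, hx, rfl⟩, rfl⟩ := Submonoid.mem_sup.1 hy
  exact mul_sq t ht x hx

theorem squareCone_mono (h : E ≤ E') : squareCone T E ≤ squareCone T E' := by
  intro z hz
  induction hz using squareCone_induction with
  | zero => exact zero_mem _
  | mul_sq t ht x hx => exact mul_sq_mem_squareCone ht (h hx)
  | add y z _ _ hy hz => exact add_mem hy hz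

theorem mem_squareCone_sSup {c : Set (Subfield Ω)} (hne : c.Nonempty) (hc : DirectedOn (· ≤ ·) c)
    {z : Ω} (hz : z ∈ squareCone T (sSup c)) : ∃ E ∈ c, z ∈ squareCone T E := by
  induction hz using squareCone_induction with
  | zero => exact hne.imp fun E hE => ⟨hE, zero_mem _⟩
  | mul_sq t ht x hx =>
    obtain ⟨E, hE, hxE⟩ := (Subfield.mem_sSup_of_directedOn hne hc).1 hx
    exact ⟨E, hE, mul_sq_mem_squareCone ht hxE⟩
  | add y z _ _ hy hz =>
    obtain ⟨E₁, h₁, hy⟩ := hy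
    obtain ⟨E₂, h₂, hz⟩ := hz
    obtain ⟨E, hE, hE₁, hE₂⟩ := hc E₁ h₁ E₂ h₂
    exact ⟨E, hE, add_mem (squareCone_mono hE₁ hy) (squareCone_mono hE₂ hz)⟩

theorem exists_le_maximal_neg_one_notMem_squareCone {K : Subfield Ω}
    (hK : (-1 : Ω) ∉ squareCone T K) :
    ∃ E, K ≤ E ∧ Maximal (fun E : Subfield Ω => (-1 : Ω) ∉ squareCone T E) E := by
  refine zorn_le_nonempty₀ _ (fun c hc hchain E hE => ?_) K hK
  refine ⟨sSup c, fun hneg => ?_, fun _ => le_sSup⟩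
  obtain ⟨E, hE, h⟩ := mem_squareCone_sSup ⟨E, hE⟩ hchain.directedOn hneg
  exact hc hE h

theorem exists_aeval_eq_of_mem_adjoin {f : E[X]} (hf : Irreducible f) {α y : Ω}
    (hα : f.aeval α = 0) (hy : y ∈ (IntermediateField.adjoin E {α}).toSubfield) :
    ∃ g : E[X], g.aeval α = y ∧ g.natDegree ≤ f.natDegree - 1 := by
  replace hy : y ∈ (IntermediateField.adjoin E {α}).toSubalgebra := hy
  rw [IntermediateField.adjoin_simple_toSubalgebra_of_isAlgebraic ⟨f, hf.ne_zero, hα⟩,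
    Algebra.adjoin_singleton_eq_range_aeval] at hy
  obtain ⟨g, rfl⟩ := hy
  refine ⟨g % f, ?_, Nat.le_sub_one_of_lt (g.natDegree_mod_lt hf.natDegree_pos.ne')⟩
  conv_rhs => rw [← EuclideanDomain.mod_add_div g f]
  simp [hα]

theorem exists_aeval_eq_of_mem_squareCone_adjoin (hTE : ∀ t ∈ T, t ∈ E) {f : E[X]}
    (hf : Irreducible f) {α z : Ω} (hα : f.aeval α = 0)
    (hz : z ∈ squareCone T (IntermediateField.adjoin E {α}).toSubfield) :
    ∃ G : E[X], G.aeval α = z ∧ G.natDegree ≤ 2 * (f.natDegree - 1) ∧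
      (∀ c : E, ((G.eval c : E) : Ω) ∈ squareCone T E) ∧
      (G.coeff (2 * (f.natDegree - 1)) : Ω) ∈ squareCone T E := by
  induction hz using squareCone_induction with
  | zero => exact ⟨0, by simp⟩
  | mul_sq t ht x hx =>
    obtain ⟨g, rfl, hg⟩ := exists_aeval_eq_of_mem_adjoin hf hα hx
    refine ⟨Polynomial.C ⟨t, hTE t ht⟩ * g ^ 2, ?_, ?_, fun c => ?_, ?_⟩
    · rw [map_mul, map_pow, Polynomial.aeval_C]
      rfl
    · exact (Polynomial.natDegree_C_mul_le _ _).trans (Polynomial.natDegree_pow_le_of_le 2 hg)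
    · simpa using mul_sq_mem_squareCone ht (g.eval c).2
    · simpa [Polynomial.coeff_pow_of_natDegree_le hg] using
        mul_sq_mem_squareCone ht (g.coeff (f.natDegree - 1)).2
  | add y z _ _ hy hz =>
    obtain ⟨G, rfl, hdeg, hev, hco⟩ := hy
    obtain ⟨G', rfl, hdeg', hev', hco'⟩ := hz
    exact ⟨G + G', map_add _ _ _, Polynomial.natDegree_add_le_of_degree_le hdeg hdeg',
      fun c => by simpa using add_mem (hev c) (hev' c), by simpa using add_mem hco hco'⟩

/-- Adjoining a root of `f` to a maximal `E` brings `-1` into the cone, so `-1 ≡ G` modulo `f` for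
some `G` which represents an element of the cone. -/
theorem exists_add_one_eq_mul_of_maximal (hTE : ∀ t ∈ T, t ∈ E) [IsAlgClosed Ω]
    (hE : Maximal (fun E : Subfield Ω => (-1 : Ω) ∉ squareCone T E) E) {f : E[X]}
    (hf : Irreducible f) (hdeg : 2 ≤ f.natDegree) :
    ∃ G h : E[X], G + 1 = f * h ∧ G.natDegree ≤ 2 * (f.natDegree - 1) ∧
      (∀ c : E, ((G.eval c : E) : Ω) ∈ squareCone T E) ∧
      (G.coeff (2 * (f.natDegree - 1)) : Ω) ∈ squareCone T E := by
  obtain ⟨α, hα⟩ := IsAlgClosed.exists_aeval_eq_zero Ω f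
    (Polynomial.degree_pos_of_irreducible hf).ne'
  have hαE : α ∉ E := by
    intro hαE
    have hroot : f.IsRoot ⟨α, hαE⟩ := by
      rw [Polynomial.IsRoot.def, ← Polynomial.coe_aeval_eq_eval]
      exact Subtype.ext ((Polynomial.aeval_algebraMap_apply Ω (⟨α, hαE⟩ : E) f).symm.trans hα)
    rw [Polynomial.natDegree_eq_of_degree_eq_some
      (Polynomial.degree_eq_one_of_irreducible_of_root hf hroot)] at hdeg
    exact absurd hdeg (by norm_num)
  have hneg : (-1 : Ω) ∈ squareCone T (IntermediateField.adjoin E {α}).toSubfield := by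
    by_contra hcon
    refine hαE (hE.le_of_ge hcon (fun x hx => ?_) (IntermediateField.mem_adjoin_simple_self E α))
    exact (IntermediateField.adjoin E {α}).algebraMap_mem ⟨x, hx⟩
  obtain ⟨G, hGα, hG⟩ := exists_aeval_eq_of_mem_squareCone_adjoin hTE hf hα hneg
  have hdvd : f ∣ G + 1 := by
    have := minpoly.dvd E α (p := G + 1) (by simp [hGα])
    rw [← minpoly.eq_of_irreducible hf hα] at this
    exact (dvd_mul_right _ _).trans this
  obtain ⟨h, hh⟩ := hdvd
  exact ⟨G, h, hh, hG⟩

theorem neg_mem_squareCone_of_not_isSquare (hTE : ∀ t ∈ T, t ∈ E) [IsAlgClosed Ω]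
    (hE : Maximal (fun E : Subfield Ω => (-1 : Ω) ∉ squareCone T E) E) {a : E}
    (ha : ¬ IsSquare a) : (-a : Ω) ∈ squareCone T E := by
  let f : E[X] := Polynomial.X ^ 2 - Polynomial.C a
  have hirr : Irreducible f := X_pow_sub_C_irreducible_of_prime Nat.prime_two
    fun b hb => ha ⟨b, by rw [← hb, sq]⟩
  have hmonic : f.Monic := Polynomial.monic_X_pow_sub_C a two_ne_zero
  have hdeg : f.natDegree = 2 := Polynomial.natDegree_X_pow_sub_C
  obtain ⟨G, h, hG, hGdeg, hev, hco⟩ := exists_add_one_eq_mul_of_maximal hTE hE hirr hdeg.ge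
  simp only [hdeg, Nat.add_one_sub_one, mul_one] at hGdeg hco
  obtain ⟨b, rfl⟩ : ∃ b, h = Polynomial.C b := by
    rcases eq_or_ne h 0 with rfl | h0
    · exact ⟨0, by simp⟩
    have := Polynomial.natDegree_add_le G 1
    rw [hG, hmonic.natDegree_mul' h0, hdeg, Polynomial.natDegree_one] at this
    exact ⟨_, Polynomial.eq_C_of_natDegree_eq_zero (by omega)⟩
  have hb : (b : Ω) ∈ squareCone T E := by
    have := congrArg (Polynomial.coeff · 2) hG
    simp only [f, Polynomial.coeff_add, Polynomial.coeff_one, Polynomial.coeff_mul_C,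
      Polynomial.coeff_sub, Polynomial.coeff_X_pow, Polynomial.coeff_C] at this
    norm_num at this
    rwa [← this]
  have h0 : ((G.eval 0 : E) : Ω) + 1 = -a * b := by
    have := congrArg (Polynomial.eval 0) hG
    simp only [f, Polynomial.eval_add, Polynomial.eval_one, Polynomial.eval_mul,
      Polynomial.eval_sub, Polynomial.eval_pow, Polynomial.eval_X, Polynomial.eval_C] at this
    simpa using congrArg Subtype.val this
  have hb0 : (b : Ω) ≠ 0 := by
    intro hb0
    exact hE.prop (eq_neg_of_add_eq_zero_left (h0.trans (by simp [hb0])) ▸ hev 0)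
  have : (-a : Ω) = (G.eval 0 + 1) * b * (b : Ω)⁻¹ ^ 2 := by rw [h0]; field_simp
  rw [this]
  exact mul_mem (mul_mem (add_mem (hev 0) (one_mem _)) hb) (sq_mem_squareCone (inv_mem b.2))

theorem isSquare_iff_mem_squareCone (hTE : ∀ t ∈ T, t ∈ E) [IsAlgClosed Ω]
    (hE : Maximal (fun E : Subfield Ω => (-1 : Ω) ∉ squareCone T E) E) {a : E} :
    IsSquare a ↔ (a : Ω) ∈ squareCone T E := by
  constructor
  · rintro ⟨b, rfl⟩
    simpa [sq] using sq_mem_squareCone (T := T) b.2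
  · intro ha
    by_contra hs
    have ha0 : (a : Ω) ≠ 0 := fun h0 =>
      hs ((Subtype.ext h0 : a = 0) ▸ IsSquare.zero)
    have : (-1 : Ω) = (-a) * a * (a : Ω)⁻¹ ^ 2 := by field_simp
    exact hE.prop (this ▸ mul_mem (mul_mem (neg_mem_squareCone_of_not_isSquare hTE hE hs) ha)
      (sq_mem_squareCone (inv_mem a.2)))

theorem exists_polyIVT_of_maximal (hTE : ∀ t ∈ T, t ∈ E) [IsAlgClosed Ω]
    (hE : Maximal (fun E : Subfield Ω => (-1 : Ω) ∉ squareCone T E) E) :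
    ∃ (_ : LinearOrder E) (_ : IsStrictOrderedRing E) (_ : PolyIVT E),
      ∀ a : E, (a : Ω) ∈ T → 0 ≤ a := by
  have hsq (a : E) := isSquare_iff_mem_squareCone (a := a) hTE hE
  obtain ⟨o, ho, hnn⟩ := exists_linearOrder_nonneg_iff_isSquare E
    (fun a b => by simp only [hsq]; exact add_mem)
    (by rw [hsq]; exact hE.prop)
    (fun a => by
      simp only [hsq]
      exact or_iff_not_imp_left.2 fun ha =>
        neg_mem_squareCone_of_not_isSquare hTE hE (mt (hsq a).1 ha))
  refine ⟨o, ho, .of_irreducible fun f hf hdeg => ?_,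
    fun a ha => (hnn a).2 ((hsq a).2 (mem_squareCone_of_mem ha))⟩
  obtain ⟨G, h, hG, hGdeg, hev, -⟩ := exists_add_one_eq_mul_of_maximal hTE hE hf hdeg
  exact ⟨G, h, hG, hGdeg, fun c => (hnn _).2 ((hsq _).2 (hev c))⟩

end SquareCone

section RingPreordering

variable {B : Type*} [CommRing B]

theorem exists_isPrime_forall_sq_add_mem (P : RingPreordering B) :
    ∃ I : Ideal B, I.IsPrime ∧ ∀ b, ∀ s ∈ P, b ^ 2 + s ∈ I → b ∈ I := by
  let S : Submonoid B :=
    { carrier := {x | ∃ t ∈ P, x = 1 + t}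
      one_mem' := ⟨0, zero_mem P, (add_zero 1).symm⟩
      mul_mem' := by
        rintro _ _ ⟨t, ht, rfl⟩ ⟨u, hu, rfl⟩
        exact ⟨t + u + t * u, add_mem (add_mem ht hu) (mul_mem ht hu), by ring⟩ }
  have hbot : Disjoint ((⊥ : Ideal B) : Set B) S := by
    rw [Set.disjoint_left]
    rintro _ rfl ⟨t, ht, h⟩
    exact P.neg_one_notMem (neg_eq_of_add_eq_zero_right h.symm ▸ ht)
  obtain ⟨I, -, hI⟩ := zorn_le_nonempty₀ {I : Ideal B | Disjoint (I : Set B) S}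
    (fun c hc hchain J hJ => ⟨sSup c, by
      rw [Set.mem_ofPred_eq, Set.disjoint_left]
      intro x hx
      obtain ⟨J, hJ, hxJ⟩ := (Submodule.mem_sSup_of_directed ⟨J, hJ⟩ hchain.directedOn).1 hx
      exact Set.disjoint_left.1 (hc hJ) hxJ, fun _ => le_sSup⟩) ⊥ hbot
  refine ⟨I, Ideal.isPrime_of_maximally_disjoint I S hI.prop fun J hJ => hI.not_prop_of_gt hJ,
    fun b s hs hbs => ?_⟩
  by_contra hb
  have hlt : I < I ⊔ Ideal.span {b} :=
    left_lt_sup.2 fun h => hb (h (Ideal.mem_span_singleton_self b))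
  obtain ⟨x, hx, t, ht, rfl⟩ := Set.not_disjoint_iff.1 (hI.not_prop_of_gt hlt)
  obtain ⟨i, hi, y, hy, hiy⟩ := Submodule.mem_sup.1 hx
  obtain ⟨h, rfl⟩ := Ideal.mem_span_singleton.1 hy
  have hmem : 1 + (s * h ^ 2 + (t + t + t ^ 2)) ∈ I := by
    have : 1 + (s * h ^ 2 + (t + t + t ^ 2)) = i * (1 + t + b * h) + (b ^ 2 + s) * h ^ 2 := by
      linear_combination (-(1 + t + b * h)) * hiy
    rw [this]
    exact I.add_mem (I.mul_mem_right _ hi) (I.mul_mem_right _ hbs)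
  exact Set.disjoint_left.1 hI.prop hmem ⟨_, add_mem (mul_mem hs (P.pow_two_mem h))
    (add_mem (add_mem ht ht) (P.pow_two_mem t)), rfl⟩

theorem exists_mul_sq_eq_of_mem_squareCone (P : RingPreordering B) {Ω : Type*} [Field Ω]
    (j : B →+* Ω) {K : Subfield Ω} (hK : ∀ x ∈ K, ∃ a b, j b ≠ 0 ∧ x = j a / j b) {z : Ω}
    (hz : z ∈ squareCone (P.toSubsemiring.map j) K) :
    ∃ s ∈ P, ∃ b, j b ≠ 0 ∧ z * j b ^ 2 = j s := by
  induction hz using squareCone_induction with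
  | zero => exact ⟨0, zero_mem P, 1, by simp⟩
  | mul_sq t ht x hx =>
    obtain ⟨t, ht, rfl⟩ := ht
    obtain ⟨a, b, hb, rfl⟩ := hK x hx
    exact ⟨t * a ^ 2, mul_mem ht (P.pow_two_mem a), b, hb, by simp; field_simp⟩
  | add y z _ _ hy hz =>
    obtain ⟨s, hs, b, hb, h⟩ := hy
    obtain ⟨s', hs', b', hb', h'⟩ := hz
    refine ⟨s * b' ^ 2 + s' * b ^ 2, add_mem (mul_mem hs (P.pow_two_mem _))
      (mul_mem hs' (P.pow_two_mem _)), b * b', by simp [hb, hb'], ?_⟩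
    simp only [map_mul, map_add, map_pow, ← h, ← h']
    ring

end RingPreordering

universe u

theorem exists_ringHom_polyIVT {B : Type u} [CommRing B] (P : RingPreordering B) :
    ∃ (R : Type u) (_ : Field R) (_ : LinearOrder R) (_ : IsStrictOrderedRing R) (_ : PolyIVT R)
      (φ : B →+* R), ∀ t ∈ P, 0 ≤ φ t := by
  obtain ⟨I, hI, hIreal⟩ := exists_isPrime_forall_sq_add_mem P
  let K := FractionRing (B ⧸ I)
  let Ω := AlgebraicClosure K
  let j : B →+* Ω := (algebraMap K Ω).comp ((algebraMap (B ⧸ I) K).comp (Ideal.Quotient.mk I))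
  have hj (b : B) : j b = 0 ↔ b ∈ I := by
    simp [j, Ideal.Quotient.eq_zero_iff_mem]
  have hK : ∀ x ∈ (algebraMap K Ω).fieldRange, ∃ a b, j b ≠ 0 ∧ x = j a / j b := by
    rintro _ ⟨x, rfl⟩
    obtain ⟨a, b, hb, rfl⟩ := IsFractionRing.div_surjective (A := B ⧸ I) x
    obtain ⟨a, rfl⟩ := Ideal.Quotient.mk_surjective a
    obtain ⟨b, rfl⟩ := Ideal.Quotient.mk_surjective b
    refine ⟨a, b, ?_, by simp [j]⟩
    rw [Ne, hj, ← Ideal.Quotient.eq_zero_iff_mem]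
    exact nonZeroDivisors.ne_zero hb
  have hneg : (-1 : Ω) ∉ squareCone (P.toSubsemiring.map j) (algebraMap K Ω).fieldRange := by
    intro hmem
    obtain ⟨s, hs, b, hb, h⟩ := exists_mul_sq_eq_of_mem_squareCone P j hK hmem
    rw [Ne, hj] at hb
    refine hb (hIreal b s hs ((hj _).1 ?_))
    rw [map_add, map_pow, ← h]
    ring
  obtain ⟨E, hKE, hE⟩ := exists_le_maximal_neg_one_notMem_squareCone hneg
  have hjE (b : B) : j b ∈ E := hKE ⟨_, rfl⟩
  obtain ⟨o, ho, hivt, hnn⟩ := exists_polyIVT_of_maximal (by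
    rintro _ ⟨t, -, rfl⟩
    exact hjE t) hE
  exact ⟨E, inferInstance, o, ho, hivt, j.codRestrict E hjE, fun t ht => hnn _ ⟨t, ht, rfl⟩⟩

end RealClosed

/-! ### Polynomials over real closed fields -/

section PolyIVT

open scoped Polynomial
open Set SignType Filter

theorem exists_first_root_Ioc {R : Type*} [Field R] [LinearOrder R] {f : R[X]} (hf : f ≠ 0)
    {a b : R} (hab : a < b) (hb : f.eval b = 0) :
    ∃ c ∈ Ioc a b, f.eval c = 0 ∧ ∀ x ∈ Ioo a c, f.eval x ≠ 0 := by
  let s : Finset R := f.roots.toFinset.filter (a < ·)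
  have mem_s (x : R) : x ∈ s ↔ f.eval x = 0 ∧ a < x := by simp [s, hf]
  have hbs : b ∈ s := (mem_s b).2 ⟨hb, hab⟩
  obtain ⟨hc, hac⟩ := (mem_s _).1 (s.min'_mem ⟨b, hbs⟩)
  refine ⟨s.min' ⟨b, hbs⟩, ⟨hac, s.min'_le b hbs⟩, hc, fun x hx h0 => ?_⟩
  exact hx.2.not_ge (s.min'_le x ((mem_s x).2 ⟨h0, hx.1⟩))

theorem exists_eq_pow_succ_mul {R : Type*} [Field R] {f : R[X]} (hf : f ≠ 0) {a : R}
    (ha : f.eval a = 0) :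
    ∃ (m : ℕ) (g : R[X]), f = (Polynomial.X - Polynomial.C a) ^ (m + 1) * g ∧ g.eval a ≠ 0 := by
  obtain ⟨g, hg, hdvd⟩ := Polynomial.exists_eq_pow_rootMultiplicity_mul_and_not_dvd f hf a
  have hpos : 0 < f.rootMultiplicity a := (Polynomial.rootMultiplicity_pos hf).2 ha
  refine ⟨f.rootMultiplicity a - 1, g, by rwa [Nat.sub_add_cancel hpos], fun h => ?_⟩
  exact hdvd (Polynomial.dvd_iff_isRoot.2 h)

variable {R : Type*} [Field R] [LinearOrder R] [IsStrictOrderedRing R]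

theorem exists_forall_ge_le_eval {f : R[X]} (hf : 0 < f.leadingCoeff) :
    ∃ δ > 0, ∃ M, ∀ x ≥ M, δ ≤ f.eval x := by
  induction hn : f.natDegree generalizing f with
  | zero =>
    rw [Polynomial.eq_C_of_natDegree_eq_zero hn, Polynomial.leadingCoeff_C] at hf
    refine ⟨_, hf, 0, fun x _ => ?_⟩
    conv_rhs => rw [Polynomial.eq_C_of_natDegree_eq_zero hn, Polynomial.eval_C]
  | succ n ih =>
    have hdeg : f.divX.natDegree = n := by
      rw [Polynomial.natDegree_divX_eq_natDegree_tsub_one, hn, Nat.add_sub_cancel]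
    have hlead : f.divX.leadingCoeff = f.leadingCoeff := by
      rw [Polynomial.leadingCoeff, hdeg, Polynomial.coeff_divX, Polynomial.leadingCoeff, hn]
    obtain ⟨δ, hδ, M, hM⟩ := ih (hlead ▸ hf) hdeg
    refine ⟨δ, hδ, max M (max 0 ((δ - f.coeff 0) / δ)), fun x hx => ?_⟩
    simp only [ge_iff_le, max_le_iff, div_le_iff₀ hδ] at hx
    have := mul_le_mul_of_nonneg_right (hM x hx.1) hx.2.1
    rw [← Polynomial.divX_mul_X_add f]
    simp only [Polynomial.eval_add, Polynomial.eval_mul, Polynomial.eval_X, Polynomial.eval_C]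
    linarith

theorem eventually_atTop_sign_eval_eq (f : R[X]) :
    ∀ᶠ x in atTop, sign (f.eval x) = sign f.leadingCoeff := by
  rcases lt_trichotomy f.leadingCoeff 0 with hf | hf | hf
  · obtain ⟨δ, hδ, M, hM⟩ := exists_forall_ge_le_eval (f := -f) (by simpa using hf)
    filter_upwards [eventually_ge_atTop M] with x hx
    have := hδ.trans_le (hM x hx)
    rw [sign_neg hf, sign_neg (by simpa using this)]
  · simp [Polynomial.leadingCoeff_eq_zero.1 hf]
  · obtain ⟨δ, hδ, M, hM⟩ := exists_forall_ge_le_eval hf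
    filter_upwards [eventually_ge_atTop M] with x hx
    rw [sign_pos hf, sign_pos (hδ.trans_le (hM x hx))]

theorem eventually_atBot_sign_eval_eq (f : R[X]) :
    ∀ᶠ x in atBot, sign (f.eval x) = sign ((-1) ^ f.natDegree * f.leadingCoeff) := by
  filter_upwards [tendsto_neg_atBot_atTop.eventually
    (eventually_atTop_sign_eval_eq (f.comp (-Polynomial.X)))] with x hx
  simpa [← Polynomial.comp_neg_X_leadingCoeff_eq] using hx

theorem sign_eq_of_strictMonoOn_of_mul_nonneg {g : R → R} {a b x : R}
    (hg : StrictMonoOn g (Icc a b)) (hab : 0 ≤ g a * g b) (hx : x ∈ Ioo a b) :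
    sign (g x) = if g a = 0 then sign (g b) else sign (g a) := by
  have hle := (hx.1.trans hx.2).le
  have hax := hg (left_mem_Icc.2 hle) (Ioo_subset_Icc_self hx) hx.1
  have hxb := hg (Ioo_subset_Icc_self hx) (right_mem_Icc.2 hle) hx.2
  rcases lt_trichotomy (g a) 0 with ha | ha | ha
  · have hb : g b ≤ 0 := nonpos_of_mul_nonneg_right hab ha
    rw [if_neg ha.ne, sign_neg ha, sign_neg (hxb.trans_le hb)]
  · rw [if_pos ha, sign_pos (ha ▸ hax), sign_pos ((ha ▸ hax).trans hxb)]
  · rw [if_neg ha.ne', sign_pos ha, sign_pos (ha.trans hax)]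

variable [PolyIVT R]

theorem mul_eval_pos_of_forall_ne_zero {f : R[X]} {a b : R} (hab : a ≤ b)
    (h : ∀ c ∈ Icc a b, f.eval c ≠ 0) : 0 < f.eval a * f.eval b := by
  have hne : f.eval a * f.eval b ≠ 0 :=
    mul_ne_zero (h a (left_mem_Icc.2 hab)) (h b (right_mem_Icc.2 hab))
  refine hne.lt_or_gt.resolve_left fun hneg => ?_
  rcases hab.eq_or_lt with rfl | hlt
  · exact (mul_self_nonneg _).not_gt hneg
  · obtain ⟨c, hc, h0⟩ := PolyIVT.exists_root f hlt hneg
    exact h c (Ioo_subset_Icc_self hc) h0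

/-- After dividing `f'` by its obvious zeros at two consecutive roots of `f`, the quotient has
opposite signs there. -/
theorem exists_derivative_root_of_consecutive_roots {f : R[X]} (hf : f ≠ 0) {a b : R}
    (hab : a < b) (ha : f.eval a = 0) (hb : f.eval b = 0) (h : ∀ x ∈ Ioo a b, f.eval x ≠ 0) :
    ∃ c ∈ Ioo a b, f.derivative.eval c = 0 := by
  obtain ⟨m, f₁, rfl, hf₁a⟩ := exists_eq_pow_succ_mul hf ha
  have hf₁b : f₁.eval b = 0 := by simpa [sub_ne_zero.2 hab.ne'] using hb
  obtain ⟨n, g, rfl, hgb⟩ := exists_eq_pow_succ_mul (right_ne_zero_of_mul hf) hf₁b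
  have hg : ∀ c ∈ Icc a b, g.eval c ≠ 0 := by
    intro c hc h0
    rcases eq_or_lt_of_le hc.1 with rfl | hac
    · simp [h0] at hf₁a
    rcases eq_or_lt_of_le hc.2 with rfl | hcb
    · exact hgb h0
    · exact h c ⟨hac, hcb⟩ (by simp [h0])
  let k : R[X] := Polynomial.C (m + 1 : R) * (Polynomial.X - Polynomial.C b) * g +
    Polynomial.C (n + 1 : R) * (Polynomial.X - Polynomial.C a) * g +
    (Polynomial.X - Polynomial.C a) * (Polynomial.X - Polynomial.C b) * g.derivative
  have hsign : k.eval a * k.eval b < 0 := by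
    have : k.eval a * k.eval b =
        -((m + 1) * (n + 1) * (b - a) ^ 2 * (g.eval a * g.eval b)) := by
      simp [k]
      ring
    rw [this, neg_lt_zero]
    have := mul_eval_pos_of_forall_ne_zero hab.le hg
    have := sub_pos.2 hab
    positivity
  obtain ⟨c, hc, h0⟩ := PolyIVT.exists_root k hab hsign
  refine ⟨c, hc, ?_⟩
  have : ((Polynomial.X - Polynomial.C a) ^ (m + 1) *
      ((Polynomial.X - Polynomial.C b) ^ (n + 1) * g)).derivative =
      (Polynomial.X - Polynomial.C a) ^ m * (Polynomial.X - Polynomial.C b) ^ n * k := by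
    simp only [Polynomial.derivative_mul, Polynomial.derivative_X_sub_C_pow, k, map_add,
      Polynomial.C_1, Nat.cast_add, Nat.cast_one, Polynomial.C_eq_natCast, Nat.add_sub_cancel]
    ring
  rw [this, Polynomial.eval_mul, h0, mul_zero]

theorem exists_derivative_root_of_eval_eq_zero {f : R[X]} {a b : R} (hab : a < b)
    (ha : f.eval a = 0) (hb : f.eval b = 0) : ∃ c ∈ Ioo a b, f.derivative.eval c = 0 := by
  rcases eq_or_ne f 0 with rfl | hf
  · obtain ⟨c, hc⟩ := exists_between hab
    exact ⟨c, hc, by simp⟩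
  obtain ⟨b', hb', h0, hne⟩ := exists_first_root_Ioc hf hab hb
  obtain ⟨c, hc, hc0⟩ := exists_derivative_root_of_consecutive_roots hf hb'.1 ha h0 hne
  exact ⟨c, Ioo_subset_Ioo_right hb'.2 hc, hc0⟩

theorem exists_derivative_eval_eq_slope (f : R[X]) {a b : R} (hab : a < b) :
    ∃ c ∈ Ioo a b, f.eval b - f.eval a = f.derivative.eval c * (b - a) := by
  have hba : b - a ≠ 0 := sub_ne_zero.2 hab.ne'
  let s := (f.eval b - f.eval a) / (b - a)
  obtain ⟨c, hc, h0⟩ := exists_derivative_root_of_eval_eq_zero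
    (f := f - Polynomial.C (f.eval a) - Polynomial.C s * (Polynomial.X - Polynomial.C a)) hab
    (by simp) (by simp [s, hba])
  refine ⟨c, hc, ?_⟩
  have : f.derivative.eval c = s := by simpa [sub_eq_zero] using h0
  rw [this, div_mul_cancel₀ _ hba]

theorem strictMonoOn_eval_of_derivative_pos {f : R[X]} {a b : R}
    (h : ∀ c ∈ Ioo a b, 0 < f.derivative.eval c) : StrictMonoOn (f.eval ·) (Icc a b) := by
  intro x hx y hy hxy
  obtain ⟨c, hc, hslope⟩ := exists_derivative_eval_eq_slope f hxy
  have := h c (Ioo_subset_Ioo hx.1 hy.2 hc)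
  exact sub_pos.1 (hslope ▸ mul_pos this (sub_pos.2 hxy))

theorem sign_eval_eq_of_sign_derivative_eq {f : R[X]} {a b : R} {s : SignType}
    (h : ∀ c ∈ Ioo a b, sign (f.derivative.eval c) = s) (hab : 0 ≤ f.eval a * f.eval b) {x : R}
    (hx : x ∈ Ioo a b) :
    sign (f.eval x) = if f.eval a = 0 then sign (f.eval b) else sign (f.eval a) := by
  cases s with
  | pos =>
    have hmono := strictMonoOn_eval_of_derivative_pos fun c hc => sign_eq_one_iff.1 (h c hc)
    exact sign_eq_of_strictMonoOn_of_mul_nonneg hmono hab hx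
  | neg =>
    have hmono : StrictMonoOn ((-f).eval ·) (Icc a b) :=
      strictMonoOn_eval_of_derivative_pos fun c hc => by
        simpa using sign_eq_neg_one_iff.1 (h c hc)
    have := sign_eq_of_strictMonoOn_of_mul_nonneg hmono (by simpa using hab) hx
    simpa only [Polynomial.eval_neg, neg_eq_zero, Left.sign_neg, ← apply_ite, neg_inj] using this
  | zero =>
    obtain ⟨c, hc, hslope⟩ := exists_derivative_eval_eq_slope f hx.1
    obtain ⟨d, hd, hslope'⟩ := exists_derivative_eval_eq_slope f hx.2
    have hc0 := sign_eq_zero_iff.1 (h c (Ioo_subset_Ioo_right hx.2.le hc))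
    have hd0 := sign_eq_zero_iff.1 (h d (Ioo_subset_Ioo_left hx.1.le hd))
    rw [hc0, zero_mul, sub_eq_zero] at hslope
    rw [hd0, zero_mul, sub_eq_zero] at hslope'
    rw [hslope', hslope, ite_self]

theorem exists_root_of_sign_derivative_eq {f : R[X]} {a b : R} {s : SignType} (hab : a < b)
    (h : ∀ c ∈ Ioo a b, sign (f.derivative.eval c) = s) (hneg : f.eval a * f.eval b < 0) :
    ∃ w ∈ Ioo a b, f.eval w = 0 ∧ (∀ x ∈ Ioo a w, sign (f.eval x) = sign (f.eval a)) ∧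
      ∀ x ∈ Ioo w b, sign (f.eval x) = sign (f.eval b) := by
  obtain ⟨w, hw, h0⟩ := PolyIVT.exists_root f hab hneg
  have ha0 : f.eval a ≠ 0 := left_ne_zero_of_mul hneg.ne
  refine ⟨w, hw, h0, fun x hx => ?_, fun x hx => ?_⟩
  · rw [sign_eval_eq_of_sign_derivative_eq (fun c hc => h c (Ioo_subset_Ioo_right hw.2.le hc))
      (by simp [h0]) hx, if_neg ha0]
  · rw [sign_eval_eq_of_sign_derivative_eq (fun c hc => h c (Ioo_subset_Ioo_left hw.1.le hc))
      (by simp [h0]) hx, if_pos h0]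

end PolyIVT

/-! ### Matching subdivisions -/

section Subdivision

open scoped Polynomial
open Set SignType

variable {R₁ R₂ : Type*} [Field R₁] [LinearOrder R₁] [Field R₂] [LinearOrder R₂]

/-- Points `b` and `b'` of two ordered fields at which the two components of each pair of
polynomials in `𝒬` take values of equal sign. -/
def SameSigns (𝒬 : Set (R₁[X] × R₂[X])) (b : R₁) (b' : R₂) : Prop :=
  ∀ Q ∈ 𝒬, sign (Q.1.eval b) = sign (Q.2.eval b')

/-- Finite subdivisions of the intervals `(u, v)` and `(u', v')` with the same number of nodes, such
that corresponding nodes, and any two points of corresponding cells, have the same signs. They are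
encoded as binary trees of cells; each node must be a root of some member of the family. -/
inductive MatchingSubdivision (𝒬 : Set (R₁[X] × R₂[X])) : R₁ → R₁ → R₂ → R₂ → Prop
  | cell {u v u' v'} (huv : u < v) (huv' : u' < v')
      (h : ∀ b ∈ Ioo u v, ∀ b' ∈ Ioo u' v', SameSigns 𝒬 b b') : MatchingSubdivision 𝒬 u v u' v'
  | join {u w v u' w' v'} (left : MatchingSubdivision 𝒬 u w u' w')
      (root : ∃ Q ∈ 𝒬, Q.1 ≠ 0 ∧ Q.1.eval w = 0) (node : SameSigns 𝒬 w w')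
      (right : MatchingSubdivision 𝒬 w v w' v') : MatchingSubdivision 𝒬 u v u' v'

variable {𝒬 : Set (R₁[X] × R₂[X])} {P : R₁[X] × R₂[X]} {u v b : R₁} {u' v' b' : R₂}

theorem sameSigns_insert :
    SameSigns (insert P 𝒬) b b' ↔ sign (P.1.eval b) = sign (P.2.eval b') ∧ SameSigns 𝒬 b b' :=
  forall_mem_insert

theorem MatchingSubdivision.exists_sameSigns (h : MatchingSubdivision 𝒬 u v u' v')
    (hb : b ∈ Ioo u v) :
    (∃ Q ∈ 𝒬, Q.1 ≠ 0 ∧ Q.1.eval b = 0) ∧ (∃ b', SameSigns 𝒬 b b') ∨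
      ∃ s t, s < t ∧ ∀ b' ∈ Ioo s t, SameSigns 𝒬 b b' := by
  induction h with
  | @cell _ _ s t _ hst h => exact .inr ⟨s, t, hst, h b hb⟩
  | @join _ w _ _ w' _ _ root node _ ihl ihr =>
    rcases lt_trichotomy b w with hbw | rfl | hbw
    · exact ihl ⟨hb.1, hbw⟩
    · exact .inl ⟨root, w', node⟩
    · exact ihr ⟨hbw, hb.2⟩

variable [IsStrictOrderedRing R₁] [IsStrictOrderedRing R₂]

theorem exists_forall_sign_eval_eq_of_cell (huv : u < v) (huv' : u' < v')
    (h : ∀ b ∈ Ioo u v, ∀ b' ∈ Ioo u' v', SameSigns 𝒬 b b') (hP : P ∈ insert 0 𝒬) :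
    ∃ s, (∀ b ∈ Ioo u v, sign (P.1.eval b) = s) ∧ ∀ b' ∈ Ioo u' v', sign (P.2.eval b') = s := by
  rcases hP with rfl | hP
  · exact ⟨0, by simp, by simp⟩
  · obtain ⟨c, hc⟩ := exists_between huv
    obtain ⟨c', hc'⟩ := exists_between huv'
    exact ⟨sign (P.1.eval c), fun b hb => (h b hb c' hc' P hP).trans (h c hc c' hc' P hP).symm,
      fun b' hb' => (h c hc b' hb' P hP).symm⟩

variable [PolyIVT R₁] [PolyIVT R₂]

theorem MatchingSubdivision.adjoin_of_cell (huv : u < v) (huv' : u' < v')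
    (h : ∀ b ∈ Ioo u v, ∀ b' ∈ Ioo u' v', SameSigns 𝒬 b b')
    (hder : (P.1.derivative, P.2.derivative) ∈ insert 0 𝒬)
    (hu : sign (P.1.eval u) = sign (P.2.eval u')) (hv : sign (P.1.eval v) = sign (P.2.eval v')) :
    MatchingSubdivision (insert P 𝒬) u v u' v' := by
  obtain ⟨s, hs, hs'⟩ := exists_forall_sign_eval_eq_of_cell huv huv' h hder
  have hmul : sign (P.1.eval u * P.1.eval v) = sign (P.2.eval u' * P.2.eval v') := by
    rw [sign_mul, sign_mul, hu, hv]
  have hu0 : P.1.eval u = 0 ↔ P.2.eval u' = 0 := by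
    rw [← sign_eq_zero_iff, hu, sign_eq_zero_iff]
  rcases le_or_gt 0 (P.1.eval u * P.1.eval v) with hpos | hneg
  · have hpos' : 0 ≤ P.2.eval u' * P.2.eval v' := sign_nonneg_iff.1 (hmul ▸ sign_nonneg_iff.2 hpos)
    refine .cell huv huv' fun b hb b' hb' => sameSigns_insert.2 ⟨?_, h b hb b' hb'⟩
    rw [sign_eval_eq_of_sign_derivative_eq hs hpos hb,
      sign_eval_eq_of_sign_derivative_eq hs' hpos' hb']
    simp only [hu0, hu, hv]
  · have hneg' : P.2.eval u' * P.2.eval v' < 0 :=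
      sign_eq_neg_one_iff.1 (hmul ▸ sign_eq_neg_one_iff.2 hneg)
    obtain ⟨w, hw, hw0, hl, hr⟩ := exists_root_of_sign_derivative_eq huv hs hneg
    obtain ⟨w', hw', hw0', hl', hr'⟩ := exists_root_of_sign_derivative_eq huv' hs' hneg'
    have hP0 : P.1 ≠ 0 := by
      intro h0
      simp [h0] at hneg
    refine .join (.cell hw.1 hw'.1 fun b hb b' hb' => sameSigns_insert.2 ⟨?_, ?_⟩)
      ⟨P, mem_insert _ _, hP0, hw0⟩ (sameSigns_insert.2 ⟨by simp [hw0, hw0'], h w hw w' hw'⟩)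
      (.cell hw.2 hw'.2 fun b hb b' hb' => sameSigns_insert.2 ⟨?_, ?_⟩)
    · rw [hl b hb, hl' b' hb', hu]
    · exact h b (Ioo_subset_Ioo_right hw.2.le hb) b' (Ioo_subset_Ioo_right hw'.2.le hb')
    · rw [hr b hb, hr' b' hb', hv]
    · exact h b (Ioo_subset_Ioo_left hw.1.le hb) b' (Ioo_subset_Ioo_left hw'.1.le hb')

theorem MatchingSubdivision.adjoin (h : MatchingSubdivision 𝒬 u v u' v')
    (hder : (P.1.derivative, P.2.derivative) ∈ insert 0 𝒬)
    (hroot : ∀ b b', (∃ Q ∈ 𝒬, Q.1 ≠ 0 ∧ Q.1.eval b = 0) → SameSigns 𝒬 b b' →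
      sign (P.1.eval b) = sign (P.2.eval b'))
    (hu : sign (P.1.eval u) = sign (P.2.eval u')) (hv : sign (P.1.eval v) = sign (P.2.eval v')) :
    MatchingSubdivision (insert P 𝒬) u v u' v' := by
  induction h with
  | cell huv huv' h => exact adjoin_of_cell huv huv' h hder hu hv
  | join _ root node _ ihl ihr =>
    have hw := hroot _ _ root node
    obtain ⟨Q, hQ, hQw⟩ := root
    exact .join (ihl hu hw) ⟨Q, mem_insert_of_mem _ hQ, hQw⟩ (sameSigns_insert.2 ⟨hw, node⟩)
      (ihr hw hv)

end Subdivision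

/-! ### Pseudo-division -/

section PseudoDivision

open scoped Polynomial
open SignType

theorem exists_finset_superset_closed {α : Type*} (rank : α → ℕ)
    (children : α → α → Finset α)
    (h : ∀ a b, ∀ c ∈ children a b, rank c < rank a ∧ rank c < rank b) (s : Finset α) :
    ∃ t, s ⊆ t ∧ ∀ a ∈ t, ∀ b ∈ t, children a b ⊆ t := by
  classical
  let N := s.sup rank + 1
  -- Elements are added by descending rank: the children added at one stage have smaller rank.
  have key (k : ℕ) : ∃ t, s ⊆ t ∧
      ∀ a ∈ t, ∀ b ∈ t, N ≤ rank a + k → N ≤ rank b + k → children a b ⊆ t := by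
    induction k with
    | zero =>
      refine ⟨s, subset_rfl, fun a ha b _ hNa => ?_⟩
      have : rank a ≤ s.sup rank := Finset.le_sup ha
      omega
    | succ k ih =>
      obtain ⟨t, hst, ht⟩ := ih
      let new := (t ×ˢ t).biUnion fun p =>
        if N ≤ rank p.1 + (k + 1) ∧ N ≤ rank p.2 + (k + 1) then children p.1 p.2 else ∅
      have mem_new {a b : α} (ha : a ∈ t) (hb : b ∈ t) (hNa : N ≤ rank a + (k + 1))
          (hNb : N ≤ rank b + (k + 1)) : children a b ⊆ new := by
        intro c hc
        exact Finset.mem_biUnion.2 ⟨(a, b), Finset.mk_mem_product ha hb, by rwa [if_pos ⟨hNa, hNb⟩]⟩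
      have old (c : α) (hc : c ∈ t ∪ new) (hNc : N ≤ rank c + (k + 1)) : c ∈ t := by
        rcases Finset.mem_union.1 hc with hc | hc
        · exact hc
        obtain ⟨⟨a, b⟩, hab, hc⟩ := Finset.mem_biUnion.1 hc
        obtain ⟨ha, hb⟩ := Finset.mem_product.1 hab
        split_ifs at hc
        · have := h a b c hc
          exact ht a ha b hb (by omega) (by omega) hc
        · simp at hc
      refine ⟨t ∪ new, hst.trans Finset.subset_union_left, fun a ha b hb hNa hNb => ?_⟩
      exact (mem_new (old a ha hNa) (old b hb hNb) hNa hNb).trans Finset.subset_union_right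
  obtain ⟨t, hst, ht⟩ := key N
  exact ⟨t, hst, fun a ha b hb => ht a ha b hb (by omega) (by omega)⟩

variable {B R : Type*} [CommRing B] [CommSemiring R]

theorem exists_C_pow_mul_eq_mul_add {n : ℕ} {Q : B[X]} (hQ : Q.natDegree ≤ n) (P : B[X]) :
    ∃ (k : ℕ) (S T : B[X]), Polynomial.C (Q.coeff n ^ k) * P = Q * S + T ∧ T.degree < n := by
  obtain ⟨N, hN⟩ : ∃ N : ℕ, P.degree < (n + N : ℕ) :=
    ⟨P.natDegree + 1, P.degree_le_natDegree.trans_lt (by norm_cast; omega)⟩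
  induction N generalizing P with
  | zero => exact ⟨0, 0, P, by simp, hN⟩
  | succ N ih =>
    let P' := Polynomial.C (Q.coeff n) * P -
      Q * Polynomial.C (P.coeff (n + N)) * Polynomial.X ^ N
    have hP' : P'.degree < (n + N : ℕ) := by
      refine (Polynomial.degree_lt_iff_coeff_zero _ _).2 fun i hi => ?_
      rw [Polynomial.coeff_sub, Polynomial.coeff_C_mul, Polynomial.coeff_mul_X_pow',
        if_pos (le_of_add_le_right hi), Polynomial.coeff_mul_C]
      rcases hi.eq_or_lt with rfl | hi
      · rw [Nat.add_sub_cancel, sub_self]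
      · rw [(Polynomial.degree_lt_iff_coeff_zero _ _).1 hN i hi,
          Polynomial.coeff_eq_zero_of_natDegree_lt (hQ.trans_lt (by omega : n < i - N)), mul_zero,
          zero_mul, sub_zero]
    obtain ⟨k, S, T, h, hT⟩ := ih P' hP'
    refine ⟨k + 1, Polynomial.C (Q.coeff n ^ k * P.coeff (n + N)) * Polynomial.X ^ N + S, T, ?_, hT⟩
    simp only [P', map_pow, map_mul] at h ⊢
    linear_combination h

/-- `T` is a pseudo-remainder of `P` modulo the truncation of `Q` at the degree of its image
under `φ`; the leading coefficient of this truncation is not killed by `φ`. -/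
def IsPseudoRem (φ : B →+* R) (P Q T : B[X]) : Prop :=
  T.degree < (Q.map φ).natDegree ∧ ∃ (k : ℕ) (S : B[X]),
    Polynomial.C (Q.coeff (Q.map φ).natDegree ^ k) * P =
      PowerSeries.trunc ((Q.map φ).natDegree + 1) Q * S + T

theorem exists_isPseudoRem (φ : B →+* R) (P Q : B[X]) : ∃ T, IsPseudoRem φ P Q T := by
  obtain ⟨k, S, T, h, hT⟩ := exists_C_pow_mul_eq_mul_add
    (Nat.lt_succ_iff.1 (PowerSeries.natDegree_trunc_lt (Q : PowerSeries B) (Q.map φ).natDegree)) P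
  rw [PowerSeries.coeff_trunc, if_pos (Nat.lt_succ_self _), Polynomial.coeff_coe] at h
  exact ⟨T, hT, k, S, h⟩

theorem map_trunc_natDegree_map_eq (φ : B →+* R) (Q : B[X]) :
    (PowerSeries.trunc ((Q.map φ).natDegree + 1) (Q : PowerSeries B)).map φ = Q.map φ := by
  ext i
  rw [Polynomial.coeff_map, PowerSeries.coeff_trunc, Polynomial.coeff_coe]
  split_ifs with hi
  · rw [Polynomial.coeff_map]
  · rw [map_zero, Polynomial.coeff_eq_zero_of_natDegree_lt (by omega)]

theorem pow_mul_eval_map_eq {φ : B →+* R} {k : ℕ} {P Q S T : B[X]} {b : R}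
    (h : Polynomial.C (Q.coeff (Q.map φ).natDegree ^ k) * P =
      PowerSeries.trunc ((Q.map φ).natDegree + 1) Q * S + T) (hb : (Q.map φ).eval b = 0) :
    φ (Q.coeff (Q.map φ).natDegree) ^ k * (P.map φ).eval b = (T.map φ).eval b := by
  have := congrArg (fun F => (F.map φ).eval b) h
  simpa only [Polynomial.map_mul, Polynomial.map_add, Polynomial.map_C, Polynomial.eval_mul,
    Polynomial.eval_add, Polynomial.eval_C, map_pow φ, map_trunc_natDegree_map_eq, hb, zero_mul,
    zero_add] using this

theorem IsPseudoRem.natDegree_map_lt {φ : B →+* R} {P Q T : B[X]} (hT : IsPseudoRem φ P Q T)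
    (hQ : 0 < (Q.map φ).natDegree) : (T.map φ).natDegree < (Q.map φ).natDegree := by
  refine Polynomial.natDegree_map_le.trans_lt ?_
  rcases eq_or_ne T 0 with rfl | h0
  · rwa [Polynomial.natDegree_zero]
  · exact (Polynomial.natDegree_lt_iff_degree_lt h0).2 hT.1

theorem natDegree_pos_of_ne_zero_of_eval_eq_zero {f : R[X]} {b : R} (hf : f ≠ 0)
    (hb : f.eval b = 0) : 0 < f.natDegree := by
  refine Nat.pos_of_ne_zero fun h0 => hf ?_
  rw [Polynomial.eq_C_of_natDegree_eq_zero h0, Polynomial.eval_C] at hb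
  rw [Polynomial.eq_C_of_natDegree_eq_zero h0, hb, map_zero]

theorem natDegree_map_derivative_lt {φ : B →+* R} {P : B[X]} (hP : 0 < (P.map φ).natDegree) :
    (P.derivative.map φ).natDegree < (P.map φ).natDegree := by
  rw [← Polynomial.derivative_map]
  exact Polynomial.natDegree_derivative_lt hP.ne'

/-- Closure of a family of polynomials under derivatives and pseudo-remainders, by which the signs
of the image of a member under `φ` are determined by those of the members of lower degree. -/
structure IsPseudoRemClosed (φ : B →+* R) (t : Finset B[X]) : Prop where
  derivative_mem : ∀ P ∈ t, 0 < (P.map φ).natDegree → P.derivative ∈ t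
  exists_isPseudoRem : ∀ P ∈ t, ∀ Q ∈ t, 0 < (Q.map φ).natDegree →
    (Q.map φ).natDegree ≤ (P.map φ).natDegree → ∃ T ∈ t, IsPseudoRem φ P Q T

theorem exists_isPseudoRemClosed (φ : B →+* R) (s : Finset B[X]) :
    ∃ t, s ⊆ t ∧ IsPseudoRemClosed φ t := by
  classical
  choose rem hrem using exists_isPseudoRem φ
  let rank (P : B[X]) : ℕ := (P.map φ).natDegree
  let children (P Q : B[X]) : Finset B[X] :=
    (if P = Q ∧ 0 < rank P then {P.derivative} else ∅) ∪
      if 0 < rank Q ∧ rank Q ≤ rank P then {rem P Q} else ∅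
  have rank_lt (P Q : B[X]) : ∀ T ∈ children P Q, rank T < rank P ∧ rank T < rank Q := by
    intro T hT
    rcases Finset.mem_union.1 hT with hT | hT <;> split_ifs at hT with h <;>
      simp only [Finset.notMem_empty, Finset.mem_singleton] at hT <;> subst hT
    · obtain ⟨rfl, h0⟩ := h
      exact ⟨natDegree_map_derivative_lt h0, natDegree_map_derivative_lt h0⟩
    · have := (hrem P Q).natDegree_map_lt h.1
      exact ⟨this.trans_le h.2, this⟩
  obtain ⟨t, hst, ht⟩ := exists_finset_superset_closed rank children rank_lt s
  refine ⟨t, hst, fun P hP h0 => ht P hP P hP ?_, fun P hP Q hQ h0 hQP =>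
    ⟨rem P Q, ht P hP Q hQ ?_, hrem P Q⟩⟩
  · exact Finset.mem_union_left _ (by simp [rank, h0])
  · exact Finset.mem_union_right _ (by simp [rank, h0, hQP])

end PseudoDivision

/-! ### Transfer of sign conditions -/

section SignTransfer

open scoped Polynomial
open Set SignType Filter

variable {B R₁ R₂ : Type*} [CommRing B] [Field R₁] [Field R₂]

/-- The family of the pairs of images of polynomials in `t` under two homomorphisms. -/
def mapPairs (φ : B →+* R₁) (ψ : B →+* R₂) (t : Finset B[X]) : Set (R₁[X] × R₂[X]) :=
  (fun P : B[X] => (P.map φ, P.map ψ)) '' t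

variable {φ : B →+* R₁} {ψ : B →+* R₂} {t : Finset B[X]} {P Q T : B[X]} {b : R₁} {b' : R₂}

theorem exists_mem_mapPairs_root : (∃ Q ∈ mapPairs φ ψ t, Q.1 ≠ 0 ∧ Q.1.eval b = 0) ↔
    ∃ P ∈ t, P.map φ ≠ 0 ∧ (P.map φ).eval b = 0 :=
  exists_mem_image

variable [LinearOrder R₁] [LinearOrder R₂]

/-- Two homomorphisms to ordered fields under which each coefficient of `P` has the same sign. -/
def SameCoeffSigns (φ : B →+* R₁) (ψ : B →+* R₂) (P : B[X]) : Prop :=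
  ∀ i, sign (φ (P.coeff i)) = sign (ψ (P.coeff i))

theorem sameSigns_mapPairs : SameSigns (mapPairs φ ψ t) b b' ↔
    ∀ P ∈ t, sign ((P.map φ).eval b) = sign ((P.map ψ).eval b') :=
  forall_mem_image

theorem SameCoeffSigns.natDegree_map_eq (h : SameCoeffSigns φ ψ P) :
    (P.map φ).natDegree = (P.map ψ).natDegree := by
  have coeff_eq_zero_iff (i : ℕ) : (P.map φ).coeff i = 0 ↔ (P.map ψ).coeff i = 0 := by
    rw [Polynomial.coeff_map, Polynomial.coeff_map, ← sign_eq_zero_iff, h i, sign_eq_zero_iff]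
  refine le_antisymm ?_ ?_ <;> refine Polynomial.natDegree_le_iff_coeff_eq_zero.2 fun i hi => ?_
  · exact (coeff_eq_zero_iff i).2 (Polynomial.coeff_eq_zero_of_natDegree_lt hi)
  · exact (coeff_eq_zero_iff i).1 (Polynomial.coeff_eq_zero_of_natDegree_lt hi)

theorem SameCoeffSigns.sign_leadingCoeff_eq (h : SameCoeffSigns φ ψ P) :
    sign (P.map φ).leadingCoeff = sign (P.map ψ).leadingCoeff := by
  rw [Polynomial.leadingCoeff, Polynomial.leadingCoeff, Polynomial.coeff_map, Polynomial.coeff_map,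
    ← h.natDegree_map_eq, h]

theorem SameCoeffSigns.derivative_map_eq_zero (h : SameCoeffSigns φ ψ P)
    (h0 : (P.map φ).natDegree = 0) : ((P.map φ).derivative, (P.map ψ).derivative) = 0 :=
  Prod.ext (Polynomial.derivative_of_natDegree_zero h0)
    (Polynomial.derivative_of_natDegree_zero (h.natDegree_map_eq ▸ h0))

variable [IsStrictOrderedRing R₁] [IsStrictOrderedRing R₂]

theorem IsPseudoRem.sign_eval_eq (hT : IsPseudoRem φ P Q T) (hQ : SameCoeffSigns φ ψ Q)
    (hQ0 : Q.map φ ≠ 0) (hb : (Q.map φ).eval b = 0) (hb' : (Q.map ψ).eval b' = 0)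
    (h : sign ((T.map φ).eval b) = sign ((T.map ψ).eval b')) :
    sign ((P.map φ).eval b) = sign ((P.map ψ).eval b') := by
  obtain ⟨-, k, S, hPQ⟩ := hT
  rw [← pow_mul_eval_map_eq hPQ hb, ← pow_mul_eval_map_eq (hQ.natDegree_map_eq ▸ hPQ) hb', sign_mul,
    sign_mul, sign_pow, sign_pow, ← hQ, ← hQ.natDegree_map_eq] at h
  refine mul_left_cancel₀ (pow_ne_zero k (sign_ne_zero.2 ?_)) h
  rw [← Polynomial.coeff_map]
  exact Polynomial.leadingCoeff_ne_zero.2 hQ0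

theorem eventually_atTop_sameSigns (ht : ∀ P ∈ t, SameCoeffSigns φ ψ P) :
    ∀ᶠ b in atTop, ∀ᶠ b' in atTop, SameSigns (mapPairs φ ψ t) b b' := by
  filter_upwards [(Filter.eventually_all_finset t).2 fun P _ =>
    eventually_atTop_sign_eval_eq (P.map φ)] with b hb
  filter_upwards [(Filter.eventually_all_finset t).2 fun P _ =>
    eventually_atTop_sign_eval_eq (P.map ψ)] with b' hb'
  refine sameSigns_mapPairs.2 fun P hP => ?_
  rw [hb P hP, hb' P hP, (ht P hP).sign_leadingCoeff_eq]

theorem eventually_atBot_sameSigns (ht : ∀ P ∈ t, SameCoeffSigns φ ψ P) :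
    ∀ᶠ b in atBot, ∀ᶠ b' in atBot, SameSigns (mapPairs φ ψ t) b b' := by
  filter_upwards [(Filter.eventually_all_finset t).2 fun P _ =>
    eventually_atBot_sign_eval_eq (P.map φ)] with b hb
  filter_upwards [(Filter.eventually_all_finset t).2 fun P _ =>
    eventually_atBot_sign_eval_eq (P.map ψ)] with b' hb'
  refine sameSigns_mapPairs.2 fun P hP => ?_
  rw [hb P hP, hb' P hP, sign_mul, sign_mul, sign_pow, sign_pow, Left.sign_neg, Left.sign_neg,
    sign_one, sign_one, (ht P hP).natDegree_map_eq, (ht P hP).sign_leadingCoeff_eq]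

variable [PolyIVT R₁] [PolyIVT R₂]

theorem MatchingSubdivision.adjoin_of_isPseudoRemClosed [DecidableEq B[X]] {s : Finset B[X]}
    {u v : R₁} {u' v' : R₂} (ht : IsPseudoRemClosed φ t) (hst : s ⊆ t) (hPt : P ∈ t)
    (hsign : ∀ P ∈ t, SameCoeffSigns φ ψ P)
    (hsP : ∀ Q ∈ s, (Q.map φ).natDegree ≤ (P.map φ).natDegree)
    (hs : ∀ Q ∈ t, (Q.map φ).natDegree < (P.map φ).natDegree → Q ∈ s)
    (hu : SameSigns (mapPairs φ ψ t) u u') (hv : SameSigns (mapPairs φ ψ t) v v')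
    (h : MatchingSubdivision (mapPairs φ ψ s) u v u' v') :
    MatchingSubdivision (mapPairs φ ψ (insert P s)) u v u' v' := by
  rw [mapPairs, Finset.coe_insert, image_insert_eq]
  refine h.adjoin ?_ ?_ (sameSigns_mapPairs.1 hu P hPt) (sameSigns_mapPairs.1 hv P hPt)
  · rcases (P.map φ).natDegree.eq_zero_or_pos with h0 | h0
    · exact .inl ((hsign P hPt).derivative_map_eq_zero h0)
    · refine .inr ⟨P.derivative, ?_, by simp only [Polynomial.derivative_map]⟩
      exact hs _ (ht.derivative_mem P hPt h0) (natDegree_map_derivative_lt h0)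
  · rintro b b' hroot hbb'
    obtain ⟨Q, hQ, hQ0, hQb⟩ := exists_mem_mapPairs_root.1 hroot
    have hQpos := natDegree_pos_of_ne_zero_of_eval_eq_zero hQ0 hQb
    obtain ⟨T, hTt, hT⟩ := ht.exists_isPseudoRem P hPt Q (hst hQ) hQpos (hsP Q hQ)
    have hTs := hs T hTt ((hT.natDegree_map_lt hQpos).trans_le (hsP Q hQ))
    have hQb' : (Q.map ψ).eval b' = 0 := by
      have := sameSigns_mapPairs.1 hbb' Q hQ
      rwa [hQb, sign_zero, eq_comm, sign_eq_zero_iff] at this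
    exact hT.sign_eval_eq (hsign Q (hst hQ)) hQ0 hQb hQb' (sameSigns_mapPairs.1 hbb' T hTs)

theorem IsPseudoRemClosed.matchingSubdivision (ht : IsPseudoRemClosed φ t)
    (hsign : ∀ P ∈ t, SameCoeffSigns φ ψ P) {u v : R₁} {u' v' : R₂} (huv : u < v) (huv' : u' < v')
    (hu : SameSigns (mapPairs φ ψ t) u u') (hv : SameSigns (mapPairs φ ψ t) v v') :
    MatchingSubdivision (mapPairs φ ψ t) u v u' v' := by
  classical
  suffices key : ∀ s ⊆ t, (∀ Q ∈ t, ∀ P ∈ s, (Q.map φ).natDegree < (P.map φ).natDegree → Q ∈ s) →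
      MatchingSubdivision (mapPairs φ ψ s) u v u' v' from
    key t subset_rfl fun Q hQ _ _ _ => hQ
  intro s
  induction s using Finset.induction_on_max_value (fun P : B[X] => (P.map φ).natDegree) with
  | empty => exact fun _ _ => .cell huv huv' (by simp [SameSigns, mapPairs])
  | insert P s _ hmax ih =>
    intro hst hs
    rw [Finset.insert_subset_iff] at hst
    have mem_of_lt (Q) (hQ : Q ∈ t) (P') (hP' : P' ∈ insert P s)
        (hlt : (Q.map φ).natDegree < (P'.map φ).natDegree) : Q ∈ s := by
      refine (Finset.mem_insert.1 (hs Q hQ P' hP' hlt)).resolve_left ?_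
      rintro rfl
      rcases Finset.mem_insert.1 hP' with rfl | hP'
      · exact hlt.false
      · exact (hmax P' hP').not_gt hlt
    exact (ih hst.2 fun Q hQ P' hP' => mem_of_lt Q hQ P' (Finset.mem_insert_of_mem hP'))
      |>.adjoin_of_isPseudoRemClosed ht hst.2 hst.1 hsign hmax
        (fun Q hQ => mem_of_lt Q hQ P (Finset.mem_insert_self P s)) hu hv

theorem IsPseudoRemClosed.exists_sameSigns (ht : IsPseudoRemClosed φ t)
    (hsign : ∀ P ∈ t, SameCoeffSigns φ ψ P) (b : R₁) :
    (∃ P ∈ t, P.map φ ≠ 0 ∧ (P.map φ).eval b = 0) ∧ (∃ b', SameSigns (mapPairs φ ψ t) b b') ∨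
      ∃ s s', s < s' ∧ ∀ b' ∈ Ioo s s', SameSigns (mapPairs φ ψ t) b b' := by
  obtain ⟨u, hub, hu⟩ :=
    ((eventually_lt_atBot b).and (eventually_atBot_sameSigns hsign)).exists
  obtain ⟨v, hbv, hv⟩ :=
    ((eventually_gt_atTop b).and (eventually_atTop_sameSigns hsign)).exists
  obtain ⟨u', hu'⟩ := hu.exists
  obtain ⟨v', huv', hv'⟩ := ((eventually_gt_atTop u').and hv).exists
  have := (ht.matchingSubdivision hsign (hub.trans hbv) huv' hu' hv').exists_sameSigns ⟨hub, hbv⟩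
  rwa [exists_mem_mapPairs_root] at this

end SignTransfer

/-! ### Real points of finitely generated algebras -/

section RealPoints

open scoped Polynomial
open Set SignType

variable {B R : Type*} [CommRing B] [Field R]

theorem exists_mul_eq_C_of_map_eq_zero {φ : B[X] →+* R} {P e : B[X]}
    (hP : P.map (φ.comp Polynomial.C) ≠ 0) (hφP : φ P = 0) (he : φ e ≠ 0) :
    ∃ q c, φ (e * q) = φ (Polynomial.C c) ∧ φ (Polynomial.C c) ≠ 0 := by
  let κ := (φ.comp Polynomial.C).rangeRestrict
  have aeval_map (p y : B[X]) : Polynomial.aeval (φ y) (p.map κ) = φ (p.comp y) := by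
    rw [Polynomial.aeval_def, Polynomial.eval₂_map, Polynomial.comp, Polynomial.hom_eval₂]
    rfl
  have aeval_map_X (p : B[X]) : Polynomial.aeval (φ Polynomial.X) (p.map κ) = φ p := by
    rw [aeval_map, Polynomial.comp_X]
  have hX : IsAlgebraic (φ.comp Polynomial.C).range (φ Polynomial.X) := by
    refine ⟨P.map κ, fun h => hP ?_, by rw [aeval_map_X, hφP]⟩
    have := congrArg (Polynomial.map (φ.comp Polynomial.C).range.subtype) h
    rwa [Polynomial.map_map, Polynomial.map_zero] at this
  have hφe : IsAlgebraic (φ.comp Polynomial.C).range (φ e) :=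
    Algebra.isAlgebraic_adjoin_singleton_iff.2 hX _
      (aeval_map_X e ▸ Polynomial.aeval_mem_adjoin_singleton _ _)
  obtain ⟨p, hp0, hp⟩ :=
    hφe.exists_nonzero_coeff_and_aeval_eq_zero (mem_nonZeroDivisors_of_ne_zero he)
  obtain ⟨p, rfl⟩ := Polynomial.map_surjective κ (RingHom.rangeRestrict_surjective _) p
  rw [Polynomial.coeff_map] at hp0
  have hc : φ (Polynomial.C (p.coeff 0)) ≠ 0 := fun h => hp0 (Subtype.ext h)
  refine ⟨-p.divX.comp e, p.coeff 0, ?_, hc⟩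
  rw [aeval_map, ← p.divX_mul_X_add, Polynomial.add_comp, Polynomial.mul_comp, Polynomial.X_comp,
    Polynomial.C_comp, map_add, add_eq_zero_iff_neg_eq] at hp
  rw [← hp, ← map_neg, mul_neg, mul_comm]

theorem eval_map_comp_C (φ : B[X] →+* R) (P : B[X]) :
    (P.map (φ.comp Polynomial.C)).eval (φ Polynomial.X) = φ P := by
  rw [Polynomial.eval_map, ← Polynomial.hom_eval₂, Polynomial.eval₂_C_X]

variable [LinearOrder R]

/-- Enough real points near `φ`: some homomorphism to `ℝ` has the same signs as `φ` on a given
finite set and avoids the zeros of countably many elements that `φ` does not kill. -/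
def HasRealSpecializations (φ : B →+* R) : Prop :=
  ∀ (W : Finset B) (E : Set B), E.Countable → (∀ e ∈ E, φ e ≠ 0) →
    ∃ ψ : B →+* ℝ, (∀ w ∈ W, sign (ψ w) = sign (φ w)) ∧ ∀ e ∈ E, ψ e ≠ 0

theorem HasRealSpecializations.of_surjective {C : Type*} [CommRing C] [IsNoetherianRing B]
    {π : B →+* C} (hπ : Function.Surjective π) {φ : C →+* R}
    (h : HasRealSpecializations (φ.comp π)) : HasRealSpecializations φ := by
  classical
  intro W E hE hE0
  obtain ⟨G, hG⟩ : (RingHom.ker π).FG := IsNoetherian.noetherian _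
  obtain ⟨l, hl⟩ := hπ.hasRightInverse
  obtain ⟨ψ, hψW, hψE⟩ := h (W.image l ∪ G) (l '' E) (hE.image l)
    (forall_mem_image.2 fun e he => by rw [RingHom.comp_apply, hl e]; exact hE0 e he)
  have hker : RingHom.ker π ≤ RingHom.ker ψ := by
    rw [← hG, Ideal.span_le]
    intro q hq
    have hπq : π q = 0 := RingHom.mem_ker.1 (hG ▸ Ideal.subset_span hq)
    have := hψW q (Finset.mem_union_right _ hq)
    rwa [RingHom.comp_apply, hπq, map_zero, sign_zero, sign_eq_zero_iff] at this
  have lift_apply (c : C) : π.liftOfSurjective hπ ⟨ψ, hker⟩ c = ψ (l c) := by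
    conv_lhs => rw [← hl c]
    exact RingHom.liftOfSurjective_comp_apply π hπ ⟨ψ, hker⟩ (l c)
  refine ⟨π.liftOfSurjective hπ ⟨ψ, hker⟩, fun w hw => ?_, fun e he => ?_⟩
  · rw [lift_apply, hψW _ (Finset.mem_union_left _ (Finset.mem_image_of_mem l hw)),
      RingHom.comp_apply, hl w]
  · rw [lift_apply]
    exact hψE _ (mem_image_of_mem l he)

theorem exists_mem_Ioo_forall_eval_ne_zero {s s' : ℝ} (h : s < s') {E : Set ℝ[X]}
    (hE : E.Countable) (hE0 : ∀ P ∈ E, P ≠ 0) : ∃ b ∈ Ioo s s', ∀ P ∈ E, P.eval b ≠ 0 := by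
  have hroots : (⋃ P ∈ E, {b | P.IsRoot b}).Countable :=
    hE.biUnion fun P hP => (Polynomial.finite_setOfPred_isRoot (hE0 P hP)).countable
  obtain ⟨b, hb, hbE⟩ := not_subset.1 fun hsub : Ioo s s' ⊆ _ =>
    (Cardinal.Real.Ioo_countable_iff.1 (hroots.mono hsub)).not_gt h
  exact ⟨b, hb, fun P hP hPb => hbE (mem_biUnion hP hPb)⟩

theorem HasRealSpecializations.exists_sameCoeffSigns {φ : B →+* R} (h : HasRealSpecializations φ)
    (t : Finset B[X]) {E : Set B} (hE : E.Countable) (hE0 : ∀ e ∈ E, φ e ≠ 0) :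
    ∃ ψ : B →+* ℝ, (∀ P ∈ t, SameCoeffSigns φ ψ P) ∧ ∀ e ∈ E, ψ e ≠ 0 := by
  classical
  obtain ⟨ψ, hψ, hψE⟩ := h (t.biUnion fun P => P.coeffs) E hE hE0
  refine ⟨ψ, fun P hP i => ?_, hψE⟩
  by_cases h0 : P.coeff i = 0
  · rw [h0, map_zero φ, map_zero ψ, sign_zero, sign_zero]
  · exact (hψ _ (Finset.mem_biUnion.2 ⟨P, hP, Polynomial.coeff_mem_coeffs h0⟩)).symm

variable [IsStrictOrderedRing R]

theorem sign_ringHom_real (φ : ℝ →+* R) (r : ℝ) : sign (φ r) = sign r := by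
  have hpos {r : ℝ} (hr : 0 < r) : 0 < φ r := by
    rw [← Real.mul_self_sqrt hr.le, map_mul]
    exact mul_self_pos.2 ((map_ne_zero φ).2 (Real.sqrt_pos.2 hr).ne')
  rcases lt_trichotomy r 0 with h | rfl | h
  · have := hpos (neg_pos.2 h)
    rw [map_neg, neg_pos] at this
    rw [sign_neg h, sign_neg this]
  · rw [map_zero, sign_zero, sign_zero]
  · rw [sign_pos h, sign_pos (hpos h)]

theorem hasRealSpecializations_real (φ : ℝ →+* R) : HasRealSpecializations φ := fun _ _ _ hE0 =>
  ⟨RingHom.id ℝ, fun w _ => (sign_ringHom_real φ w).symm, fun e he => ne_zero_of_map (hE0 e he)⟩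

variable [PolyIVT R]

theorem IsPseudoRemClosed.exists_eval_ne_zero_of_root {φ : B[X] →+* R} {t : Finset B[X]}
    (ht : IsPseudoRemClosed (φ.comp Polynomial.C) t)
    (hker : RingHom.ker φ ≤ Ideal.span {P ∈ (t : Set B[X]) | φ P = 0})
    (hroot : ∃ P ∈ t, P.map (φ.comp Polynomial.C) ≠ 0 ∧ φ P = 0)
    (h : HasRealSpecializations (φ.comp Polynomial.C)) {E : Set B[X]} (hE : E.Countable)
    (hE0 : ∀ e ∈ E, φ e ≠ 0) : ∃ (ψ : B →+* ℝ) (b' : ℝ),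
      SameSigns (mapPairs (φ.comp Polynomial.C) ψ t) (φ Polynomial.X) b' ∧
        ∀ e ∈ E, (e.map ψ).eval b' ≠ 0 := by
  have exists_mul_eq (e : E) :=
    let ⟨_, _, hP, hφP⟩ := hroot; exists_mul_eq_C_of_map_eq_zero hP hφP (hE0 e e.2)
  have : Countable E := hE
  choose q c hqc hc using exists_mul_eq
  obtain ⟨ψ, hψ, hψE⟩ := h.exists_sameCoeffSigns t (countable_range c) (forall_mem_range.2 hc)
  obtain ⟨b', hb'⟩ : ∃ b', SameSigns (mapPairs (φ.comp Polynomial.C) ψ t) (φ Polynomial.X) b' := by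
    obtain ⟨-, h⟩ | ⟨s, s', hss', h⟩ := ht.exists_sameSigns hψ (φ Polynomial.X)
    · exact h
    · exact (nonempty_Ioo.2 hss').imp h
  have hker' : RingHom.ker φ ≤ RingHom.ker (Polynomial.eval₂RingHom ψ b') := by
    refine hker.trans (Ideal.span_le.2 fun P hP => ?_)
    have := sameSigns_mapPairs.1 hb' P hP.1
    rw [eval_map_comp_C, hP.2, sign_zero, eq_comm, sign_eq_zero_iff, Polynomial.eval_map] at this
    exact this
  refine ⟨ψ, b', hb', fun e he h0 => hψE _ (mem_range_self ⟨e, he⟩) ?_⟩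
  have := hker' ((RingHom.sub_mem_ker_iff _).2 (hqc ⟨e, he⟩))
  rw [RingHom.sub_mem_ker_iff, map_mul, Polynomial.coe_eval₂RingHom, ← Polynomial.eval_map, h0,
    zero_mul, Polynomial.eval₂_C] at this
  exact this.symm

theorem IsPseudoRemClosed.exists_eval_ne_zero_of_no_root {φ : B[X] →+* R} {t : Finset B[X]}
    (ht : IsPseudoRemClosed (φ.comp Polynomial.C) t)
    (hroot : ¬ ∃ P ∈ t, P.map (φ.comp Polynomial.C) ≠ 0 ∧ φ P = 0)
    (h : HasRealSpecializations (φ.comp Polynomial.C)) {E : Set B[X]} (hE : E.Countable)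
    (hE0 : ∀ e ∈ E, φ e ≠ 0) : ∃ (ψ : B →+* ℝ) (b' : ℝ),
      SameSigns (mapPairs (φ.comp Polynomial.C) ψ t) (φ Polynomial.X) b' ∧
        ∀ e ∈ E, (e.map ψ).eval b' ≠ 0 := by
  have exists_coeff_ne_zero (e : E) : ∃ i, φ (Polynomial.C ((e : B[X]).coeff i)) ≠ 0 := by
    by_contra! h0
    refine hE0 e e.2 ?_
    rw [← eval_map_comp_C, show (e : B[X]).map (φ.comp Polynomial.C) = 0 from
      Polynomial.ext fun i => (Polynomial.coeff_map _ _).trans (h0 i), Polynomial.eval_zero]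
  choose i hi using exists_coeff_ne_zero
  have : Countable E := hE
  obtain ⟨ψ, hψ, hψE⟩ := h.exists_sameCoeffSigns t (countable_range fun e : E => e.1.coeff (i e))
    (forall_mem_range.2 hi)
  obtain ⟨s, s', hss', hsign⟩ := (ht.exists_sameSigns hψ (φ Polynomial.X)).resolve_left
    fun ⟨⟨P, hPt, hP, hPX⟩, _⟩ => hroot ⟨P, hPt, hP, by rwa [eval_map_comp_C] at hPX⟩
  obtain ⟨b', hb', hE'⟩ := exists_mem_Ioo_forall_eval_ne_zero hss' (hE.image (Polynomial.map ψ))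
    (forall_mem_image.2 fun e he h0 => hψE _ (mem_range_self ⟨e, he⟩) (by
      rw [← Polynomial.coeff_map, h0, Polynomial.coeff_zero]))
  exact ⟨ψ, b', hsign b' hb', fun e he => hE' _ (mem_image_of_mem _ he)⟩

theorem HasRealSpecializations.polynomial [IsNoetherianRing B] {φ : B[X] →+* R}
    (h : HasRealSpecializations (φ.comp Polynomial.C)) : HasRealSpecializations φ := by
  classical
  intro W E hE hE0
  obtain ⟨G, hG⟩ : (RingHom.ker φ).FG := IsNoetherian.noetherian _
  obtain ⟨t, hWt, ht⟩ := exists_isPseudoRemClosed (φ.comp Polynomial.C) (W ∪ G)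
  obtain ⟨ψ, b', hsign, hψE⟩ : ∃ (ψ : B →+* ℝ) (b' : ℝ),
      SameSigns (mapPairs (φ.comp Polynomial.C) ψ t) (φ Polynomial.X) b' ∧
        ∀ e ∈ E, (e.map ψ).eval b' ≠ 0 := by
    by_cases hroot : ∃ P ∈ t, P.map (φ.comp Polynomial.C) ≠ 0 ∧ φ P = 0
    · refine ht.exists_eval_ne_zero_of_root ?_ hroot h hE hE0
      rw [← hG]
      exact Ideal.span_mono fun P hP => ⟨hWt (Finset.mem_union_right _ hP),
        RingHom.mem_ker.1 (hG ▸ Ideal.subset_span hP)⟩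
    · exact ht.exists_eval_ne_zero_of_no_root hroot h hE hE0
  refine ⟨Polynomial.eval₂RingHom ψ b', fun w hw => ?_, fun e he => ?_⟩
  · rw [Polynomial.coe_eval₂RingHom, ← Polynomial.eval_map, ← eval_map_comp_C φ]
    exact (sameSigns_mapPairs.1 hsign w (hWt (Finset.mem_union_left _ hw))).symm
  · rw [Polynomial.coe_eval₂RingHom, ← Polynomial.eval_map]
    exact hψE e he

theorem hasRealSpecializations_mvPolynomial :
    ∀ {n : ℕ} (φ : MvPolynomial (Fin n) ℝ →+* R), HasRealSpecializations φ
  | 0, _ => .of_surjective (π := ((isEmptyRingEquiv ℝ (Fin 0)).symm : ℝ →+* _))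
      (isEmptyRingEquiv ℝ (Fin 0)).symm.surjective (hasRealSpecializations_real _)
  | n + 1, _ => .of_surjective (π := ((finSuccEquiv ℝ n).symm : (MvPolynomial (Fin n) ℝ)[X] →+* _))
      (finSuccEquiv ℝ n).symm.surjective
      (.polynomial (hasRealSpecializations_mvPolynomial _))

theorem hasRealSpecializations_of_finiteType {A : Type*} [CommRing A] [Algebra ℝ A]
    [Algebra.FiniteType ℝ A] (φ : A →+* R) : HasRealSpecializations φ := by
  obtain ⟨n, π, hπ⟩ := Algebra.FiniteType.iff_quotient_mvPolynomial''.1 ‹Algebra.FiniteType ℝ A›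
  exact .of_surjective (π := (π : MvPolynomial (Fin n) ℝ →+* A)) hπ
    (hasRealSpecializations_mvPolynomial _)

theorem exists_algHom_real_sign_eq {A : Type*} [CommRing A] [Algebra ℝ A]
    [Algebra.FiniteType ℝ A] (φ : A →+* R) (W : Finset A) {E : Set A} (hE : E.Countable)
    (hE0 : ∀ e ∈ E, φ e ≠ 0) :
    ∃ χ : A →ₐ[ℝ] ℝ, (∀ w ∈ W, sign (χ w) = sign (φ w)) ∧ ∀ e ∈ E, χ e ≠ 0 := by
  obtain ⟨ψ, hψ⟩ := hasRealSpecializations_of_finiteType φ W E hE hE0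
  refine ⟨⟨ψ, fun r => ?_⟩, hψ⟩
  exact DFunLike.congr_fun (Subsingleton.elim (ψ.comp (algebraMap ℝ A)) (RingHom.id ℝ)) r

end RealPoints

/-! ### Finitely generated preorderings -/

section Preordering

variable {A : Type*} [CommRing A]

/-- The preordering generated by `G`, as a subsemiring. -/
def preorderingClosure (G : Set A) : Subsemiring A :=
  Subsemiring.closure ({a | IsSquare a} ∪ G)

variable {G : Set A}

theorem subset_preorderingClosure : G ⊆ preorderingClosure G :=
  Set.subset_union_right.trans Subsemiring.subset_closure

theorem mem_preorderingClosure_of_isSquare {a : A} (ha : IsSquare a) : a ∈ preorderingClosure G :=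
  Subsemiring.subset_closure (.inl ha)

theorem mem_preorderingClosure_of_isSumSq {a : A} (ha : IsSumSq a) : a ∈ preorderingClosure G := by
  induction ha with
  | zero => exact zero_mem _
  | sq_add a _ ih => exact add_mem (mem_preorderingClosure_of_isSquare (.mul_self a)) ih

theorem map_mem_preorderingClosure {B : Type*} [CommRing B] (φ : A →+* B) {a : A}
    (ha : a ∈ preorderingClosure G) : φ a ∈ preorderingClosure (φ '' G) := by
  have : (preorderingClosure G).map φ ≤ preorderingClosure (φ '' G) := by
    rw [preorderingClosure, RingHom.map_closureS, Set.image_union]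
    refine Subsemiring.closure_mono (Set.union_subset_union_left _ ?_)
    rintro _ ⟨s, hs, rfl⟩
    exact hs.map φ
  exact this ⟨a, ha, rfl⟩

theorem exists_eq_sub_mul_of_mem_preorderingClosure_insert_neg {f b : A}
    (hb : b ∈ preorderingClosure (insert (-f) G)) :
    ∃ s ∈ preorderingClosure G, ∃ t ∈ preorderingClosure G, b = t - f * s := by
  induction hb using Subsemiring.closure_induction with
  | mem b hb =>
    obtain hb | rfl | hb := hb
    · exact ⟨0, zero_mem _, b, mem_preorderingClosure_of_isSquare hb, by ring⟩
    · exact ⟨1, one_mem _, 0, zero_mem _, by ring⟩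
    · exact ⟨0, zero_mem _, b, subset_preorderingClosure hb, by ring⟩
  | zero => exact ⟨0, zero_mem _, 0, zero_mem _, by ring⟩
  | one => exact ⟨0, zero_mem _, 1, one_mem _, by ring⟩
  | add _ _ _ _ ih ih' =>
    obtain ⟨s, hs, t, ht, rfl⟩ := ih
    obtain ⟨s', hs', t', ht', rfl⟩ := ih'
    exact ⟨s + s', add_mem hs hs', t + t', add_mem ht ht', by ring⟩
  | mul _ _ _ _ ih ih' =>
    obtain ⟨s, hs, t, ht, rfl⟩ := ih
    obtain ⟨s', hs', t', ht', rfl⟩ := ih'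
    refine ⟨s * t' + t * s', add_mem (mul_mem hs ht') (mul_mem ht hs'),
      t * t' + f ^ 2 * (s * s'), add_mem (mul_mem ht ht') (mul_mem ?_ (mul_mem hs hs')), by ring⟩
    exact mem_preorderingClosure_of_isSquare (.sq f)

section GenPreordering

variable {m : ℕ} {g : Fin m → A} {u v : A}

theorem one_mem_genPreordering : 1 ∈ genPreordering g := by
  classical
  refine ⟨fun ν => if ν = fun _ => false then 1 else 0, fun ν => ?_, ?_⟩
  · dsimp only
    split_ifs
    exacts [IsSquare.one.isSumSq, .zero]
  · simp [ite_mul, Finset.sum_ite_eq']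

theorem zero_mem_genPreordering : 0 ∈ genPreordering g :=
  ⟨fun _ => 0, fun _ => .zero, by simp⟩

theorem add_mem_genPreordering (hu : u ∈ genPreordering g) (hv : v ∈ genPreordering g) :
    u + v ∈ genPreordering g := by
  obtain ⟨σ, hσ, rfl⟩ := hu
  obtain ⟨τ, hτ, rfl⟩ := hv
  refine ⟨fun ν => σ ν + τ ν, fun ν => (hσ ν).add (hτ ν), ?_⟩
  simp only [add_mul, Finset.sum_add_distrib]

theorem mul_mem_genPreordering_of_isSumSq (hu : IsSumSq u) (hv : v ∈ genPreordering g) :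
    u * v ∈ genPreordering g := by
  obtain ⟨σ, hσ, rfl⟩ := hv
  refine ⟨fun ν => u * σ ν, fun ν => hu.mul (hσ ν), ?_⟩
  simp only [Finset.mul_sum, mul_assoc]

theorem mul_prod_ite_update_not (j : Fin m) (ν : Fin m → Bool) :
    g j * ∏ i, (if Function.update ν j (!ν j) i then g i else 1) =
      (if ν j then 1 else g j ^ 2) * ∏ i, (if ν i then g i else 1) := by
  have hrest : ∏ i ∈ Finset.univ.erase j, (if Function.update ν j (!ν j) i then g i else 1) =
      ∏ i ∈ Finset.univ.erase j, (if ν i then g i else 1) :=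
    Finset.prod_congr rfl fun i hi => by rw [Function.update_of_ne (Finset.ne_of_mem_erase hi)]
  rw [← Finset.mul_prod_erase _ _ (Finset.mem_univ j), hrest,
    ← Finset.mul_prod_erase Finset.univ (fun i => if ν i then g i else 1) (Finset.mem_univ j),
    Function.update_self]
  cases ν j <;> simp [sq, mul_assoc]

theorem generator_mul_mem_genPreordering (j : Fin m) (hu : u ∈ genPreordering g) :
    g j * u ∈ genPreordering g := by
  obtain ⟨σ, hσ, rfl⟩ := hu
  let flip (ν : Fin m → Bool) : Fin m → Bool := Function.update ν j (!ν j)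
  have flip_involutive : Function.Involutive flip := fun ν => by simp [flip]
  refine ⟨fun ν => σ (flip ν) * if ν j then 1 else g j ^ 2, fun ν => ?_, ?_⟩
  · refine (hσ _).mul ?_
    split_ifs
    exacts [IsSquare.one.isSumSq, (IsSquare.sq (g j)).isSumSq]
  · rw [← flip_involutive.bijective.sum_comp, Finset.mul_sum]
    refine Finset.sum_congr rfl fun ν _ => ?_
    rw [mul_left_comm, mul_prod_ite_update_not, mul_assoc]

theorem mul_mem_genPreordering (hu : u ∈ preorderingClosure (Set.range g))
    (hv : v ∈ genPreordering g) : u * v ∈ genPreordering g := by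
  induction hu using Subsemiring.closure_induction generalizing v with
  | mem u hu =>
    rcases hu with hu | ⟨j, rfl⟩
    · exact mul_mem_genPreordering_of_isSumSq hu.isSumSq hv
    · exact generator_mul_mem_genPreordering j hv
  | zero => rw [zero_mul]; exact zero_mem_genPreordering
  | one => rwa [one_mul]
  | add _ _ _ _ ih ih' => rw [add_mul]; exact add_mem_genPreordering (ih hv) (ih' hv)
  | mul _ _ _ _ ih ih' => rw [mul_assoc]; exact ih (ih' hv)

theorem genPreordering_eq_preorderingClosure :
    genPreordering g = preorderingClosure (Set.range g) := by
  refine Set.Subset.antisymm ?_ fun u hu => ?_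
  · rintro _ ⟨σ, hσ, rfl⟩
    refine sum_mem fun ν _ => mul_mem (mem_preorderingClosure_of_isSumSq (hσ ν)) ?_
    refine prod_mem fun j _ => ?_
    split_ifs
    exacts [subset_preorderingClosure ⟨j, rfl⟩, one_mem _]
  · rw [← mul_one u]
    exact mul_mem_genPreordering hu one_mem_genPreordering

end GenPreordering

end Preordering

/-! ### The strict Positivstellensatz -/

section Positivstellensatz

variable {A : Type*} [CommRing A] [Algebra ℝ A]

/-- A character, bundled as an `ℝ`-algebra homomorphism. -/
def charHom (χ : CharSet A) : A →ₐ[ℝ] ℝ where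
  toFun := χ
  map_one' := by simpa using χ.2.2.2 1
  map_mul' := χ.2.2.1
  map_zero' := by simpa using χ.2.2.2 0
  map_add' := χ.2.1
  commutes' := χ.2.2.2

/-- The character underlying an `ℝ`-algebra homomorphism. -/
def charOfAlgHom (φ : A →ₐ[ℝ] ℝ) : CharSet A :=
  ⟨φ, map_add φ, map_mul φ, φ.commutes⟩

/-- Krivine's argument: without such a certificate the preordering generated by `-f` and `g` omits
`-1`, so it is nonnegative at a real closed point, and hence at a real point of `K` with `f ≤ 0`. -/
theorem exists_mul_eq_one_add_of_pos [Algebra.FiniteType ℝ A] {m : ℕ} {g : Fin m → A} {f : A}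
    (hf : ∀ χ ∈ KSA g, 0 < charHom χ f) :
    ∃ s ∈ preorderingClosure (Set.range g), ∃ t ∈ preorderingClosure (Set.range g),
      f * s = 1 + t := by
  classical
  by_cases hneg : -1 ∈ preorderingClosure (insert (-f) (Set.range g))
  · obtain ⟨s, hs, t, ht, h⟩ := exists_eq_sub_mul_of_mem_preorderingClosure_insert_neg hneg
    exact ⟨s, hs, t, ht, by linear_combination h⟩
  exfalso
  let P : RingPreordering A := ⟨preorderingClosure (insert (-f) (Set.range g)),
    mem_preorderingClosure_of_isSquare, hneg⟩
  have mem_P {a : A} (ha : a ∈ insert (-f) (Set.range g)) : a ∈ P := subset_preorderingClosure ha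
  obtain ⟨R, _, _, _, _, φ, hφ⟩ := exists_ringHom_polyIVT P
  obtain ⟨χ, hχ, -⟩ := exists_algHom_real_sign_eq φ (insert f (Finset.univ.image g))
    Set.countable_empty fun _ he => he.elim
  have hχK : charOfAlgHom χ ∈ KSA g := fun j => by
    have hφg : 0 ≤ φ (g j) := hφ _ (mem_P (.inr ⟨j, rfl⟩))
    rwa [← sign_nonneg_iff, ← hχ (g j) (by simp), sign_nonneg_iff] at hφg
  have hχf : χ f ≤ 0 := by
    have hφf : 0 ≤ φ (-f) := hφ _ (mem_P (.inl rfl))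
    rwa [map_neg, neg_nonneg, ← sign_nonpos_iff, ← hχ f (by simp), sign_nonpos_iff] at hφf
  exact hχf.not_gt (hf _ hχK)

end Positivstellensatz

/-! ### Positive functionals -/

section Functional

open Filter Topology

variable {E : Type*} [CommRing E] [Algebra ℝ E] {L : E →ₗ[ℝ] ℝ}

theorem sq_map_le_of_nonneg_sq (hL : ∀ e, 0 ≤ L (e ^ 2)) (b : E) : L b ^ 2 ≤ L 1 * L (b ^ 2) := by
  have hquad (t : ℝ) : 0 ≤ L 1 * (t * t) + 2 * L b * t + L (b ^ 2) := by
    have hsq : (b + t • (1 : E)) ^ 2 = (t * t) • 1 + (2 * t) • b + b ^ 2 := by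
      simp only [Algebra.smul_def, map_mul, mul_one, map_ofNat]
      ring
    have := hL (b + t • 1)
    rw [hsq] at this
    simp only [map_add, map_smul, smul_eq_mul] at this
    linarith
  have := discrim_le_zero hquad
  rw [discrim] at this
  linarith

theorem pow_mul_map_one_le (hL : ∀ e, 0 ≤ L (e ^ 2)) {r : ℝ} (hr : 0 ≤ r) {b : E}
    (hb : r * L 1 ≤ |L b|) (k : ℕ) : r ^ 2 ^ k * L 1 ≤ |L (b ^ 2 ^ k)| := by
  have hL1 : 0 ≤ L 1 := by simpa using hL 1
  rcases hL1.eq_or_lt with h0 | h0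
  · rw [← h0, mul_zero]
    exact abs_nonneg _
  induction k with
  | zero => simpa using hb
  | succ k ih =>
    refine le_trans (le_of_mul_le_mul_left ?_ h0) (le_abs_self _)
    calc L 1 * (r ^ 2 ^ (k + 1) * L 1) = (r ^ 2 ^ k * L 1) ^ 2 := by ring
      _ ≤ |L (b ^ 2 ^ k)| ^ 2 := by gcongr
      _ = L (b ^ 2 ^ k) ^ 2 := sq_abs _
      _ ≤ L 1 * L ((b ^ 2 ^ k) ^ 2) := sq_map_le_of_nonneg_sq hL _
      _ = L 1 * L (b ^ 2 ^ (k + 1)) := by rw [← pow_mul, pow_succ]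

theorem abs_map_le_of_map_pow_le (hL : ∀ e, 0 ≤ L (e ^ 2)) {b : E} {c M : ℝ} (hc : 0 ≤ c)
    (hb : ∀ j, L (b ^ (2 * j)) ≤ (c ^ 2) ^ j * M) : |L b| ≤ c * L 1 := by
  by_contra! hlt
  have hL1 : 0 < L 1 := by
    refine (by simpa using hL 1 : 0 ≤ L 1).lt_of_ne fun h0 => ?_
    have := sq_map_le_of_nonneg_sq hL b
    rw [← h0, zero_mul] at this
    rw [← h0, mul_zero, abs_pos] at hlt
    exact (pow_pos (abs_pos.2 hlt) 2).not_ge (by rwa [sq_abs])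
  set r := |L b| / L 1
  have hcr : c < r := (lt_div_iff₀ hL1).2 hlt
  have hr0 : 0 < r := hc.trans_lt hcr
  have hle (k : ℕ) : L 1 ≤ ((c / r) ^ 2) ^ 2 ^ k * M := by
    have hlow := pow_mul_map_one_le hL hr0.le (div_mul_cancel₀ _ hL1.ne').le (k + 1)
    have hup := hb (2 ^ k)
    rw [pow_succ, mul_comm (2 ^ k), abs_of_nonneg (by rw [mul_comm, pow_mul]; exact hL _)] at hlow
    rw [div_pow, div_pow, div_mul_eq_mul_div, le_div_iff₀ (by positivity), mul_comm, ← pow_mul]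
    exact hlow.trans hup
  have hlim : Tendsto (fun k : ℕ => ((c / r) ^ 2) ^ 2 ^ k * M) atTop (𝓝 (0 * M)) := by
    refine Tendsto.mul_const M ((tendsto_pow_atTop_nhds_zero_of_lt_one (sq_nonneg _) ?_).comp
      (tendsto_pow_atTop_atTop_of_one_lt one_lt_two))
    exact pow_lt_one₀ (by positivity) ((div_lt_one hr0).2 hcr) two_ne_zero
  rw [zero_mul] at hlim
  exact (ge_of_tendsto' hlim hle).not_gt hL1

theorem le_pow_mul_of_add_succ_le {a y : ℕ → ℝ} {q : ℝ} (ha : ∀ j, 0 ≤ a j) (hy : ∀ j, 0 ≤ y j)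
    (hq : 0 ≤ q) (h : ∀ j, y j + a (j + 1) ≤ q * a j) (j : ℕ) : y j ≤ q ^ j * (q * a 0) := by
  have hbound (j : ℕ) : a j ≤ q ^ j * a 0 := by
    induction j with
    | zero => simp
    | succ j ih =>
      calc a (j + 1) ≤ q * a j := by linarith [h j, hy j]
        _ ≤ q * (q ^ j * a 0) := by gcongr
        _ = q ^ (j + 1) * a 0 := by ring
  calc y j ≤ q * a j := by linarith [h j, ha (j + 1)]
    _ ≤ q * (q ^ j * a 0) := by gcongr; exact hbound j
    _ = q ^ j * (q * a 0) := by ring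

theorem abs_map_le_of_mul_eq_one_add (hL : ∀ e, 0 ≤ L (e ^ 2)) {b s t : E} {c : ℝ} (hc : 0 ≤ c)
    (hs : ∀ e, 0 ≤ L (s * e ^ 2)) (ht : ∀ e, 0 ≤ L (t * e ^ 2))
    (h : (algebraMap ℝ E (c ^ 2) - b ^ 2) * s = 1 + t) : |L b| ≤ c * L 1 := by
  have hstep (j : ℕ) : L (b ^ (2 * j)) + L (s * (b ^ (j + 1)) ^ 2) ≤
      c ^ 2 * L (s * (b ^ j) ^ 2) := by
    have key : b ^ (2 * j) + t * (b ^ j) ^ 2 + s * (b ^ (j + 1)) ^ 2 =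
        c ^ 2 • (s * (b ^ j) ^ 2) := by
      rw [Algebra.smul_def]
      linear_combination (-b ^ (2 * j)) * h
    have := congrArg L key
    rw [map_add, map_add, map_smul, smul_eq_mul] at this
    linarith [ht (b ^ j)]
  refine abs_map_le_of_map_pow_le hL hc
    (le_pow_mul_of_add_succ_le (a := fun j => L (s * (b ^ j) ^ 2)) (fun j => hs _) (fun j => ?_)
      (sq_nonneg c) hstep)
  rw [mul_comm, pow_mul]
  exact hL _

variable {A : Type*} [CommRing A] [Algebra ℝ A] {m : ℕ} {g : Fin m → A}

theorem abs_map_le_of_sq_le_on_KSA [Algebra.FiniteType ℝ A] {ι : A →ₐ[ℝ] E}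
    (hL : ∀ t ∈ preorderingClosure (Set.range g), ∀ e, 0 ≤ L (ι t * e ^ 2)) {a q : A} {v : E}
    (hv : ι q * v = 1) {c : ℝ} (hc : 0 ≤ c) (hq : ∀ χ ∈ KSA g, charHom χ q ≠ 0)
    (ha : ∀ χ ∈ KSA g, charHom χ a ^ 2 ≤ c ^ 2 * charHom χ q ^ 2) :
    |L (ι a * v)| ≤ c * L 1 := by
  have hlt (c' : ℝ) (hcc' : c < c') : |L (ι a * v)| ≤ c' * L 1 := by
    obtain ⟨s, hs, t, ht, hst⟩ := exists_mul_eq_one_add_of_pos (g := g)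
        (f := algebraMap ℝ A (c' ^ 2) * q ^ 2 - a ^ 2) fun χ hχ => by
      have := hq χ hχ
      simp only [map_sub, map_mul, map_pow, AlgHom.commutes, sub_pos]
      refine (ha χ hχ).trans_lt ?_
      gcongr
      exact hcc'
    refine abs_map_le_of_mul_eq_one_add (by simpa using hL 1 (one_mem _)) (hc.trans hcc'.le)
      (s := ι s * ι q ^ 2) (fun e => ?_) (hL t ht) ?_
    · rw [mul_assoc, ← mul_pow]
      exact hL s hs _
    · have := congrArg ι hst
      simp only [map_sub, map_mul, map_pow, map_add, map_one, AlgHom.commutes] at this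
      rw [← this, map_pow]
      linear_combination (-(ι a ^ 2 * ι s) * (ι q * v + 1)) * hv
  exact ge_of_tendsto (continuousWithinAt_id.mul_const (L 1))
    (eventually_nhdsWithin_of_forall hlt : ∀ᶠ c' in 𝓝[>] c, _)

theorem one_le_charHom {p : A} (hp : p - 1 ∈ PosA (KSA g)) {χ : CharSet A} (hχ : χ ∈ KSA g) :
    1 ≤ charHom χ p := by
  have : 0 ≤ charHom χ (p - 1) := hp χ hχ
  rwa [map_sub, map_one, sub_nonneg] at this

theorem map_sq_mul_map_nonneg_of_mem_preorderingClosure {ι : A →ₐ[ℝ] E}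
    (hL : ∀ t ∈ genPreordering (fun j => ι (g j)), 0 ≤ L t) {t : A}
    (ht : t ∈ preorderingClosure (Set.range g)) (h : E) : 0 ≤ L (h ^ 2 * ι t) := by
  have hιt := map_mem_preorderingClosure (ι : A →+* E) ht
  rw [← Set.range_comp] at hιt
  refine hL _ ?_
  rw [genPreordering_eq_preorderingClosure]
  exact mul_mem (mem_preorderingClosure_of_isSquare (IsSquare.sq h)) hιt

variable {n : ℕ} {x : Fin n → A} {p : A} {k : ℕ}

theorem exists_abs_charHom_le_mul_pow (hgen : Algebra.adjoin ℝ (Set.range x) = ⊤)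
    (hp : p - 1 ∈ PosA (KSA g)) (hgrow : (k : A) * p - ∑ i, x i ^ 2 ∈ PosA (KSA g)) (f : A) :
    ∃ (c : ℝ) (N : ℕ), 0 ≤ c ∧ ∀ χ ∈ KSA g, |charHom χ f| ≤ c * charHom χ p ^ N := by
  have hf : f ∈ Algebra.adjoin ℝ (Set.range x) := hgen ▸ trivial
  induction hf using Algebra.adjoin_induction with
  | mem y hy =>
    obtain ⟨i, rfl⟩ := hy
    refine ⟨k + 1, 1, by positivity, fun χ hχ => ?_⟩
    have hsum : 0 ≤ charHom χ (k * p - ∑ i, x i ^ 2) := hgrow χ hχ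
    simp only [map_sub, map_mul, map_natCast, map_sum, map_pow] at hsum
    have hi : charHom χ (x i) ^ 2 ≤ ∑ i, charHom χ (x i) ^ 2 :=
      Finset.single_le_sum (fun i _ => sq_nonneg (charHom χ (x i))) (Finset.mem_univ i)
    rw [abs_le]
    constructor <;> nlinarith [one_le_charHom hp hχ]
  | algebraMap r => exact ⟨|r|, 0, abs_nonneg r, fun χ _ => by simp [AlgHom.commutes]⟩
  | add y z _ _ ihy ihz =>
    obtain ⟨c, N, hc, hy⟩ := ihy
    obtain ⟨c', N', hc', hz⟩ := ihz
    refine ⟨c + c', N + N', by positivity, fun χ hχ => ?_⟩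
    have hp1 := one_le_charHom hp hχ
    calc |charHom χ (y + z)| ≤ |charHom χ y| + |charHom χ z| := by
          rw [map_add]; exact abs_add_le _ _
      _ ≤ c * charHom χ p ^ N + c' * charHom χ p ^ N' := add_le_add (hy χ hχ) (hz χ hχ)
      _ ≤ c * charHom χ p ^ (N + N') + c' * charHom χ p ^ (N + N') := by
        gcongr
        exacts [le_self_add, le_add_self]
      _ = (c + c') * charHom χ p ^ (N + N') := by ring
  | mul y z _ _ ihy ihz =>
    obtain ⟨c, N, hc, hy⟩ := ihy
    obtain ⟨c', N', hc', hz⟩ := ihz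
    refine ⟨c * c', N + N', by positivity, fun χ hχ => ?_⟩
    calc |charHom χ (y * z)| = |charHom χ y| * |charHom χ z| := by rw [map_mul, abs_mul]
      _ ≤ c * charHom χ p ^ N * (c' * charHom χ p ^ N') :=
        mul_le_mul (hy χ hχ) (hz χ hχ) (abs_nonneg _) ((abs_nonneg _).trans (hy χ hχ))
      _ = c * c' * charHom χ p ^ (N + N') := by ring

theorem finiteType_of_adjoin_range_eq_top {R B ι : Type*} [CommSemiring R] [Semiring B]
    [Algebra R B] [Finite ι] {y : ι → B} (hy : Algebra.adjoin R (Set.range y) = ⊤) :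
    Algebra.FiniteType R B :=
  ⟨⟨(Set.finite_range y).toFinset, by simpa using hy⟩⟩

/-- The bounds `0 ≤ f ≤ 2 c p²ᴺ`, centred so that they become a bound of a square. -/
theorem exists_charHom_sub_sq_le (hgen : Algebra.adjoin ℝ (Set.range x) = ⊤)
    (hp : p - 1 ∈ PosA (KSA g)) (hgrow : (k : A) * p - ∑ i, x i ^ 2 ∈ PosA (KSA g))
    {f : A} (hf : f ∈ PosA (KSA g)) : ∃ (c : ℝ) (N : ℕ), 0 ≤ c ∧ ∀ χ ∈ KSA g,
      charHom χ (f - algebraMap ℝ A c * p ^ (2 * N)) ^ 2 ≤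
        c ^ 2 * charHom χ (p ^ (2 * N)) ^ 2 := by
  obtain ⟨c, N, hc, hfN⟩ := exists_abs_charHom_le_mul_pow hgen hp hgrow f
  refine ⟨c / 2, N, by positivity, fun χ hχ => ?_⟩
  have hf0 : 0 ≤ charHom χ f := hf χ hχ
  have hfc : charHom χ f ≤ c * charHom χ p ^ (2 * N) :=
    calc charHom χ f ≤ c * charHom χ p ^ N := (le_abs_self _).trans (hfN χ hχ)
      _ ≤ c * charHom χ p ^ (2 * N) := by
        gcongr
        exacts [one_le_charHom hp hχ, by lia]
  simp only [map_sub, map_mul, map_pow, AlgHom.commutes, Algebra.algebraMap_self_apply]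
  rw [← mul_pow]
  exact sq_le_sq' (by linarith) (by linarith)

theorem map_sq_mul_map_nonneg (hgen : Algebra.adjoin ℝ (Set.range x) = ⊤)
    (hp : p - 1 ∈ PosA (KSA g)) (hgrow : (k : A) * p - ∑ i, x i ^ 2 ∈ PosA (KSA g))
    {ι : A →ₐ[ℝ] E} (hι : IsUnit (ι p)) (hL : ∀ t ∈ genPreordering (fun j => ι (g j)), 0 ≤ L t)
    {f : A} (hf : f ∈ PosA (KSA g)) (h : E) : 0 ≤ L (h ^ 2 * ι f) := by
  have := finiteType_of_adjoin_range_eq_top hgen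
  obtain ⟨c, N, hc, hfN⟩ := exists_charHom_sub_sq_le hgen hp hgrow hf
  obtain ⟨v, hv⟩ := (hι.pow (2 * N)).exists_right_inv
  rw [← map_pow] at hv
  let L' : E →ₗ[ℝ] ℝ := L.comp (LinearMap.mulLeft ℝ ((h * ι (p ^ N)) ^ 2))
  have hL' (t) (ht : t ∈ preorderingClosure (Set.range g)) (e : E) : 0 ≤ L' (ι t * e ^ 2) := by
    calc 0 ≤ L ((h * ι (p ^ N) * e) ^ 2 * ι t) :=
          map_sq_mul_map_nonneg_of_mem_preorderingClosure hL ht _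
      _ = L ((h * ι (p ^ N)) ^ 2 * (ι t * e ^ 2)) := by ring_nf
  have hpN (χ) (hχ : χ ∈ KSA g) : charHom χ (p ^ (2 * N)) ≠ 0 := by
    rw [map_pow]
    exact (pow_pos (zero_lt_one.trans_le (one_le_charHom hp hχ)) _).ne'
  have hbound : |L' (ι (f - algebraMap ℝ A c * p ^ (2 * N)) * v)| ≤ c * L' 1 :=
    abs_map_le_of_sq_le_on_KSA hL' hv hc hpN hfN
  have hL'f : L' (ι (f - algebraMap ℝ A c * p ^ (2 * N)) * v) = L (h ^ 2 * ι f) - c * L' 1 := by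
    rw [LinearMap.comp_apply, LinearMap.comp_apply, ← smul_eq_mul c, ← map_smul, ← map_sub]
    congr 1
    simp only [LinearMap.mulLeft_apply, map_sub, map_mul, AlgHom.commutes, map_pow,
      Algebra.smul_def] at hv ⊢
    linear_combination (h ^ 2 * ι f - h ^ 2 * ι p ^ (2 * N) * algebraMap ℝ E c) * hv
  rw [hL'f] at hbound
  linarith [(abs_le.1 hbound).1]

end Functional

/-! ### Haviland's theorem for fractions -/

section Cutoff

open Filter Topology

/-- A continuous substitute for the quotient `u / w`, which vanishes for `y ≥ 2 / δ` and converges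
to `u / w` as `δ` tends to zero. The factor `w²` is replaced by `δ` in the denominator where it is
smaller than `δ`. -/
def cutoff (u w y δ : ℝ) : ℝ :=
  u * w * (w ^ 2 / max (w ^ 2) δ ^ 2) * max 0 (min 1 (2 - δ * y))

variable {u w y δ : ℝ}

theorem exists_cutoff_eq_div_mul (hw : w ≠ 0) (hy : 0 ≤ y) (hδ : 0 ≤ δ) :
    ∃ κ, 0 ≤ κ ∧ κ ≤ 1 ∧ 1 - κ ≤ δ * (1 / w ^ 2 + y) ∧ cutoff u w y δ = u / w * κ := by
  have hw2 : 0 < w ^ 2 := by positivity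
  have hmax : 0 < max (w ^ 2) δ := lt_max_of_lt_left hw2
  set θ := max 0 (min 1 (2 - δ * y)) with hθ
  have hθ0 : 0 ≤ θ := le_max_left _ _
  have hθ1 : θ ≤ 1 := max_le zero_le_one (min_le_left _ _)
  set ρ := w ^ 2 / max (w ^ 2) δ with hρ
  have hρ0 : 0 ≤ ρ := by positivity
  have hρ1 : ρ ≤ 1 := div_le_one_of_le₀ (le_max_left _ _) hmax.le
  refine ⟨ρ ^ 2 * θ, by positivity, mul_le_one₀ (pow_le_one₀ hρ0 hρ1) hθ0 hθ1, ?_, ?_⟩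
  · have hw' : 0 ≤ δ * (1 / w ^ 2) := by positivity
    have hy' : 0 ≤ δ * y := by positivity
    rw [mul_add]
    rcases lt_or_ge (w ^ 2) δ with hlt | hle
    · have : 1 ≤ δ * (1 / w ^ 2) := by rw [mul_one_div, le_div_iff₀ hw2]; linarith
      nlinarith [mul_nonneg (sq_nonneg ρ) hθ0]
    rcases lt_or_ge 1 (δ * y) with hlt' | hle'
    · nlinarith [mul_nonneg (sq_nonneg ρ) hθ0]
    · rw [hρ, max_eq_left hle, div_self hw2.ne', hθ, min_eq_left (by linarith),
        max_eq_right zero_le_one]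
      linarith
  · rw [cutoff, hρ, hθ]
    field_simp

theorem abs_cutoff_le (hy : 0 ≤ y) (hδ : 0 ≤ δ) : |cutoff u w y δ| ≤ |u / w| := by
  rcases eq_or_ne w 0 with rfl | hw
  · simp [cutoff]
  obtain ⟨κ, hκ0, hκ1, -, h⟩ := exists_cutoff_eq_div_mul (u := u) hw hy hδ
  rw [h, abs_mul, abs_of_nonneg hκ0]
  exact mul_le_of_le_one_right (abs_nonneg _) hκ1

theorem abs_div_sub_cutoff_le (hw : w ≠ 0) (hy : 0 ≤ y) (hδ : 0 ≤ δ) :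
    |u / w - cutoff u w y δ| ≤ |u / w| * (δ * (1 / w ^ 2 + y)) := by
  obtain ⟨κ, -, hκ1, hκ, h⟩ := exists_cutoff_eq_div_mul (u := u) hw hy hδ
  rw [h, ← mul_one_sub, abs_mul, abs_of_nonneg (sub_nonneg.2 hκ1)]
  gcongr

theorem tendsto_cutoff (hy : 0 ≤ y) {δ : ℕ → ℝ} (hδ : ∀ n, 0 ≤ δ n)
    (hlim : Tendsto δ atTop (𝓝 0)) :
    Tendsto (fun n => cutoff u w y (δ n)) atTop (𝓝 (u / w)) := by
  rcases eq_or_ne w 0 with rfl | hw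
  · simp [cutoff]
  rw [tendsto_iff_norm_sub_tendsto_zero]
  refine squeeze_zero (fun _ => norm_nonneg _) (fun n => ?_)
    (by simpa using (hlim.mul_const (1 / w ^ 2 + y)).const_mul |u / w|)
  rw [norm_sub_rev]
  exact abs_div_sub_cutoff_le hw hy (hδ n)

theorem abs_le_sq_add_one (r : ℝ) : |r| ≤ r ^ 2 + 1 := by
  nlinarith [sq_abs r, sq_nonneg (|r| - 1), abs_nonneg r]

theorem abs_div_le_div (hw : w ≠ 0) : |u / w| ≤ (u ^ 2 + w ^ 2) / w ^ 2 := by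
  rw [add_div, div_self (pow_ne_zero 2 hw), ← div_pow]
  exact abs_le_sq_add_one _

theorem abs_div_sub_cutoff_le_div (hw : w ≠ 0) (hy : 0 ≤ y) (hδ : 0 ≤ δ) :
    |u / w - cutoff u w y δ| ≤ δ * ((u ^ 2 + w ^ 2) * (1 + y * w ^ 2)) / w ^ 4 :=
  calc |u / w - cutoff u w y δ| ≤ |u / w| * (δ * (1 / w ^ 2 + y)) := abs_div_sub_cutoff_le hw hy hδ
    _ ≤ (u ^ 2 + w ^ 2) / w ^ 2 * (δ * (1 / w ^ 2 + y)) := by gcongr; exact abs_div_le_div hw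
    _ = δ * ((u ^ 2 + w ^ 2) * (1 + y * w ^ 2)) / w ^ 4 := by field_simp

end Cutoff

section MeasureLimits

open Filter Topology CompactlySupported

theorem integrable_of_tendsto_of_integral_norm_le {X : Type*} [MeasurableSpace X] {μ : Measure X}
    {F : ℕ → X → ℝ} {f : X → ℝ} {c : ℝ} (hF : ∀ n, Integrable (F n) μ)
    (hlim : ∀ᵐ x ∂μ, Tendsto (fun n => F n x) atTop (𝓝 (f x)))
    (hc : ∀ n, ∫ x, ‖F n x‖ ∂μ ≤ c) : Integrable f μ := by
  refine ⟨aestronglyMeasurable_of_tendsto_ae atTop (fun n => (hF n).aestronglyMeasurable) hlim, ?_⟩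
  calc ∫⁻ x, ‖f x‖ₑ ∂μ = ∫⁻ x, liminf (fun n => ‖F n x‖ₑ) atTop ∂μ :=
        lintegral_congr_ae (hlim.mono fun x hx => hx.enorm.liminf_eq.symm)
    _ ≤ liminf (fun n => ∫⁻ x, ‖F n x‖ₑ ∂μ) atTop :=
        lintegral_liminf_le' fun n => (hF n).aestronglyMeasurable.enorm
    _ ≤ ENNReal.ofReal c := liminf_le_of_frequently_le' (Frequently.of_forall fun n => by
        rw [← ofReal_integral_norm_eq_lintegral_enorm (hF n)]
        exact ENNReal.ofReal_le_ofReal (hc n))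
    _ < ⊤ := ENNReal.ofReal_lt_top

theorem exists_measure_integral_eq {X : Type*} [TopologicalSpace X] [T2Space X]
    [LocallyCompactSpace X] [MeasurableSpace X] [BorelSpace X] {K : Set X} (hK : IsClosed K)
    (Λ : C_c(X, ℝ) →ₗ[ℝ] ℝ) (hΛ : ∀ φ : C_c(X, ℝ), (∀ χ ∈ K, 0 ≤ φ χ) → 0 ≤ Λ φ) :
    ∃ μ : Measure X, IsFiniteMeasureOnCompacts μ ∧ μ Kᶜ = 0 ∧
      ∀ φ : C_c(X, ℝ), ∫ χ, φ χ ∂μ = Λ φ := by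
  let Λ' : C_c(X, ℝ) →ₚ[ℝ] ℝ := PositiveLinearMap.mk₀ Λ fun φ hφ => hΛ φ fun χ _ => hφ χ
  refine ⟨RealRMK.rieszMeasure Λ', inferInstance, ?_, RealRMK.integral_rieszMeasure Λ'⟩
  rw [hK.isOpen_compl.measure_eq_iSup_isCompact]
  simp only [ENNReal.iSup_eq_zero]
  intro C hC hCc
  obtain ⟨f, hf1, hf0, hfc, hf⟩ := exists_continuous_one_zero_of_isCompact hCc hK
    (Set.subset_compl_iff_disjoint_right.1 hC)
  let φ : C_c(X, ℝ) := ⟨f, hfc⟩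
  have hΛφ : Λ φ ≤ 0 := by
    rw [← neg_nonneg, ← map_neg]
    refine hΛ _ fun χ hχ => ?_
    change 0 ≤ -f χ
    rw [hf0 hχ, Pi.zero_apply, neg_zero]
  have hle := RealRMK.rieszMeasure_le_of_eq_one Λ' (f := φ) (fun χ => (hf χ).1) hCc fun χ => @hf1 χ
  exact nonpos_iff_eq_zero.1 (hle.trans_eq (ENNReal.ofReal_of_nonpos hΛφ))

end MeasureLimits

section Haviland

open Filter Topology CompactlySupported

theorem mk_eq_mk_of_mul_eq {A : Type*} [CommRing A] {D : Submonoid A} {a b : A} {d e : D}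
    (h : (e : A) * a = d * b) : Localization.mk a d = Localization.mk b e :=
  Localization.mk_eq_mk_iff.2 (Localization.r_iff_exists.2 ⟨1, by simpa using h⟩)

variable {A : Type*} [CommRing A] [Algebra ℝ A] (D : Submonoid A)
  {X : Type*} [TopologicalSpace X] (ev : X → A →ₐ[ℝ] ℝ) (K : Set X)

/-- The cone of pairs `(R, φ)` of a fraction and a compactly supported function whose sum is
nonnegative on `K`, off the zeros of the denominator in some representation of `R`. -/
def fracCone : PointedCone ℝ (Localization D × C_c(X, ℝ)) where
  carrier := {z | ∃ (a : A) (d : D), z.1 = Localization.mk a d ∧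
    ∀ χ ∈ K, ev χ d ≠ 0 → 0 ≤ ev χ a / ev χ d + z.2 χ}
  add_mem' := by
    rintro ⟨_, φ⟩ ⟨_, ψ⟩ ⟨a, d, rfl, ha⟩ ⟨b, e, rfl, hb⟩
    refine ⟨_, _, Localization.add_mk a d b e, fun χ hχ hde => ?_⟩
    rw [Submonoid.coe_mul, map_mul] at hde
    have hd := left_ne_zero_of_mul hde
    have he := right_ne_zero_of_mul hde
    calc 0 ≤ (ev χ a / ev χ d + φ χ) + (ev χ b / ev χ e + ψ χ) :=
          add_nonneg (ha χ hχ hd) (hb χ hχ he)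
      _ = ev χ (d * b + e * a) / ev χ (d * e) + (φ χ + ψ χ) := by
        rw [map_add, map_mul, map_mul, map_mul]
        field_simp
        ring
  zero_mem' := ⟨0, 1, (Localization.mk_zero 1).symm, fun χ _ _ => by simp⟩
  smul_mem' := by
    rintro c ⟨_, φ⟩ ⟨a, d, rfl, ha⟩
    refine ⟨(c : ℝ) • a, d, Localization.smul_mk (c : ℝ) a d, fun χ hχ hd => ?_⟩
    calc 0 ≤ (c : ℝ) * (ev χ a / ev χ d + φ χ) := mul_nonneg c.2 (ha χ hχ hd)
      _ = ev χ ((c : ℝ) • a) / ev χ d + (c : ℝ) * φ χ := by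
        rw [map_smul, smul_eq_mul, mul_add, mul_div_assoc]

variable {D ev K} {L : Localization D →ₗ[ℝ] ℝ}

theorem map_nonneg_of_mk_zero_mem_fracCone
    (hL : ∀ (a : A) (d : D), (∀ χ ∈ K, 0 ≤ ev χ a * ev χ d) → 0 ≤ L (Localization.mk a d))
    {R : Localization D} (hR : (R, 0) ∈ fracCone D ev K) : 0 ≤ L R := by
  obtain ⟨a, d, rfl, h⟩ := hR
  refine hL a d fun χ hχ => ?_
  rcases eq_or_ne (ev χ d) 0 with hd | hd
  · rw [hd, mul_zero]
  · calc 0 ≤ (ev χ a / ev χ d + (0 : C_c(X, ℝ)) χ) * ev χ d ^ 2 :=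
          mul_nonneg (h χ hχ hd) (sq_nonneg _)
      _ = ev χ a * ev χ d := by
        rw [CompactlySupportedContinuousMap.zero_apply]
        field_simp
        ring

theorem exists_linearMap_nonneg_on_fracCone
    (hL : ∀ (a : A) (d : D), (∀ χ ∈ K, 0 ≤ ev χ a * ev χ d) → 0 ≤ L (Localization.mk a d)) :
    ∃ Λ : C_c(X, ℝ) →ₗ[ℝ] ℝ, ∀ z ∈ fracCone D ev K, 0 ≤ L z.1 + Λ z.2 := by
  let f : Localization D × C_c(X, ℝ) →ₗ.[ℝ] ℝ :=
    ⟨LinearMap.ker (LinearMap.snd ℝ (Localization D) C_c(X, ℝ)),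
      (L.comp (LinearMap.fst ℝ (Localization D) C_c(X, ℝ))).domRestrict _⟩
  obtain ⟨G, hGf, hG⟩ := riesz_extension (fracCone D ev K) f
    (by
      rintro ⟨⟨R, φ⟩, rfl : φ = 0⟩ hR
      exact map_nonneg_of_mk_zero_mem_fracCone hL hR)
    (by
      rintro ⟨R, φ⟩
      obtain ⟨M, hM⟩ := φ.continuous.bounded_above_of_compact_support φ.hasCompactSupport
      refine ⟨⟨(-R + Localization.mk (algebraMap ℝ A M) 1, 0), rfl⟩, algebraMap ℝ A M, 1,
        by simp, fun χ _ _ => ?_⟩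
      simpa [AlgHom.commutes, neg_le_iff_add_nonneg'] using (abs_le.1 (hM χ)).1)
  refine ⟨G.comp (LinearMap.inr ℝ (Localization D) C_c(X, ℝ)), fun ⟨R, φ⟩ hz => ?_⟩
  have hGR : G (R, 0) = L R := hGf ⟨(R, 0), rfl⟩
  calc 0 ≤ G (R, φ) := hG _ hz
    _ = L R + G (0, φ) := by rw [← hGR, ← map_add, Prod.mk_add_mk, add_zero, zero_add]

variable {Λ : C_c(X, ℝ) →ₗ[ℝ] ℝ}

theorem map_nonneg_of_nonneg_on (hΛ : ∀ z ∈ fracCone D ev K, 0 ≤ L z.1 + Λ z.2) (φ : C_c(X, ℝ))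
    (hφ : ∀ χ ∈ K, 0 ≤ φ χ) : 0 ≤ Λ φ := by
  simpa using hΛ (0, φ) ⟨0, 1, (Localization.mk_zero 1).symm, fun χ hχ _ => by simpa using hφ χ hχ⟩

theorem abs_map_mk_sub_le (hΛ : ∀ z ∈ fracCone D ev K, 0 ≤ L z.1 + Λ z.2) {a b : A} {d e : D}
    {φ : C_c(X, ℝ)} (h : ∀ χ ∈ K, ev χ d ≠ 0 → ev χ e ≠ 0 →
      |ev χ a / ev χ d - φ χ| ≤ ev χ b / ev χ e) :
    |L (Localization.mk a d) - Λ φ| ≤ L (Localization.mk b e) := by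
  have key {a : A} {φ : C_c(X, ℝ)} (h : ∀ χ ∈ K, ev χ d ≠ 0 → ev χ e ≠ 0 →
      ev χ a / ev χ d - φ χ ≤ ev χ b / ev χ e) :
      L (Localization.mk a d) - Λ φ ≤ L (Localization.mk b e) := by
    have := hΛ (Localization.mk b e - Localization.mk a d, φ)
      ⟨_, _, Localization.sub_mk b a e d, fun χ hχ hed => by
        rw [Submonoid.coe_mul, map_mul] at hed
        have he := left_ne_zero_of_mul hed
        have hd := right_ne_zero_of_mul hed
        have heq : ev χ (d * b - e * a) / ev χ (e * d : D) = ev χ b / ev χ e - ev χ a / ev χ d := by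
          simp only [map_sub, map_mul, Submonoid.coe_mul]
          field_simp
        rw [heq]
        linarith [h χ hχ hd he]⟩
    rw [map_sub] at this
    linarith
  refine abs_le.2 ⟨?_, key fun χ hχ hd he => (abs_le.1 (h χ hχ hd he)).2⟩
  have := key (a := -a) (φ := -φ) fun χ hχ hd he => by
    rw [map_neg, neg_div, CompactlySupportedContinuousMap.neg_apply]
    linarith [(abs_le.1 (h χ hχ hd he)).1]
  rw [← Localization.neg_mk, map_neg, map_neg] at this
  linarith

variable {q : A}

theorem exists_compactlySupported_eq_cutoff (hev : ∀ a, Continuous fun χ => ev χ a)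
    (hqc : ∀ M : ℝ, IsCompact {χ | ev χ q ≤ M}) (a d : A) {δ : ℝ} (hδ : 0 < δ) :
    ∃ φ : C_c(X, ℝ), ∀ χ, φ χ = cutoff (ev χ a) (ev χ d) (ev χ q) δ := by
  have hmax (χ) : max (ev χ d ^ 2) δ ^ 2 ≠ 0 := pow_ne_zero 2 (lt_max_of_lt_right hδ).ne'
  have hcont : Continuous fun χ => cutoff (ev χ a) (ev χ d) (ev χ q) δ := by
    have := hev a
    have := hev d
    have := hev q
    unfold cutoff
    fun_prop (disch := exact hmax)
  refine ⟨⟨⟨_, hcont⟩, HasCompactSupport.intro' (hqc (2 / δ))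
    (isClosed_le (hev q) continuous_const) fun χ hχ => ?_⟩, fun χ => rfl⟩
  have hlt : 2 < ev χ q * δ := (div_lt_iff₀ hδ).1 (not_le.1 hχ)
  change cutoff (ev χ a) (ev χ d) (ev χ q) δ = 0
  rw [cutoff, max_eq_left (min_le_of_right_le (by linarith)), mul_zero]

theorem tendsto_map_of_eq_cutoff (hq : ∀ χ, 0 ≤ ev χ q)
    (hΛ : ∀ z ∈ fracCone D ev K, 0 ≤ L z.1 + Λ z.2) {a : A} {d : D} {φ : ℕ → C_c(X, ℝ)}
    (hφ : ∀ n χ, φ n χ = cutoff (ev χ a) (ev χ d) (ev χ q) (1 / ((n : ℝ) + 1))) :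
    Tendsto (fun n => Λ (φ n)) atTop (𝓝 (L (Localization.mk a d))) := by
  set b : A := (a ^ 2 + (d : A) ^ 2) * (1 + q * (d : A) ^ 2) with hb
  have hbound (n : ℕ) :
      ‖Λ (φ n) - L (Localization.mk a d)‖ ≤ 1 / ((n : ℝ) + 1) * L (Localization.mk b (d ^ 4)) := by
    rw [norm_sub_rev, ← smul_eq_mul, ← map_smul, Localization.smul_mk]
    refine abs_map_mk_sub_le hΛ fun χ _ hd _ => ?_
    rw [hφ, SubmonoidClass.coe_pow]
    simp only [map_smul, smul_eq_mul, hb, map_mul, map_add, map_pow, map_one]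
    exact abs_div_sub_cutoff_le_div hd (hq χ) Nat.one_div_pos_of_nat.le
  have hlim := (tendsto_one_div_add_atTop_nhds_zero_nat (𝕜 := ℝ)).mul_const
    (L (Localization.mk b (d ^ 4)))
  rw [zero_mul] at hlim
  exact tendsto_iff_norm_sub_tendsto_zero.2 (squeeze_zero (fun _ => norm_nonneg _) hbound hlim)

variable [MeasurableSpace X] {μ : Measure X}

theorem integral_norm_le_map_mk (hΛ : ∀ z ∈ fracCone D ev K, 0 ≤ L z.1 + Λ z.2)
    (hμ : ∀ φ : C_c(X, ℝ), ∫ χ, φ χ ∂μ = Λ φ) {a : A} {d : D} {φ : C_c(X, ℝ)}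
    (hφ : ∀ χ, ‖φ χ‖ ≤ |ev χ a / ev χ d|) :
    ∫ χ, ‖φ χ‖ ∂μ ≤ L (Localization.mk (a ^ 2 + (d : A) ^ 2) (d ^ 2)) := by
  let ψ : C_c(X, ℝ) := ⟨⟨fun χ => ‖φ χ‖, φ.continuous.norm⟩, φ.hasCompactSupport.norm⟩
  have := abs_map_mk_sub_le hΛ (a := 0) (d := 1) (φ := ψ) (b := a ^ 2 + (d : A) ^ 2) (e := d ^ 2)
    fun χ _ _ hd => by
      rw [SubmonoidClass.coe_pow, map_pow] at hd ⊢
      rw [map_zero, zero_div, zero_sub, abs_neg, map_add, map_pow, map_pow]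
      exact (abs_norm _).trans_le
        ((hφ χ).trans (abs_div_le_div ((pow_ne_zero_iff two_ne_zero).1 hd)))
  rw [Localization.mk_zero, map_zero, zero_sub, abs_neg, ← hμ] at this
  exact (le_abs_self _).trans this

theorem integrable_div_and_map_mk_eq_integral [OpensMeasurableSpace X] [IsFiniteMeasureOnCompacts μ]
    (hev : ∀ a, Continuous fun χ => ev χ a)
    (hq : ∀ χ, 0 ≤ ev χ q) (hqc : ∀ M : ℝ, IsCompact {χ | ev χ q ≤ M})
    (hΛ : ∀ z ∈ fracCone D ev K, 0 ≤ L z.1 + Λ z.2)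
    (hμ : ∀ φ : C_c(X, ℝ), ∫ χ, φ χ ∂μ = Λ φ) (a : A) (d : D) :
    Integrable (fun χ => ev χ a / ev χ d) μ ∧
      L (Localization.mk a d) = ∫ χ, ev χ a / ev χ d ∂μ := by
  have hδ (n : ℕ) : (0 : ℝ) < 1 / ((n : ℝ) + 1) := Nat.one_div_pos_of_nat
  choose φ hφ using fun n => exists_compactlySupported_eq_cutoff hev hqc a d (hδ n)
  have hφi (n) : Integrable (φ n) μ :=
    (φ n).continuous.integrable_of_hasCompactSupport (φ n).hasCompactSupport
  have hlim (χ) : Tendsto (fun n => φ n χ) atTop (𝓝 (ev χ a / ev χ d)) := by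
    simp only [hφ]
    exact tendsto_cutoff (hq χ) (fun n => (hδ n).le) tendsto_one_div_add_atTop_nhds_zero_nat
  have hle (n χ) : ‖φ n χ‖ ≤ |ev χ a / ev χ d| := by
    rw [Real.norm_eq_abs, hφ]
    exact abs_cutoff_le (hq χ) (hδ n).le
  have hI : Integrable (fun χ => ev χ a / ev χ d) μ :=
    integrable_of_tendsto_of_integral_norm_le hφi (ae_of_all _ hlim)
      fun n => integral_norm_le_map_mk hΛ hμ (hle n)
  refine ⟨hI, tendsto_nhds_unique (tendsto_map_of_eq_cutoff hq hΛ hφ) ?_⟩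
  simp only [← hμ]
  exact tendsto_integral_of_dominated_convergence _ (fun n => (hφi n).aestronglyMeasurable)
    hI.abs (fun n => ae_of_all _ (hle n)) (ae_of_all _ hlim)

end Haviland

theorem measure_setOf_eq_zero_of_map_mk_eq_integral {A : Type*} [CommRing A] [Algebra ℝ A]
    {D : Submonoid A} {X : Type*} [MeasurableSpace X] {ev : X → A →ₐ[ℝ] ℝ}
    {L : Localization D →ₗ[ℝ] ℝ} {μ : Measure X}
    (hμ : ∀ (a : A) (d : D), Integrable (fun χ => ev χ a / ev χ d) μ ∧
      L (Localization.mk a d) = ∫ χ, ev χ a / ev χ d ∂μ) {d : A} (hd : d ∈ D) :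
    μ {χ | ev χ d = 0} = 0 := by
  -- `∫ d / d = L 1 = ∫ 1`, and `d / d = 0` at the zeros of `d`
  obtain ⟨hdI, hdL⟩ := hμ d ⟨d, hd⟩
  obtain ⟨h1I, h1L⟩ := hμ 1 1
  have hzero : ∫ χ, (ev χ 1 / ev χ (1 : D) - ev χ d / ev χ d) ∂μ = 0 := by
    rw [integral_sub h1I hdI, ← h1L, ← hdL, Localization.mk_self_mk, Localization.mk_one, sub_self]
  have hnonneg (χ) : 0 ≤ ev χ 1 / ev χ (1 : D) - ev χ d / ev χ d := by
    rcases eq_or_ne (ev χ d) 0 with h0 | h0 <;> simp [h0]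
  rw [integral_eq_zero_iff_of_nonneg hnonneg (h1I.sub hdI)] at hzero
  exact measure_mono_null (fun χ (hχ : ev χ d = 0) => by simp [hχ]) hzero

theorem exists_measure_map_mk_eq_integral {A : Type*} [CommRing A] [Algebra ℝ A] {D : Submonoid A}
    {X : Type*} [TopologicalSpace X] [T2Space X] [LocallyCompactSpace X] [MeasurableSpace X]
    [BorelSpace X] {ev : X → A →ₐ[ℝ] ℝ} (hev : ∀ a, Continuous fun χ => ev χ a) {K : Set X}
    (hK : IsClosed K) {q : A} (hq : ∀ χ, 0 ≤ ev χ q) (hqc : ∀ M : ℝ, IsCompact {χ | ev χ q ≤ M})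
    {L : Localization D →ₗ[ℝ] ℝ}
    (hL : ∀ (a : A) (d : D), (∀ χ ∈ K, 0 ≤ ev χ a * ev χ d) → 0 ≤ L (Localization.mk a d)) :
    ∃ μ : Measure X, μ Kᶜ = 0 ∧ (∀ d ∈ D, μ {χ | ev χ d = 0} = 0) ∧
      ∀ (a : A) (d : D), Integrable (fun χ => ev χ a / ev χ d) μ ∧
        L (Localization.mk a d) = ∫ χ, ev χ a / ev χ d ∂μ := by
  obtain ⟨Λ, hΛ⟩ := exists_linearMap_nonneg_on_fracCone hL
  obtain ⟨μ, _, hμK, hμ⟩ := exists_measure_integral_eq hK Λ (map_nonneg_of_nonneg_on hΛ)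
  have hrep := integrable_div_and_map_mk_eq_integral hev hq hqc hΛ hμ
  exact ⟨μ, hμK, fun d hd => measure_setOf_eq_zero_of_map_mk_eq_integral hrep hd, hrep⟩

/-! ### The character space of a finitely generated algebra -/

section CharSpace

open Topology

variable {A : Type*} [CommRing A] [Algebra ℝ A]

theorem continuous_charHom (a : A) : Continuous fun χ : CharSet A => charHom χ a :=
  (continuous_apply a).comp continuous_subtype_val

theorem isClosed_charSet : IsClosed (CharSet A) := by
  simp only [CharSet, Set.ofPred_and, Set.ofPred_forall]
  refine .inter ?_ (.inter ?_ ?_)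
  · exact isClosed_iInter fun a => isClosed_iInter fun b => isClosed_eq (by fun_prop) (by fun_prop)
  · exact isClosed_iInter fun a => isClosed_iInter fun b => isClosed_eq (by fun_prop) (by fun_prop)
  · exact isClosed_iInter fun r => isClosed_eq (by fun_prop) continuous_const

theorem isClosed_KSA {m : ℕ} (g : Fin m → A) : IsClosed (KSA g) := by
  simp only [KSA, Set.ofPred_forall]
  exact isClosed_iInter fun i => isClosed_le continuous_const (continuous_charHom (g i))

variable {n : ℕ} {x : Fin n → A}

/-- The coordinates of a character with respect to a family of elements of the algebra; for a
generating family they embed the character space into `ℝⁿ`. -/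
def coord (x : Fin n → A) (χ : CharSet A) : Fin n → ℝ := fun i => charHom χ (x i)

theorem continuous_coord (x : Fin n → A) : Continuous (coord x) :=
  continuous_pi fun i => continuous_charHom (x i)

theorem charHom_aeval (χ : CharSet A) (P : MvPolynomial (Fin n) ℝ) :
    charHom χ (aeval x P) = eval (coord x χ) P := by
  rw [← aeval_eq_eval]
  exact comp_aeval_apply x (charHom χ) P

theorem aeval_surjective_of_adjoin_range_eq_top (hgen : Algebra.adjoin ℝ (Set.range x) = ⊤) :
    Function.Surjective (aeval x : MvPolynomial (Fin n) ℝ →ₐ[ℝ] A) := by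
  rw [← AlgHom.range_eq_top, ← Algebra.adjoin_range_eq_range_aeval, hgen]

theorem isClosedEmbedding_coord (hgen : Algebra.adjoin ℝ (Set.range x) = ⊤) :
    IsClosedEmbedding (coord x) := by
  choose P hP using aeval_surjective_of_adjoin_range_eq_top hgen
  let e : (Fin n → ℝ) → A → ℝ := fun y a => eval y (P a)
  have he : Continuous e := continuous_pi fun a => (P a).continuous_eval
  have he_coord : e ∘ coord x = Subtype.val := by
    ext χ a
    change eval (coord x χ) (P a) = charHom χ a
    rw [← charHom_aeval, hP]
  have hval : IsClosedEmbedding (e ∘ coord x) :=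
    he_coord ▸ isClosed_charSet.isClosedEmbedding_subtypeVal
  exact .of_continuous_injective_isClosedMap (continuous_coord x) hval.injective.of_comp
    (isProperMap_of_comp_of_t2 (continuous_coord x) he hval.isProperMap).isClosedMap

theorem isCompact_setOf_sum_sq_le {ι : Type*} [Fintype ι] (M : ℝ) :
    IsCompact {y : ι → ℝ | ∑ i, y i ^ 2 ≤ M} := by
  refine Metric.isCompact_of_isClosed_isBounded (isClosed_le (by fun_prop) continuous_const)
    (Metric.isBounded_closedBall (x := (0 : ι → ℝ)) (r := √M) |>.subset fun y hy => ?_)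
  rw [mem_closedBall_zero_iff, pi_norm_le_iff_of_nonneg (Real.sqrt_nonneg M)]
  intro i
  have hi : y i ^ 2 ≤ ∑ j, y j ^ 2 :=
    Finset.single_le_sum (f := fun j => y j ^ 2) (fun _ _ => sq_nonneg _) (Finset.mem_univ i)
  exact Real.abs_le_sqrt (hi.trans hy)

theorem isCompact_setOf_charHom_sum_sq_le (hgen : Algebra.adjoin ℝ (Set.range x) = ⊤) (M : ℝ) :
    IsCompact {χ : CharSet A | charHom χ (∑ i, x i ^ 2) ≤ M} := by
  simpa [coord] using
    (isClosedEmbedding_coord hgen).isCompact_preimage (isCompact_setOf_sum_sq_le M)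

end CharSpace

/-! ### Simultaneous nonvanishing of the denominators -/

section Density

open Filter Topology Metric

theorem measureReal_le_pow_mul_integral {α : Type*} [MeasurableSpace α] {ν : Measure α}
    [IsFiniteMeasure ν] {f : α → ℝ} {N : ℕ} (hN : Even N) (hf : ∀ᵐ z ∂ν, f z ≠ 0)
    (hi : Integrable (fun z => 1 / f z ^ N) ν) {s : Set α} {ε : ℝ} (hε : 0 < ε)
    (hs : ∀ z ∈ s, |f z| ≤ ε) : ν.real s ≤ ε ^ N * ∫ z, 1 / f z ^ N ∂ν := by
  have hle : s ≤ᵐ[ν] {z | 1 / ε ^ N ≤ 1 / f z ^ N} := by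
    filter_upwards [hf] with z hz hzs
    refine one_div_le_one_div_of_le (hN.pow_pos hz) ?_
    rw [← hN.pow_abs]
    exact pow_le_pow_left₀ (abs_nonneg _) (hs z hzs) N
  have hmarkov := mul_meas_ge_le_integral_of_nonneg
    (ae_of_all ν fun z => one_div_nonneg.2 (hN.pow_nonneg (f z))) hi (1 / ε ^ N)
  calc ν.real s ≤ ν.real {z | 1 / ε ^ N ≤ 1 / f z ^ N} :=
        ENNReal.toReal_mono (measure_ne_top _ _) (measure_mono_ae hle)
    _ = ε ^ N * (1 / ε ^ N * ν.real {z | 1 / ε ^ N ≤ 1 / f z ^ N}) := by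
      rw [← mul_assoc, mul_one_div_cancel (pow_pos hε N).ne', one_mul]
    _ ≤ ε ^ N * ∫ z, 1 / f z ^ N ∂ν := by gcongr

variable {ι : Type*} [Fintype ι] {ν : Measure (ι → ℝ)} [IsFiniteMeasure ν] {y : ι → ℝ}

theorem eventually_two_pow_le_of_tendsto_volume_div {M : ENNReal} (hM : M ≠ ⊤)
    (hlim : Tendsto (fun r => volume (closedBall y r) / ν (closedBall y r)) (𝓝[>] 0) (𝓝 M)) :
    ∀ᶠ r in 𝓝[>] (0 : ℝ), (2 * r) ^ Fintype.card ι ≤ (M + 1).toReal * ν.real (closedBall y r) := by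
  have hM1 : M + 1 ≠ ⊤ := ENNReal.add_ne_top.2 ⟨hM, ENNReal.one_ne_top⟩
  filter_upwards [hlim.eventually_lt_const (ENNReal.lt_add_right hM one_ne_zero),
    self_mem_nhdsWithin] with r hr (hr0 : 0 < r)
  have hvol : volume (closedBall y r) ≤ (M + 1) * ν (closedBall y r) :=
    (ENNReal.div_le_iff_le_mul (.inr hM1) (.inl (measure_ne_top _ _))).1 hr.le
  rw [Real.volume_pi_closedBall y hr0.le] at hvol
  have := ENNReal.toReal_mono (ENNReal.mul_ne_top hM1 (measure_ne_top _ _)) hvol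
  rwa [ENNReal.toReal_ofReal (by positivity), ENNReal.toReal_mul] at this

theorem not_tendsto_volume_div_of_le_mul_pow {c : ℝ} {N : ℕ} (hN : Fintype.card ι < N)
    (hc : ∀ᶠ r in 𝓝[>] (0 : ℝ), ν.real (closedBall y r) ≤ c * r ^ N) {M : ENNReal} (hM : M ≠ ⊤) :
    ¬ Tendsto (fun r => volume (closedBall y r) / ν (closedBall y r)) (𝓝[>] 0) (𝓝 M) := by
  intro hlim
  obtain ⟨k, rfl⟩ := Nat.exists_eq_add_of_lt hN
  set n := Fintype.card ι
  have hbound : ∀ᶠ r in 𝓝[>] (0 : ℝ), (2 : ℝ) ^ n ≤ (M + 1).toReal * c * r ^ (k + 1) := by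
    filter_upwards [hc, eventually_two_pow_le_of_tendsto_volume_div hM hlim, self_mem_nhdsWithin]
      with r hcr hMr (hr : 0 < r)
    refine le_of_mul_le_mul_right ?_ (pow_pos hr n)
    calc (2 : ℝ) ^ n * r ^ n = (2 * r) ^ n := (mul_pow _ _ _).symm
      _ ≤ (M + 1).toReal * ν.real (closedBall y r) := hMr
      _ ≤ (M + 1).toReal * (c * r ^ (n + k + 1)) := by gcongr
      _ = (M + 1).toReal * c * r ^ (k + 1) * r ^ n := by ring
  have htendsto : Tendsto (fun r : ℝ => (M + 1).toReal * c * r ^ (k + 1)) (𝓝[>] 0) (𝓝 0) := by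
    have hcont : Continuous fun r : ℝ => (M + 1).toReal * c * r ^ (k + 1) := by fun_prop
    have := hcont.tendsto 0
    rw [zero_pow k.succ_ne_zero, mul_zero] at this
    exact this.mono_left nhdsWithin_le_nhds
  exact (pow_pos two_pos n).not_ge (ge_of_tendsto htendsto hbound)

/-- A differentiable function with an integrable high negative power does not vanish where
Lebesgue measure has finite density with respect to the measure: near a zero it would be `O(r)`
on balls of radius `r`, so that by Markov's inequality these balls would be too light. -/
theorem ne_zero_of_tendsto_volume_div {f : (ι → ℝ) → ℝ} (hf : DifferentiableAt ℝ f y)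
    (h0 : ∀ᵐ z ∂ν, f z ≠ 0) {N : ℕ} (hN : Even N) (hcard : Fintype.card ι < N)
    (hi : Integrable (fun z => 1 / f z ^ N) ν) {M : ENNReal} (hM : M ≠ ⊤)
    (hlim : Tendsto (fun r => volume (closedBall y r) / ν (closedBall y r)) (𝓝[>] 0) (𝓝 M)) :
    f y ≠ 0 := by
  intro hy
  obtain ⟨C, hC, hfC⟩ := hf.hasFDerivAt.isBigO_sub.exists_pos
  obtain ⟨ε, hε, hball⟩ := Metric.eventually_nhds_iff.1 hfC.bound
  refine not_tendsto_volume_div_of_le_mul_pow (c := C ^ N * ∫ z, 1 / f z ^ N ∂ν) hcard ?_ hM hlim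
  filter_upwards [Ioo_mem_nhdsGT hε] with r hr
  have hsmall (z) (hz : z ∈ closedBall y r) : |f z| ≤ C * r := by
    have hfz := hball (hz.trans_lt hr.2)
    rw [hy, sub_zero, ← dist_eq_norm z y] at hfz
    exact hfz.trans (mul_le_mul_of_nonneg_left hz hC.le)
  calc ν.real (closedBall y r) ≤ (C * r) ^ N * ∫ z, 1 / f z ^ N ∂ν :=
        measureReal_le_pow_mul_integral hN h0 hi (mul_pos hC hr.1) hsmall
    _ = (C ^ N * ∫ z, 1 / f z ^ N ∂ν) * r ^ N := by ring

end Density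

section Support

open Filter

variable {A : Type*} [CommRing A] [Algebra ℝ A] {n : ℕ} {x : Fin n → A} {D : Submonoid A}
  [MeasurableSpace (CharSet A)] [BorelSpace (CharSet A)]

theorem ae_forall_charHom_ne_zero (hgen : Algebra.adjoin ℝ (Set.range x) = ⊤)
    {μ : Measure (CharSet A)} [IsFiniteMeasure μ] (h0 : ∀ d ∈ D, μ {χ | charHom χ d = 0} = 0)
    (hi : ∀ d ∈ D, Integrable (fun χ => 1 / charHom χ d) μ) :
    ∀ᵐ χ ∂μ, ∀ d ∈ D, charHom χ d ≠ 0 := by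
  have hx : MeasurableEmbedding (coord x) := (isClosedEmbedding_coord hgen).measurableEmbedding
  have hdensity := ae_of_ae_map hx.measurable.aemeasurable
    ((Besicovitch.ae_tendsto_rnDeriv volume (μ.map (coord x))).and
      (Measure.rnDeriv_lt_top volume (μ.map (coord x))))
  filter_upwards [hdensity] with χ ⟨hlim, hfin⟩ d hd
  obtain ⟨P, rfl⟩ := aeval_surjective_of_adjoin_range_eq_top hgen d
  rw [charHom_aeval]
  refine ne_zero_of_tendsto_volume_div (ν := μ.map (coord x)) (f := fun y => eval y P)
    (AnalyticOnNhd.eval_mvPolynomial P _ (Set.mem_univ _)).differentiableAt ?_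
    (even_two_mul (n + 1)) (by rw [Fintype.card_fin]; lia) ?_ hfin.ne hlim
  · rw [hx.ae_map_iff, ae_iff]
    simpa [charHom_aeval] using h0 _ hd
  · rw [hx.integrable_map_iff]
    simpa [Function.comp_def, charHom_aeval] using hi _ (pow_mem hd (2 * (n + 1)))

theorem exists_measure_KSA_diff_ZA {m : ℕ} {g : Fin m → A}
    (hgen : Algebra.adjoin ℝ (Set.range x) = ⊤) {L : Localization D →ₗ[ℝ] ℝ}
    (hL : ∀ (a : A) (d : D), (∀ χ ∈ KSA g, 0 ≤ charHom χ a * charHom χ d) →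
      0 ≤ L (Localization.mk a d)) :
    ∃ μ : Measure (CharSet A), μ (KSA g \ ⋃ d ∈ (D : Set A), ZA d)ᶜ = 0 ∧
      (∀ d ∈ D, μ (ZA d) = 0) ∧
      ∀ (f : A) (d : D), Integrable (fun χ => charHom χ f / charHom χ d) μ ∧
        L (Localization.mk f d) = ∫ χ, charHom χ f / charHom χ d ∂μ := by
  have : LocallyCompactSpace (CharSet A) := (isClosedEmbedding_coord hgen).locallyCompactSpace
  obtain ⟨μ, hK, hZ, hint⟩ := exists_measure_map_mk_eq_integral continuous_charHom (isClosed_KSA g)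
    (fun χ => by simpa using Finset.sum_nonneg fun i _ => sq_nonneg (charHom χ (x i)))
    (isCompact_setOf_charHom_sum_sq_le hgen) hL
  refine ⟨μ, ?_, hZ, hint⟩
  have : IsFiniteMeasure μ := by
    have h1 := (hint 1 1).1
    simp only [map_one, OneMemClass.coe_one, div_one] at h1
    exact (integrable_const_iff_isFiniteMeasure one_ne_zero).1 h1
  have hne := ae_forall_charHom_ne_zero hgen hZ fun d hd => by simpa using (hint 1 ⟨d, hd⟩).1
  rw [← mem_ae_iff]
  filter_upwards [hne, mem_ae_iff.2 hK] with χ hχD hχK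
  refine ⟨hχK, ?_⟩
  simp only [Set.mem_iUnion, not_exists]
  exact hχD

end Support

/-! ### Nonnegative fractions and the moment problem -/

section PosFrac

variable {A : Type*} [CommRing A] [Algebra ℝ A] {D : Submonoid A} {Y : Set (CharSet A)}
  {R T : Localization D}

theorem algebraMap_mem_PosF {a : A} (ha : a ∈ PosA Y) :
    algebraMap A (Localization D) a ∈ PosF D Y := by
  refine ⟨a, 1, (Localization.mk_one_eq_algebraMap a).symm, fun χ hχ => ?_⟩
  change 0 ≤ charHom χ a * charHom χ 1
  rw [map_one, mul_one]
  exact ha χ hχ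

theorem one_mem_PosF : (1 : Localization D) ∈ PosF D Y := by
  rw [← map_one (algebraMap A (Localization D))]
  exact algebraMap_mem_PosF fun χ _ => zero_le_one.trans_eq (map_one (charHom χ)).symm

theorem zero_mem_PosF : (0 : Localization D) ∈ PosF D Y := by
  rw [← map_zero (algebraMap A (Localization D))]
  exact algebraMap_mem_PosF fun χ _ => (map_zero (charHom χ)).ge

theorem add_mem_PosF (hR : R ∈ PosF D Y) (hT : T ∈ PosF D Y) : R + T ∈ PosF D Y := by
  obtain ⟨a, d, rfl, ha⟩ := hR
  obtain ⟨b, e, rfl, hb⟩ := hT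
  refine ⟨_, _, Localization.add_mk a d b e, fun χ hχ => ?_⟩
  calc 0 ≤ (charHom χ a * charHom χ d) * charHom χ e ^ 2
        + (charHom χ b * charHom χ e) * charHom χ d ^ 2 :=
      add_nonneg (mul_nonneg (ha χ hχ) (sq_nonneg _)) (mul_nonneg (hb χ hχ) (sq_nonneg _))
    _ = charHom χ (d * b + e * a) * charHom χ (d * e) := by
      simp only [map_add, map_mul]
      ring

theorem mul_mem_PosF (hR : R ∈ PosF D Y) (hT : T ∈ PosF D Y) : R * T ∈ PosF D Y := by
  obtain ⟨a, d, rfl, ha⟩ := hR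
  obtain ⟨b, e, rfl, hb⟩ := hT
  refine ⟨_, _, Localization.mk_mul a b d e, fun χ hχ => ?_⟩
  calc 0 ≤ (charHom χ a * charHom χ d) * (charHom χ b * charHom χ e) :=
      mul_nonneg (ha χ hχ) (hb χ hχ)
    _ = charHom χ (a * b) * charHom χ (d * e) := by
      rw [map_mul, map_mul]
      ring

theorem mul_self_mem_PosF (R : Localization D) : R * R ∈ PosF D Y := by
  induction R using Localization.induction_on with | H ad => ?_
  obtain ⟨a, d⟩ := ad
  refine ⟨_, _, Localization.mk_mul a a d d, fun χ _ => ?_⟩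
  change 0 ≤ charHom χ (a * a) * charHom χ (d * d)
  rw [map_mul, map_mul]
  exact mul_nonneg (mul_self_nonneg _) (mul_self_nonneg _)

theorem genPreordering_subset_PosF {m : ℕ} {g : Fin m → A} (hY : Y ⊆ KSA g) :
    (genPreordering fun i => algebraMap A (Localization D) (g i)) ⊆ PosF D Y := by
  rw [genPreordering_eq_preorderingClosure]
  intro R hR
  induction hR using Subsemiring.closure_induction with
  | mem R hR =>
    obtain ⟨T, rfl⟩ | ⟨i, rfl⟩ := hR
    · exact mul_self_mem_PosF T
    · exact algebraMap_mem_PosF fun χ hχ => hY hχ i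
  | zero => exact zero_mem_PosF
  | one => exact one_mem_PosF
  | add _ _ _ _ hR hT => exact add_mem_PosF hR hT
  | mul _ _ _ _ hR hT => exact mul_mem_PosF hR hT

/-- The extension to fractions of a character at which no denominator vanishes. -/
def fracChar {χ : CharSet A} (h : ∀ d ∈ D, charHom χ d ≠ 0) : Localization D →ₐ[ℝ] ℝ :=
  IsLocalization.liftAlgHom (M := D) (f := charHom χ) fun d => (h d d.2).isUnit

theorem fracChar_mk {χ : CharSet A} (h : ∀ d ∈ D, charHom χ d ≠ 0) (a : A) (d : D) :
    fracChar h (Localization.mk a d) = charHom χ a / charHom χ d := by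
  have halg (b : A) : fracChar h (algebraMap A _ b) = charHom χ b := IsLocalization.lift_eq _ b
  rw [eq_div_iff (h d d.2), ← halg d, ← map_mul, ← halg a, Localization.mk_eq_mk',
    IsLocalization.mk'_spec]

end PosFrac

theorem mk_one_sq_mul_algebraMap {A : Type*} [CommRing A] {D : Submonoid A} (a : A) (d : D) :
    Localization.mk 1 d ^ 2 * algebraMap A (Localization D) (a * d) = Localization.mk a d := by
  rw [← Localization.mk_one_eq_algebraMap, sq, Localization.mk_mul, Localization.mk_mul]
  refine mk_eq_mk_of_mul_eq ?_
  simp only [Submonoid.coe_mul, OneMemClass.coe_one]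
  ring

theorem div_nonneg_of_mul_nonneg {a b : ℝ} (h : 0 ≤ a * b) : 0 ≤ a / b :=
  div_nonneg_iff.2 (mul_nonneg_iff.1 h)

section MomentProblem

variable {A : Type*} [CommRing A] [Algebra ℝ A] {D : Submonoid A} {m : ℕ} {g : Fin m → A}

theorem dualClosure_genPreordering_subset_PosF :
    dualClosure (genPreordering fun i => algebraMap A (Localization D) (g i))
      ⊆ PosF D (KSA g \ ⋃ d ∈ (D : Set A), ZA d) := by
  intro R hR
  induction R using Localization.induction_on with | H ad => ?_
  obtain ⟨a, d⟩ := ad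
  refine ⟨a, d, rfl, fun χ ⟨hχK, hχD⟩ => ?_⟩
  have hne : ∀ d ∈ D, charHom χ d ≠ 0 := fun d hd h0 => hχD (Set.mem_biUnion (x := d) hd h0)
  have hdiv : 0 ≤ fracChar hne (Localization.mk a d) := by
    refine hR (fracChar hne).toLinearMap fun c hc => ?_
    obtain ⟨b, e, rfl, hb⟩ := genPreordering_subset_PosF (Set.singleton_subset_iff.2 hχK) hc
    change 0 ≤ fracChar hne (Localization.mk b e)
    rw [fracChar_mk]
    exact div_nonneg_of_mul_nonneg (hb χ rfl)
  rw [fracChar_mk] at hdiv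
  exact mul_nonneg_iff.2 (div_nonneg_iff.1 hdiv)

variable {n : ℕ} {x : Fin n → A} {p : A} {k : ℕ} {L : Localization D →ₗ[ℝ] ℝ}

theorem map_mk_nonneg (hgen : Algebra.adjoin ℝ (Set.range x) = ⊤) (hpD : p ∈ D)
    (hp : p - 1 ∈ PosA (KSA g)) (hgrow : (k : A) * p - ∑ i, x i ^ 2 ∈ PosA (KSA g))
    (hL : ∀ t ∈ genPreordering fun i => algebraMap A (Localization D) (g i), 0 ≤ L t)
    (a : A) (d : D) (had : ∀ χ ∈ KSA g, 0 ≤ charHom χ a * charHom χ d) :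
    0 ≤ L (Localization.mk a d) := by
  rw [← mk_one_sq_mul_algebraMap]
  exact map_sq_mul_map_nonneg hgen hp hgrow (ι := IsScalarTower.toAlgHom ℝ A (Localization D))
    (IsLocalization.map_units (Localization D) ⟨p, hpD⟩) hL
    (fun χ hχ => (had χ hχ).trans_eq (map_mul (charHom χ) a d).symm) _

theorem PosF_subset_dualClosure_genPreordering (hgen : Algebra.adjoin ℝ (Set.range x) = ⊤)
    (hpD : p ∈ D) (hp : p - 1 ∈ PosA (KSA g))
    (hgrow : (k : A) * p - ∑ i, x i ^ 2 ∈ PosA (KSA g)) :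
    PosF D (KSA g \ ⋃ d ∈ (D : Set A), ZA d)
      ⊆ dualClosure (genPreordering fun i => algebraMap A (Localization D) (g i)) := by
  rintro _ ⟨a, d, rfl, had⟩ L hL
  let _ : MeasurableSpace (CharSet A) := borel (CharSet A)
  have : BorelSpace (CharSet A) := ⟨rfl⟩
  obtain ⟨μ, hμ, -, hint⟩ := exists_measure_KSA_diff_ZA hgen (map_mk_nonneg hgen hpD hp hgrow hL)
  rw [(hint a d).2]
  refine integral_nonneg_of_ae ?_
  filter_upwards [mem_ae_iff.2 hμ] with χ hχ
  exact div_nonneg_of_mul_nonneg (had χ hχ)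

theorem exists_measure_closure (hgen : Algebra.adjoin ℝ (Set.range x) = ⊤) (hpD : p ∈ D)
    (hp : p - 1 ∈ PosA (KSA g)) (hgrow : (k : A) * p - ∑ i, x i ^ 2 ∈ PosA (KSA g))
    (hL : ∀ t ∈ genPreordering fun i => algebraMap A (Localization D) (g i), 0 ≤ L t) :
    ∃ μ : @Measure (CharSet A) (borel (CharSet A)),
      μ (closure (KSA g \ ⋃ d ∈ (D : Set A), ZA d))ᶜ = 0 ∧
      (∀ d ∈ D, μ (closure (KSA g \ ⋃ d' ∈ (D : Set A), ZA d') ∩ ZA d) = 0) ∧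
      ∀ (f : A) (d : D), Integrable (fun χ => charHom χ f / charHom χ d) μ ∧
        L (Localization.mk f d)
          = ∫ χ in closure (KSA g \ ⋃ d' ∈ (D : Set A), ZA d'), charHom χ f / charHom χ d ∂μ := by
  let _ : MeasurableSpace (CharSet A) := borel (CharSet A)
  have : BorelSpace (CharSet A) := ⟨rfl⟩
  obtain ⟨μ, hμ, hZ, hint⟩ := exists_measure_KSA_diff_ZA hgen (map_mk_nonneg hgen hpD hp hgrow hL)
  have hcl : μ (closure (KSA g \ ⋃ d ∈ (D : Set A), ZA d))ᶜ = 0 :=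
    measure_mono_null (Set.compl_subset_compl.2 subset_closure) hμ
  refine ⟨μ, hcl, fun d hd => measure_mono_null Set.inter_subset_right (hZ d hd), ?_⟩
  have hmem : ∀ᵐ χ ∂μ, χ ∈ closure (KSA g \ ⋃ d ∈ (D : Set A), ZA d) := mem_ae_iff.2 hcl
  rwa [Measure.restrict_eq_self_of_ae_mem hmem]

end MomentProblem

/-! ### Closedness of the nonnegative fractions -/

section Germ

open Filter

variable {ι : Type*} (l : Filter ι) [l.NeBot]

/-- The preordering of the functions that are eventually nonnegative along a filter. -/
def eventuallyNonneg : RingPreordering (ι → ℝ) where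
  carrier := {f | ∀ᶠ i in l, 0 ≤ f i}
  mul_mem' hf hg := by filter_upwards [hf, hg] with i hfi hgi using mul_nonneg hfi hgi
  one_mem' := Eventually.of_forall fun _ => zero_le_one
  add_mem' hf hg := by filter_upwards [hf, hg] with i hfi hgi using add_nonneg hfi hgi
  zero_mem' := Eventually.of_forall fun _ => le_rfl
  mem_of_isSquare' hf := Eventually.of_forall fun i => (hf.map (Pi.evalRingHom _ i)).nonneg
  neg_one_notMem' h := by
    obtain ⟨_, hi⟩ := Eventually.exists h
    exact (neg_lt_zero.2 one_pos).not_ge hi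

variable {l} {R : Type*} [Field R] [LinearOrder R] [IsStrictOrderedRing R] {φ : (ι → ℝ) →+* R}

theorem map_ne_zero_of_eventually_ne_zero (hφ : ∀ f ∈ eventuallyNonneg l, 0 ≤ φ f) {f : ι → ℝ}
    (hf : ∀ᶠ i in l, f i ≠ 0) : φ f ≠ 0 := by
  intro h0
  -- `f * f⁻¹` is eventually `1`, so that `φ` maps `f * f⁻¹ - 1` to a nonnegative number
  have h := hφ (f * f⁻¹ - 1) (hf.mono fun i hi => by simp [hi])
  rw [map_sub, map_mul, h0, zero_mul, map_one, zero_sub] at h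
  exact (neg_lt_zero.2 one_pos).not_ge h

end Germ

section FinTop

open Filter Topology

section WeakTop

variable {V : Type*} [AddCommGroup V] [Module ℝ V] {ι : Type*} [Finite ι]

theorem continuous_weakTop_equivFun (b : Module.Basis ι ℝ V) :
    Continuous[weakTop V, _] b.equivFun := by
  let _ := weakTop V
  exact continuous_pi fun i => continuous_iff_le_induced.2 (iInf_le _ (b.coord i))

theorem continuous_weakTop_of_pi (f : (ι → ℝ) →ₗ[ℝ] V) : Continuous[_, weakTop V] f :=
  continuous_iInf_rng.2 fun L =>
    continuous_induced_rng.2 (L.comp f).continuous_of_finiteDimensional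

end WeakTop

theorem isClosed_finTop_iff {E : Type*} [AddCommGroup E] [Module ℝ E] {S : Set E} :
    IsClosed[finTop E] S ↔ ∀ U : Submodule ℝ E, FiniteDimensional ℝ U →
      IsClosed[weakTop U] ((Subtype.val : U → E) ⁻¹' S) := by
  simp only [← @isOpen_compl_iff _ _ (finTop E), ← @isOpen_compl_iff _ _ (weakTop _)]
  rfl

variable {A : Type*} [CommRing A] [Algebra ℝ A]

/-- A sequence of counterexamples would be a point of `A` over a real closed field of germs, which
specializes to a real counterexample. -/
theorem exists_nonneg_of_prod_ne_zero [Algebra.FiniteType ℝ A] {m : ℕ} {g : Fin m → A} {e : ℕ → A}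
    {a : A} (ha : ∀ χ ∈ KSA g, (∀ i, charHom χ (e i) ≠ 0) → 0 ≤ charHom χ a) :
    ∃ N, ∀ χ ∈ KSA g, charHom χ (∏ i ∈ Finset.range N, e i) ≠ 0 → 0 ≤ charHom χ a := by
  classical
  by_contra! hcon
  choose χ hχK hχe hχa using hcon
  obtain ⟨R, _, _, _, _, φ, hφ⟩ := exists_ringHom_polyIVT (eventuallyNonneg (atTop : Filter ℕ))
  let ψ : A →+* R := φ.comp (RingHom.pi fun N => (charHom (χ N) : A →+* ℝ))
  have hψ_nonneg {b : A} (hb : ∀ N, 0 ≤ charHom (χ N) b) : 0 ≤ ψ b :=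
    hφ _ (Eventually.of_forall hb)
  have hψe : ∀ b ∈ Set.range e, ψ b ≠ 0 := by
    rintro _ ⟨i, rfl⟩
    refine map_ne_zero_of_eventually_ne_zero hφ ((eventually_gt_atTop i).mono fun N hN h0 => ?_)
    refine hχe N ?_
    rw [map_prod]
    exact Finset.prod_eq_zero (Finset.mem_range.2 hN) h0
  have hψa : ψ a < 0 := by
    refine lt_of_le_of_ne ?_
      (map_ne_zero_of_eventually_ne_zero hφ (Eventually.of_forall fun N => (hχa N).ne))
    rw [← neg_nonneg, ← map_neg]
    exact hψ_nonneg fun N => by simpa using (hχa N).le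
  obtain ⟨ω, hω, hωe⟩ := exists_algHom_real_sign_eq ψ (insert a (Finset.univ.image g))
    (Set.countable_range e) hψe
  have hωK : charOfAlgHom ω ∈ KSA g := fun j => by
    have hψg := hψ_nonneg (b := g j) fun N => hχK N j
    rwa [← sign_nonneg_iff, ← hω (g j) (by simp), sign_nonneg_iff] at hψg
  have hωa : ω a < 0 := by
    rwa [← sign_eq_neg_one_iff, ← hω a (by simp), sign_eq_neg_one_iff] at hψa
  exact hωa.not_ge (ha _ hωK fun i => hωe _ ⟨i, rfl⟩)

variable {D : Submonoid A} {Y : Set (CharSet A)}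

theorem exists_nonneg_of_mk_mem_PosF {a : A} {d : D} (h : Localization.mk a d ∈ PosF D Y) :
    ∃ c ∈ D, ∀ χ ∈ Y, charHom χ c ≠ 0 → 0 ≤ charHom χ (a * d) := by
  obtain ⟨b, e, hmk, hb⟩ := h
  obtain ⟨c, hc⟩ := Localization.r_iff_exists.1 (Localization.mk_eq_mk_iff.1 hmk)
  refine ⟨c * e, mul_mem c.2 e.2, fun χ hχ h0 => ?_⟩
  rw [map_mul] at h0
  have hcross : charHom χ e * charHom χ a = charHom χ d * charHom χ b := by
    have := congrArg (charHom χ) hc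
    simp only [map_mul] at this
    exact mul_left_cancel₀ (left_ne_zero_of_mul h0) this
  have hsq : 0 < charHom χ e ^ 2 := sq_pos_of_ne_zero (right_ne_zero_of_mul h0)
  refine nonneg_of_mul_nonneg_left ?_ hsq
  calc 0 ≤ charHom χ d ^ 2 * (charHom χ b * charHom χ e) := mul_nonneg (sq_nonneg _) (hb χ hχ)
    _ = charHom χ (a * d) * charHom χ e ^ 2 := by
      rw [map_mul]
      linear_combination (-charHom χ d * charHom χ e) * hcross

theorem mk_mem_PosF {a : A} {d : D} {c : A} (hc : c ∈ D)
    (h : ∀ χ ∈ Y, charHom χ c ≠ 0 → 0 ≤ charHom χ (a * d)) : Localization.mk a d ∈ PosF D Y := by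
  refine ⟨a * c, d * ⟨c, hc⟩, mk_eq_mk_of_mul_eq ?_, fun χ hχ => ?_⟩
  · simp only [Submonoid.coe_mul]
    ring
  · change 0 ≤ charHom χ (a * c) * charHom χ (d * c)
    have heq : charHom χ (a * c) * charHom χ (d * c) = charHom χ (a * d) * charHom χ c ^ 2 := by
      simp only [map_mul]
      ring
    rw [heq]
    rcases eq_or_ne (charHom χ c) 0 with h0 | h0
    · simp [h0]
    · exact mul_nonneg (h χ hχ h0) (sq_nonneg _)

theorem isClosed_setOf_mk_sum_mem_PosF [Algebra.FiniteType ℝ A] {m : ℕ} {g : Fin m → A}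
    {ι : Type*} [Fintype ι] (a : ι → A) (d : D) :
    IsClosed {t : ι → ℝ | Localization.mk (∑ i, t i • a i) d ∈ PosF D (KSA g)} := by
  refine isSeqClosed_iff_isClosed.1 fun t s ht hts => ?_
  choose c hcD hc using fun j => exists_nonneg_of_mk_mem_PosF (ht j)
  obtain ⟨N, hN⟩ := exists_nonneg_of_prod_ne_zero (g := g) (e := c) (a := (∑ i, s i • a i) * d)
    fun χ hχ h0 => by
      have hlim : Tendsto (fun j => charHom χ ((∑ i, t j i • a i) * d)) atTop
          (𝓝 (charHom χ ((∑ i, s i • a i) * d))) := by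
        simp only [map_mul, map_sum, map_smul, smul_eq_mul]
        refine (tendsto_finsetSum _ fun i _ => ?_).mul_const _
        exact ((tendsto_pi_nhds.1 hts) i).mul_const _
      exact ge_of_tendsto' hlim fun j => hc j χ hχ (h0 j)
  exact mk_mem_PosF (prod_mem fun i _ => hcD i) hN

theorem exists_forall_sum_smul_eq_mk {ι : Type*} [Fintype ι] (b : ι → Localization D) :
    ∃ (d : D) (a : ι → A), ∀ t : ι → ℝ, ∑ i, t i • b i = Localization.mk (∑ i, t i • a i) d := by
  obtain ⟨d, hd⟩ := IsLocalization.exist_integer_multiples_of_finite D b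
  choose a ha using hd
  refine ⟨d, a, fun t => ?_⟩
  rw [Localization.mk_eq_mk', IsLocalization.eq_mk'_iff_mul_eq, Finset.sum_mul, map_sum]
  refine Finset.sum_congr rfl fun i _ => ?_
  rw [smul_mul_assoc, mul_comm, ← Algebra.smul_def, ← ha i,
    ← IsScalarTower.coe_toAlgHom' ℝ A (Localization D), map_smul]

theorem isClosed_PosF_KSA [Algebra.FiniteType ℝ A] {m : ℕ} {g : Fin m → A} :
    IsClosed[finTop (Localization D)] (PosF D (KSA g)) := by
  refine isClosed_finTop_iff.2 fun U hU => ?_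
  let b := Module.finBasis ℝ U
  obtain ⟨d, a, hda⟩ := exists_forall_sum_smul_eq_mk fun i => (b i : Localization D)
  let _ := weakTop U
  convert (isClosed_setOf_mk_sum_mem_PosF (g := g) a d).preimage (continuous_weakTop_equivFun b)
    using 1
  ext u
  have hu : (u : Localization D) = ∑ i, b.equivFun u i • (b i : Localization D) := by
    conv_lhs => rw [← b.sum_equivFun u]
    simp only [Submodule.coe_sum, Submodule.coe_smul]
  simp only [Set.mem_preimage, Set.mem_ofPred_eq]
  rw [hu, hda]

end FinTop

/-! ### Finitely open sets in countable dimension -/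

section Separation

open Filter Topology
open scoped Pointwise

variable {V : Type*} [AddCommGroup V] [Module ℝ V] {O : Set V}

theorem isOpen_preimage_of_pi {ι : Type*} [Finite ι] (f : (ι → ℝ) →ₗ[ℝ] V)
    (hO : IsOpen[finTop V] O) : IsOpen (f ⁻¹' O) :=
  @IsOpen.preimage _ _ _ (weakTop _) _ (continuous_weakTop_of_pi f.rangeRestrict) _
    (hO (LinearMap.range f) inferInstance)

theorem continuous_finTop {V' : Type*} [AddCommGroup V'] [Module ℝ V'] (f : V →ₗ[ℝ] V') :
    Continuous[finTop V, finTop V'] f := by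
  let _ := finTop V
  let _ := finTop V'
  refine continuous_def.2 fun O hO U hU => ?_
  let b := Module.finBasis ℝ U
  have h := isOpen_preimage_of_pi (f ∘ₗ U.subtype ∘ₗ b.equivFun.symm.toLinearMap) hO
  let _ := weakTop U
  convert h.preimage (continuous_weakTop_equivFun b) using 1
  ext u
  simp only [Set.mem_preimage, LinearMap.comp_apply, LinearEquiv.coe_coe,
    LinearEquiv.symm_apply_apply, Submodule.subtype_apply]

theorem isOpen_setOf_add_sum_smul_mem {Z ι : Type*} [TopologicalSpace Z] {c : ι → Z → ℝ}
    (hc : ∀ i, Continuous (c i)) (s : Finset ι) (v : V) (e : ι → V) (hO : IsOpen[finTop V] O) :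
    IsOpen {z | v + ∑ i ∈ s, c i z • e i ∈ O} := by
  have hcoord : Continuous fun z (o : Option s) => o.elim 1 fun i => c i z :=
    continuous_pi fun o => by
      cases o with
      | none => exact continuous_const
      | some i => exact hc i
  convert (isOpen_preimage_of_pi (Fintype.linearCombination ℝ
    fun o : Option s => o.elim v fun i => e i) hO).preimage hcoord using 1
  ext z
  simp only [Set.mem_preimage, Set.mem_ofPred_eq, Fintype.linearCombination_apply,
    Fintype.sum_option, Option.elim, one_smul, Finset.sum_coe_sort s fun i => c i z • e i]

theorem exists_forall_of_exists_update {α : Type*} {P : ℕ → (ℕ → α) → Prop}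
    (hcongr : ∀ {N δ δ'}, (∀ i < N, δ i = δ' i) → P N δ → P N δ') (h0 : ∃ δ, P 0 δ)
    (hstep : ∀ {N δ}, P N δ → ∃ r, P (N + 1) (Function.update δ N r)) : ∃ δ, ∀ N, P N δ := by
  choose next hnext using @hstep
  let s : (N : ℕ) → {δ : ℕ → α // P N δ} := fun N =>
    Nat.rec ⟨h0.choose, h0.choose_spec⟩
      (fun N δ => ⟨Function.update δ N (next δ.2), hnext δ.2⟩) N
  have hstable {i N : ℕ} (hi : i + 1 ≤ N) : (s N).1 i = (s (i + 1)).1 i := by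
    induction N, hi using Nat.le_induction with
    | base => rfl
    | succ N hN ih => exact (Function.update_of_ne (Nat.ne_of_lt hN) _ _).trans ih
  exact ⟨fun i => (s (i + 1)).1 i, fun N => hcongr (fun i hi => hstable hi) (s N).2⟩

variable {v : V}

theorem exists_pos_forall_add_sum_smul_mem (e : ℕ → V) (hO : IsOpen[finTop V] O) {N : ℕ}
    {δ : ℕ → ℝ} (h : ∀ t : ℕ → ℝ, (∀ i, |t i| ≤ δ i) →
      v + ∑ i ∈ Finset.range N, t i • e i ∈ O) (hδ : ∀ i, 0 < δ i) :
    ∃ r > 0, ∀ t : ℕ → ℝ, (∀ i, |t i| ≤ Function.update δ N r i) →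
      v + ∑ i ∈ Finset.range (N + 1), t i • e i ∈ O := by
  let U : Set (ℕ → ℝ) := {t | v + ∑ i ∈ Finset.range (N + 1), t i • e i ∈ O}
  have hU : IsOpen U := isOpen_setOf_add_sum_smul_mem continuous_apply _ v e hO
  have hupdate : Continuous fun z : (ℕ → ℝ) × ℝ => Function.update z.1 N z.2 :=
    continuous_fst.update N continuous_snd
  have hbox : Set.Icc (-δ) δ ×ˢ {0} ⊆ (fun z => Function.update z.1 N z.2) ⁻¹' U := by
    rintro ⟨t, _⟩ ⟨ht, rfl⟩
    change v + ∑ i ∈ Finset.range (N + 1), Function.update t N 0 i • e i ∈ O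
    rw [Finset.sum_range_succ, Function.update_self, zero_smul, add_zero]
    convert h t fun i => abs_le.2 ⟨ht.1 i, ht.2 i⟩ using 2
    exact Finset.sum_congr rfl fun i hi => by
      rw [Function.update_of_ne (Finset.mem_range.1 hi).ne]
  obtain ⟨T, W, -, hW, hT, h0W, hTW⟩ := generalized_tube_lemma
    isCompact_Icc isCompact_singleton (hU.preimage hupdate) hbox
  obtain ⟨r, hr, hrW⟩ := Metric.nhds_basis_closedBall.mem_iff.1 (hW.mem_nhds (h0W rfl))
  refine ⟨r, hr, fun t ht => ?_⟩
  have htT : Function.update t N 0 ∈ Set.Icc (-δ) δ := by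
    simp only [Set.mem_Icc, Pi.le_def, ← forall_and, Pi.neg_apply, ← abs_le]
    intro i
    rcases eq_or_ne i N with rfl | hi
    · simpa using (hδ i).le
    · simpa [hi] using ht i
  have htW : t N ∈ W := hrW (by simpa using ht N)
  simpa [U] using @hTW (Function.update t N 0, t N) ⟨hT htT, htW⟩

theorem exists_forall_add_linearCombination_mem (e : ℕ → V) (hO : IsOpen[finTop V] O)
    (hv : v ∈ O) : ∃ δ : ℕ → ℝ, (∀ i, 0 < δ i) ∧
      ∀ t : ℕ →₀ ℝ, (∀ i, |t i| ≤ δ i) → v + Finsupp.linearCombination ℝ e t ∈ O := by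
  classical
  obtain ⟨δ, hδ⟩ := exists_forall_of_exists_update
    (P := fun N (δ : ℕ → {r : ℝ // 0 < r}) => ∀ t : ℕ → ℝ, (∀ i, |t i| ≤ δ i) →
      v + ∑ i ∈ Finset.range N, t i • e i ∈ O)
    (fun {N δ δ'} heq h t ht => by
      convert h (fun i => if i < N then t i else 0) (fun i => ?_) using 2
      · exact Finset.sum_congr rfl fun i hi => by rw [if_pos (Finset.mem_range.1 hi)]
      · split_ifs with hi
        · exact (ht i).trans_eq (by rw [heq i hi])
        · simpa using (δ i).2.le)
    ⟨fun _ => ⟨1, one_pos⟩, fun t _ => by simpa using hv⟩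
    (fun {N δ} h => by
      obtain ⟨r, hr, hrO⟩ := exists_pos_forall_add_sum_smul_mem e hO h fun i => (δ i).2
      refine ⟨⟨r, hr⟩, fun t ht => hrO t fun i => (ht i).trans_eq ?_⟩
      rcases eq_or_ne i N with rfl | hi <;> simp [*])
  refine ⟨fun i => δ i, fun i => (δ i).2, fun t ht => ?_⟩
  obtain ⟨N, hN⟩ := t.support.exists_nat_subset_range
  rw [Finsupp.linearCombination_apply, Finsupp.sum_of_support_subset t hN _ (by simp)]
  exact hδ N t ht

theorem absorbent_setOf_forall_abs_le {ι : Type*} {δ : ι → ℝ} (hδ : ∀ i, 0 < δ i) :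
    Absorbent ℝ {t : ι →₀ ℝ | ∀ i, |t i| ≤ δ i} := by
  intro t
  rw [absorbs_iff_norm]
  let r := ∑ i ∈ t.support, |t i| / δ i
  have hterm (i : ι) : 0 ≤ |t i| / δ i := div_nonneg (abs_nonneg _) (hδ i).le
  have hr0 : 0 ≤ r := Finset.sum_nonneg fun i _ => hterm i
  have hr (i : ι) : |t i| ≤ r * δ i := by
    by_cases hi : i ∈ t.support
    · rw [← div_le_iff₀ (hδ i)]
      exact Finset.single_le_sum (f := fun i => |t i| / δ i) (fun i _ => hterm i) hi
    · rw [Finsupp.notMem_support_iff.1 hi, abs_zero]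
      exact mul_nonneg hr0 (hδ i).le
  refine ⟨r + 1, fun q hq => Set.singleton_subset_iff.2 ?_⟩
  have hq0 : 0 < ‖q‖ := by linarith
  rw [Set.mem_smul_set_iff_inv_smul_mem₀ (norm_pos_iff.1 hq0)]
  intro i
  rw [Finsupp.smul_apply, smul_eq_mul, abs_mul, abs_inv, ← Real.norm_eq_abs q,
    inv_mul_le_iff₀ hq0]
  exact (hr i).trans (mul_le_mul_of_nonneg_right (by linarith) (hδ i).le)

theorem convex_setOf_forall_abs_le {ι : Type*} (δ : ι → ℝ) :
    Convex ℝ {t : ι →₀ ℝ | ∀ i, |t i| ≤ δ i} := by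
  rw [Set.ofPred_forall]
  refine convex_iInter fun i => ?_
  simp only [abs_le]
  exact (convex_Icc (-δ i) (δ i)).linear_preimage (Finsupp.lapply i)

theorem absorbent_image {E F : Type*} [AddCommGroup E] [Module ℝ E] [AddCommGroup F] [Module ℝ F]
    {f : E →ₗ[ℝ] F} (hf : Function.Surjective f) {s : Set E} (hs : Absorbent ℝ s) :
    Absorbent ℝ (f '' s) := fun y => by
  obtain ⟨x, rfl⟩ := hf y
  filter_upwards [hs x] with r hr
  obtain ⟨y, hy, rfl⟩ := hr rfl
  exact Set.singleton_subset_iff.2 ⟨f y, ⟨y, hy, rfl⟩, (map_smul f r y).symm⟩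

theorem exists_convex_absorbent_add_mem {e : ℕ → V} (he : Submodule.span ℝ (Set.range e) = ⊤)
    (hO : IsOpen[finTop V] O) (hv : v ∈ O) :
    ∃ B : Set V, Convex ℝ B ∧ Absorbent ℝ B ∧ ∀ b ∈ B, v + b ∈ O := by
  obtain ⟨δ, hδ, hbox⟩ := exists_forall_add_linearCombination_mem e hO hv
  refine ⟨Finsupp.linearCombination ℝ e '' {t | ∀ i, |t i| ≤ δ i},
    (convex_setOf_forall_abs_le δ).linear_image _,
    absorbent_image ?_ (absorbent_setOf_forall_abs_le hδ), ?_⟩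
  · rw [← LinearMap.range_eq_top, Finsupp.range_linearCombination, he]
  · rintro _ ⟨t, ht, rfl⟩
    exact hbox t ht

theorem exists_linearMap_eq_one_forall_le_one {s : Set V} (hs : Convex ℝ s) (habs : Absorbent ℝ s)
    (hv : v ∉ s) : ∃ L : V →ₗ[ℝ] ℝ, L v = 1 ∧ ∀ y ∈ s, L y ≤ 1 := by
  let f : V →ₗ.[ℝ] ℝ :=
    LinearPMap.mkSpanSingleton v 1 (ne_of_mem_of_not_mem habs.zero_mem hv).symm
  have hgauge : ∀ y : f.domain, f y ≤ gauge s y := by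
    rintro ⟨_, hy⟩
    obtain ⟨r, rfl⟩ := Submodule.mem_span_singleton.1 hy
    rw [LinearPMap.mkSpanSingleton'_apply, smul_eq_mul, mul_one, RingHom.id_apply]
    rcases le_or_gt r 0 with hr | hr
    · exact hr.trans (gauge_nonneg _)
    · rw [gauge_smul_of_nonneg hr.le, smul_eq_mul, le_mul_iff_one_le_right hr]
      exact one_le_gauge_of_notMem (hs.starConvex habs.zero_mem) (habs v) hv
  obtain ⟨L, hLf, hLs⟩ := exists_extension_of_le_sublinear f (gauge s)
    (fun c hc => gauge_smul_of_nonneg hc.le) (gauge_add_le hs habs) hgauge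
  refine ⟨L, ?_, fun y hy => (hLs y).trans (gauge_le_one_of_mem hy)⟩
  exact (hLf ⟨v, Submodule.mem_span_singleton_self v⟩).trans
    (LinearPMap.mkSpanSingleton'_apply_self v 1 _ _)

theorem exists_linearMap_nonneg_neg {C : PointedCone ℝ V} {B : Set V} (hB : Convex ℝ B)
    (habs : Absorbent ℝ B) (hv : ∀ b ∈ B, v + b ∉ C) :
    ∃ L : V →ₗ[ℝ] ℝ, (∀ c ∈ C, 0 ≤ L c) ∧ L v < 0 := by
  have habs' : Absorbent ℝ (B - (C : Set V)) :=
    habs.mono fun b hb => ⟨b, hb, 0, C.zero_mem, sub_zero b⟩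
  have hvs : -v ∉ B - (C : Set V) := by
    intro hmem
    obtain ⟨b, hb, c, hc, hbc⟩ := Set.mem_sub.1 hmem
    have hvb : v + b = c := by rw [← sub_eq_zero, add_sub_assoc, hbc, add_neg_cancel]
    exact hv b hb (hvb ▸ hc)
  obtain ⟨L, hLv, hLs⟩ := exists_linearMap_eq_one_forall_le_one (hB.sub C.convex) habs' hvs
  refine ⟨L, fun c hc => ?_, by rw [map_neg] at hLv; linarith⟩
  -- `-(r • c)` lies in `B - C` for all `r ≥ 0`, so that `L c < 0` would make `L` unbounded there
  by_contra! hneg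
  have hr : 0 ≤ -2 / L c := (div_pos_of_neg_of_neg (by norm_num) hneg).le
  have h := hLs _ (Set.sub_mem_sub habs.zero_mem (C.smul_mem hr hc))
  rw [zero_sub, map_neg, map_smul, smul_eq_mul, div_mul_cancel₀ _ hneg.ne] at h
  norm_num at h

theorem dualClosure_subset_closure {e : ℕ → V} (he : Submodule.span ℝ (Set.range e) = ⊤)
    (C : PointedCone ℝ V) : dualClosure (C : Set V) ⊆ @closure _ (finTop V) C := by
  let _ := finTop V
  intro v hv
  by_contra hvC
  obtain ⟨B, hB, habs, hBO⟩ := exists_convex_absorbent_add_mem he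
    (isClosed_closure (s := (C : Set V))).isOpen_compl hvC
  obtain ⟨L, hLC, hLv⟩ := exists_linearMap_nonneg_neg hB habs
    fun b hb hC => hBO b hb (subset_closure hC)
  exact hLv.not_ge (hv L hLC)

end Separation

section FinClosure

theorem exists_seq_span_eq_top {R E : Type*} [CommRing R] [CommRing E] [Algebra R E]
    [Algebra.FiniteType R E] : ∃ e : ℕ → E, Submodule.span R (Set.range e) = ⊤ := by
  obtain ⟨N, f, hf⟩ := Algebra.FiniteType.iff_quotient_mvPolynomial''.1 ‹Algebra.FiniteType R E›
  obtain ⟨u, hu⟩ := exists_surjective_nat (Fin N →₀ ℕ)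
  refine ⟨f.toLinearMap ∘ basisMonomials (Fin N) R ∘ u, ?_⟩
  rw [Set.range_comp, hu.range_comp, ← Submodule.map_span, Module.Basis.span_eq, Submodule.map_top,
    LinearMap.range_eq_top]
  exact hf

section

variable {E : Type*} [CommRing E] [Algebra ℝ E] {m : ℕ} {g : Fin m → E}

/-- A preordering of a real algebra, as a pointed cone. -/
def preorderingCone (G : Set E) : PointedCone ℝ E :=
  { preorderingClosure G with
    smul_mem' := fun r u hu => by
      have hsq : IsSquare (algebraMap ℝ E r) := by
        rw [← Real.sq_sqrt r.2, map_pow]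
        exact .sq _
      change r.1 • u ∈ preorderingClosure G
      rw [Algebra.smul_def]
      exact mul_mem (mem_preorderingClosure_of_isSquare hsq) hu }

theorem dualClosure_genPreordering_subset_closure [Algebra.FiniteType ℝ E] :
    dualClosure (genPreordering g) ⊆ @closure _ (finTop E) (genPreordering g) := by
  obtain ⟨e, he⟩ := exists_seq_span_eq_top (R := ℝ) (E := E)
  rw [genPreordering_eq_preorderingClosure]
  exact dualClosure_subset_closure he (preorderingCone (Set.range g))

theorem map_mem_closure_genPreordering {E' : Type*} [CommRing E'] [Algebra ℝ E'] (φ : E →ₐ[ℝ] E')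
    {y : E} (hy : y ∈ @closure _ (finTop E) (genPreordering g)) :
    φ y ∈ @closure _ (finTop E') (genPreordering fun j => φ (g j)) := by
  let _ := finTop E
  let _ := finTop E'
  refine map_mem_closure (continuous_finTop φ.toLinearMap) hy fun t ht => ?_
  rw [genPreordering_eq_preorderingClosure] at ht ⊢
  rw [Set.range_comp' φ g]
  exact map_mem_preorderingClosure (φ : E →+* E') ht

end

variable {A E : Type*} [CommRing A] [Algebra ℝ A] [CommRing E] [Algebra ℝ E]
  {n : ℕ} {x : Fin n → A} {m : ℕ} {g : Fin m → A} {p : A} {k : ℕ}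

/-- The element involves only finitely many elements of `E`, so it already lies in the closure
inside a finitely generated subalgebra, whose dimension is countable. -/
theorem sq_mul_map_mem_closure_genPreordering (hgen : Algebra.adjoin ℝ (Set.range x) = ⊤)
    (hp : p - 1 ∈ PosA (KSA g)) (hgrow : (k : A) * p - ∑ i, x i ^ 2 ∈ PosA (KSA g))
    {ι : A →ₐ[ℝ] E} (hι : IsUnit (ι p)) {f : A} (hf : f ∈ PosA (KSA g)) (h : E) :
    h ^ 2 * ι f ∈ @closure _ (finTop E) (genPreordering fun j => ι (g j)) := by
  obtain ⟨u, hu⟩ := hι.exists_right_inv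
  let G : Set E := Set.range (ι ∘ x) ∪ {u, h}
  let W : Subalgebra ℝ E := Algebra.adjoin ℝ G
  have : Algebra.FiniteType ℝ W := (Subalgebra.fg_iff_finiteType W).1
    (Subalgebra.fg_def.2 ⟨G, (Set.finite_range _).union (Set.toFinite _), rfl⟩)
  have huW : u ∈ W := Algebra.subset_adjoin (.inr (.inl rfl))
  have hhW : h ∈ W := Algebra.subset_adjoin (.inr (.inr rfl))
  have hιW (b : A) : ι b ∈ W := by
    have hrange : ι.range ≤ W := by
      rw [← Algebra.map_top, ← hgen, AlgHom.map_adjoin, ← Set.range_comp]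
      exact Algebra.adjoin_mono Set.subset_union_left
    exact hrange ⟨b, rfl⟩
  let ιW : A →ₐ[ℝ] W := ι.codRestrict W hιW
  have hpW : IsUnit (ιW p) := .of_mul_eq_one ⟨u, huW⟩ (Subtype.ext hu)
  have hW : (⟨h, hhW⟩ : W) ^ 2 * ιW f ∈ @closure _ (finTop W) (genPreordering fun j => ιW (g j)) :=
    dualClosure_genPreordering_subset_closure fun L hL =>
      map_sq_mul_map_nonneg hgen hp hgrow hpW hL hf _
  simpa only [map_mul, map_pow, Subalgebra.val_apply, ιW, AlgHom.coe_codRestrict]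
    using map_mem_closure_genPreordering W.val hW

theorem closure_finTop_genPreordering {D : Submonoid A}
    (hgen : Algebra.adjoin ℝ (Set.range x) = ⊤) (hpD : p ∈ D) (hp : p - 1 ∈ PosA (KSA g))
    (hgrow : (k : A) * p - ∑ i, x i ^ 2 ∈ PosA (KSA g)) :
    @closure _ (finTop (Localization D))
      (genPreordering fun i => algebraMap A (Localization D) (g i)) = PosF D (KSA g) := by
  have := finiteType_of_adjoin_range_eq_top hgen
  refine Set.Subset.antisymm (@closure_minimal _ (finTop (Localization D)) _ _
    (genPreordering_subset_PosF subset_rfl) isClosed_PosF_KSA) ?_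
  rintro _ ⟨a, d, rfl, had⟩
  rw [← mk_one_sq_mul_algebraMap]
  exact sq_mul_map_mem_closure_genPreordering hgen hp hgrow
    (ι := IsScalarTower.toAlgHom ℝ A (Localization D))
    (IsLocalization.map_units (Localization D) ⟨p, hpD⟩)
    (fun χ hχ => (had χ hχ).trans_eq (map_mul (charHom χ) a d).symm) _

end FinClosure

/-- The three main theorems for localizations of a finitely generated
`ℝ`-algebra `A`. -/
theorem fg_algebra_closure_and_moment_problem
    {A : Type*} [CommRing A] [Algebra ℝ A]
    {n : ℕ} (x : Fin n → A) (hgen : Algebra.adjoin ℝ (Set.range x) = ⊤)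
    (D : Submonoid A) (hD0 : (0 : A) ∉ D)
    {m : ℕ} (g : Fin m → A)
    (p : A) (hpD : p ∈ D) (k : ℕ) (hk : 1 ≤ k)
    (hp1 : p - 1 ∈ PosA (KSA g))
    (hpgrow : (k : A) * p - ∑ i, x i ^ 2 ∈ PosA (KSA g)) :
    dualClosure (genPreordering fun i => algebraMap A (Localization D) (g i))
        = PosF D (KSA g \ ⋃ d ∈ (D : Set A), ZA d) ∧
    @closure _ (finTop (Localization D))
        (genPreordering fun i => algebraMap A (Localization D) (g i))
        = PosF D (KSA g) ∧
    ∀ L : Localization D →ₗ[ℝ] ℝ,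
      (∀ t ∈ genPreordering fun i => algebraMap A (Localization D) (g i), 0 ≤ L t) →
      ∃ μ : @Measure (CharSet A) (borel (CharSet A)),
        μ (closure (KSA g \ ⋃ d ∈ (D : Set A), ZA d))ᶜ = 0 ∧
        (∀ d ∈ D, μ (closure (KSA g \ ⋃ d' ∈ (D : Set A), ZA d') ∩ ZA d) = 0) ∧
        ∀ (f : A) (d : D),
          Integrable (fun χ : CharSet A => (χ : A → ℝ) f / (χ : A → ℝ) (d : A)) μ ∧
          L (Localization.mk f d)
            = ∫ χ in closure (KSA g \ ⋃ d' ∈ (D : Set A), ZA d'),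
                (χ : A → ℝ) f / (χ : A → ℝ) (d : A) ∂μ :=
  ⟨Set.Subset.antisymm dualClosure_genPreordering_subset_PosF
      (PosF_subset_dualClosure_genPreordering hgen hpD hp1 hpgrow),
    closure_finTop_genPreordering hgen hpD hp1 hpgrow,
    fun _ hL => exists_measure_closure hgen hpD hp1 hpgrow hL⟩

end
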